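/- Let n and m be integers with 6 ≤ m ≤ n and let G be the grid P_n □ P_m. Then the strong convexity spectrum of G equals S_SC(G) = {k ∈ ℤ : 1 ≤ k ≤ nm−6} \ {2, 3, 5}. -/

import Mathlib

/-!  Common definitions: oriented graphs, geodesic convexity, convexity number,
strong convexity spectrum, and grid graphs. -/

variable {V : Type*}

/-- A directed walk of length `k` from `u` to `v` along the arc relation `A`,
encoded by the function `f` listing its vertices. -/
def IsDirWalk (A : V → V → Prop) (k : ℕ) (f : ℕ → V) (u v : V) : Prop :=
  f 0 = u ∧ f k = v ∧ ∀ i, i < k → A (f i) (f (i + 1))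

/-- There is a directed walk from `u` to `v`. -/
def DirReachable (A : V → V → Prop) (u v : V) : Prop :=
  ∃ k f, IsDirWalk A k f u v

/-- A digraph (given by its arc relation) is strongly connected. -/
def StrongConnected (A : V → V → Prop) : Prop :=
  ∀ u v : V, DirReachable A u v

/-- A `uv`-geodesic: a directed walk from `u` to `v` of minimum possible length
(such a walk is automatically a directed path). -/
def IsGeodesic (A : V → V → Prop) (k : ℕ) (f : ℕ → V) (u v : V) : Prop :=
  IsDirWalk A k f u v ∧ ∀ k' f', IsDirWalk A k' f' u v → k ≤ k'

/-- A nonempty vertex set `C` is convex if every vertex lying on a geodesic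
between two vertices of `C` (in either direction) belongs to `C`. -/
def DConvex (A : V → V → Prop) (C : Set V) : Prop :=
  C.Nonempty ∧ ∀ u ∈ C, ∀ v ∈ C, ∀ k f, IsGeodesic A k f u v → ∀ i ≤ k, f i ∈ C

/-- `A` is an orientation of the simple graph `G`: every arc is along an edge,
every edge gets an arc, and no edge gets both directions. -/
def IsOrientation (G : SimpleGraph V) (A : V → V → Prop) : Prop :=
  (∀ x y, A x y → G.Adj x y) ∧ (∀ x y, G.Adj x y → A x y ∨ A y x) ∧
    (∀ x y, A x y → ¬ A y x)

/-- The convexity number of a digraph: the maximum cardinality of a proper convex set. -/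
noncomputable def convexityNumber [Fintype V] (A : V → V → Prop) : ℕ :=
  sSup {k | ∃ C : Set V, DConvex A C ∧ C ≠ Set.univ ∧ C.ncard = k}

/-- The strong convexity spectrum of a graph: the set of convexity numbers of
its strongly connected orientations. -/
def strongConvexitySpectrum [Fintype V] (G : SimpleGraph V) : Set ℕ :=
  {k | ∃ A : V → V → Prop, IsOrientation G A ∧ StrongConnected A ∧ convexityNumber A = k}

/-- The grid graph `P_n □ P_m`. -/
def gridGraph (n m : ℕ) : SimpleGraph (Fin n × Fin m) :=
  (SimpleGraph.pathGraph n).boxProd (SimpleGraph.pathGraph m)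

/-!
Let `T` be the nonempty complement of a convex set `C` of a strong orientation of the grid. A walk
from `C` through `T` back to `C` is not a geodesic, so, the grid being bipartite, its ends are
joined by a walk within `C` that is shorter by at least two arcs. Hence, if a walk of `k` arcs
within `T` leads from a vertex entered from `C` to a vertex with an arc back to `C`, then the two
adjacent vertices of `C` are at grid distance at most `k`. If `T` has at most five vertices, then
it is too small to make room for this around a shortest path from an entry to an exit, so `T` has
at least six vertices.

A convex set with at least two vertices is strongly connected, so each of its vertices has an
in-neighbour and an out-neighbour in the set. Such a subset of the grid contains a square or a
longer cycle, which rules out the cardinalities 2, 3 and 5.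

Conversely, orient part of the grid so that each of its unit squares is bounded by a directed
4-cycle (a checkerboard). A convex set that contains an arc of such a square contains the square
and then the squares next to it, so it spreads over this part. In the remaining grid the region
below a staircase is entered through a single arc, which makes it convex, and every strongly
connected convex set that is not contained in it spreads over the whole grid. The cardinalities
close to `n * m` arise in the same way from the complement of a small region with a single exit.
-/

/-- The arcs of `A` with both ends in `S`. -/
def ArcsWithin (A : V → V → Prop) (S : Set V) (x y : V) : Prop :=
  x ∈ S ∧ y ∈ S ∧ A x y

section Walks

variable {α : Type*} {r s : α → α → Prop} {k l : ℕ} {a b c : α}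

/-- `WalkOfLength r k a b`: there is a walk with `k` steps from `a` to `b` along the relation `r`.
In contrast to `IsDirWalk` the sequence of vertices is not recorded. -/
inductive WalkOfLength (r : α → α → Prop) : ℕ → α → α → Prop
  | nil (a : α) : WalkOfLength r 0 a a
  | cons {k : ℕ} {a b c : α} : r a b → WalkOfLength r k b c → WalkOfLength r (k + 1) a c

namespace WalkOfLength

theorem single (h : r a b) : WalkOfLength r 1 a b := .cons h (.nil b)

theorem trans (h : WalkOfLength r k a b) (h' : WalkOfLength r l b c) :
    WalkOfLength r (k + l) a c := by
  induction h with
  | nil => rwa [Nat.zero_add]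
  | @cons k _ _ _ hab _ ih => rw [Nat.add_right_comm]; exact .cons hab (ih h')

theorem snoc (h : WalkOfLength r k a b) (h' : r b c) : WalkOfLength r (k + 1) a c :=
  h.trans (single h')

theorem mono (hrs : ∀ x y, r x y → s x y) (h : WalkOfLength r k a b) : WalkOfLength s k a b := by
  induction h with
  | nil => exact .nil _
  | cons hab _ ih => exact .cons (hrs _ _ hab) ih

theorem map {β : Type*} {t : β → β → Prop} (f : α → β) (hf : ∀ x y, r x y → t (f x) (f y))
    (h : WalkOfLength r k a b) : WalkOfLength t k (f a) (f b) := by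
  induction h with
  | nil => exact .nil _
  | cons hab _ ih => exact .cons (hf _ _ hab) ih

theorem flip (h : WalkOfLength r k a b) : WalkOfLength (fun x y => r y x) k b a := by
  induction h with
  | nil => exact .nil _
  | cons hab _ ih => exact ih.snoc hab

theorem eq_of_zero (h : WalkOfLength r 0 a b) : a = b := by
  cases h; rfl

/-- A walk that starts in `S` and ends outside leaves `S` through some first arc. -/
theorem exists_first_exit {S : Set α} (h : WalkOfLength r k a b) (ha : a ∈ S) (hb : b ∉ S) :
    ∃ i x y, i < k ∧ WalkOfLength (ArcsWithin r S) i a x ∧ x ∈ S ∧ y ∉ S ∧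
      r x y ∧ WalkOfLength r (k - i - 1) y b := by
  induction h with
  | nil => exact absurd ha hb
  | @cons k a c b hac hcb ih =>
    by_cases hc : c ∈ S
    · obtain ⟨i, x, y, hi, hx, hxS, hyS, hxy, hy⟩ := ih hc hb
      refine ⟨i + 1, x, y, by omega, .cons ⟨ha, hc, hac⟩ hx, hxS, hyS, hxy, ?_⟩
      rwa [Nat.add_sub_add_right]
    · exact ⟨0, a, c, by omega, .nil a, ha, hc, hac, by simpa using hcb⟩

end WalkOfLength

theorem walkOfLength_iff_exists_isDirWalk : WalkOfLength r k a b ↔ ∃ f, IsDirWalk r k f a b := by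
  constructor
  · intro h
    induction h with
    | nil a => exact ⟨fun _ => a, rfl, rfl, fun i hi => absurd hi i.not_lt_zero⟩
    | @cons k a b c hab _ ih =>
      obtain ⟨f, hf0, hfk, hf⟩ := ih
      refine ⟨fun i => i.casesOn a f, rfl, hfk, fun i hi => ?_⟩
      cases i with
      | zero => simpa [hf0] using hab
      | succ i => exact hf i (by omega)
  · rintro ⟨f, rfl, rfl, hf⟩
    induction k with
    | zero => exact .nil _
    | succ k ih => exact (ih fun i hi => hf i (by omega)).snoc (hf k k.lt_succ_self)

theorem dirReachable_iff_exists_walkOfLength : DirReachable r a b ↔ ∃ k, WalkOfLength r k a b := by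
  simp only [DirReachable, walkOfLength_iff_exists_isDirWalk]

theorem IsDirWalk.walkOfLength {f : ℕ → α} (h : IsDirWalk r k f a b) : WalkOfLength r k a b :=
  walkOfLength_iff_exists_isDirWalk.2 ⟨f, h⟩

theorem IsDirWalk.segment {f : ℕ → α} (h : IsDirWalk r k f a b) {i j : ℕ} (hij : i ≤ j)
    (hj : j ≤ k) : WalkOfLength r (j - i) (f i) (f j) :=
  walkOfLength_iff_exists_isDirWalk.2 ⟨fun t => f (i + t), rfl, by simp [Nat.add_sub_cancel' hij],
    fun t ht => h.2.2 (i + t) (by omega)⟩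

theorem StrongConnected.flip (h : StrongConnected r) : StrongConnected fun x y => r y x := by
  intro a b
  obtain ⟨k, hk⟩ := dirReachable_iff_exists_walkOfLength.1 (h b a)
  exact dirReachable_iff_exists_walkOfLength.2 ⟨k, hk.flip⟩

theorem DirReachable.refl (a : α) : DirReachable r a a :=
  dirReachable_iff_exists_walkOfLength.2 ⟨0, .nil a⟩

theorem DirReachable.trans (h : DirReachable r a b) (h' : DirReachable r b c) :
    DirReachable r a c := by
  obtain ⟨k, hk⟩ := dirReachable_iff_exists_walkOfLength.1 h
  obtain ⟨l, hl⟩ := dirReachable_iff_exists_walkOfLength.1 h'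
  exact dirReachable_iff_exists_walkOfLength.2 ⟨k + l, hk.trans hl⟩

theorem DirReachable.exists_shortest (h : DirReachable r a b) :
    ∃ k, WalkOfLength r k a b ∧ ∀ l, WalkOfLength r l a b → k ≤ l := by
  classical
  have hex := dirReachable_iff_exists_walkOfLength.1 h
  exact ⟨Nat.find hex, Nat.find_spec hex, fun l hl => Nat.find_min' hex hl⟩

end Walks

theorem WalkOfLength.flip_within {A : V → V → Prop} {S : Set V} {k : ℕ} {u v : V}
    (h : WalkOfLength (ArcsWithin A S) k u v) :
    WalkOfLength (ArcsWithin (fun x y => A y x) S) k v u :=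
  h.flip.mono fun _ _ h => ⟨h.2.1, h.1, h.2.2⟩

section Convexity

variable {A : V → V → Prop} {C : Set V} {u v x : V} {k l : ℕ}

theorem isDirWalk_flip {f : ℕ → V} (h : IsDirWalk A k f u v) :
    IsDirWalk (fun x y => A y x) k (fun i => f (k - i)) v u := by
  refine ⟨by simpa using h.2.1, by simpa using h.1, fun i hi => ?_⟩
  have := h.2.2 (k - (i + 1)) (by omega)
  rwa [show k - (i + 1) + 1 = k - i by omega] at this

theorem DConvex.flip (hC : DConvex A C) : DConvex (fun x y => A y x) C := by
  refine ⟨hC.1, fun u hu v hv k f hf i hi => ?_⟩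
  have := hC.2 v hv u hu k _
    ⟨isDirWalk_flip hf.1, fun l g hg => hf.2 l _ (isDirWalk_flip hg)⟩ (k - i) (by omega)
  simpa [Nat.sub_sub_self hi] using this

theorem dConvex_singleton (v : V) : DConvex A {v} := by
  refine ⟨⟨v, rfl⟩, ?_⟩
  rintro u rfl w rfl k f hf i hi
  have hk : k ≤ 0 := hf.2 0 (fun _ => w) ⟨rfl, rfl, fun i hi => absurd hi i.not_lt_zero⟩
  obtain rfl : i = 0 := by omega
  exact hf.1.1

theorem DConvex.mem_of_shortest (hC : DConvex A C) (hu : u ∈ C) (hv : v ∈ C)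
    (hux : WalkOfLength A k u x) (hxv : WalkOfLength A l x v)
    (hmin : ∀ j, WalkOfLength A j u v → k + l ≤ j) : x ∈ C := by
  obtain ⟨f, hf⟩ := walkOfLength_iff_exists_isDirWalk.1 hux
  obtain ⟨g, hg⟩ := walkOfLength_iff_exists_isDirWalk.1 hxv
  let p : ℕ → V := fun i => if i ≤ k then f i else g (i - k)
  have hp : IsDirWalk A (k + l) p u v := by
    refine ⟨by simpa [p] using hf.1, ?_, fun i hi => ?_⟩
    · rcases Nat.eq_zero_or_pos l with rfl | hl
      · simpa [p, hf.2.1, hg.1] using hg.2.1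
      · simpa [p, show ¬ k + l ≤ k by omega] using hg.2.1
    · rcases lt_trichotomy i k with hik | rfl | hik
      · simpa [p, hik.le, Nat.succ_le_of_lt hik] using hf.2.2 i hik
      · simpa [p, hf.2.1, ← hg.1] using hg.2.2 0 (by omega)
      · simpa [p, show ¬ i ≤ k by omega, show ¬ i + 1 ≤ k by omega,
          show i + 1 - k = i - k + 1 by omega] using hg.2.2 (i - k) (by omega)
  have := hC.2 u hu v hv (k + l) p
    ⟨hp, fun j q hq => hmin j hq.walkOfLength⟩ k (Nat.le_add_right k l)
  simpa [p, hf.2.1] using this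

theorem DConvex.shortest_within (hC : DConvex A C) (hu : u ∈ C) (hv : v ∈ C)
    (h : WalkOfLength A k u v) (hmin : ∀ j, WalkOfLength A j u v → k ≤ j) :
    WalkOfLength (ArcsWithin A C) k u v := by
  induction k generalizing u with
  | zero => obtain rfl := h.eq_of_zero; exact .nil u
  | succ k ih =>
    cases h with
    | @cons _ _ w _ huw hwv =>
      have hw : w ∈ C := hC.mem_of_shortest hu hv (.single huw) hwv
        (fun j hj => by have := hmin j hj; omega)
      exact .cons ⟨hu, hw, huw⟩ (ih hw hwv fun j hj => by have := hmin _ (.cons huw hj); omega)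

/-- A walk between two vertices of a convex set which passes through a vertex outside is not a
geodesic, so it is longer than some walk within the set. -/
theorem DConvex.exists_shorter_within (hC : DConvex A C) (hS : StrongConnected A) (hu : u ∈ C)
    (hv : v ∈ C) (hx : x ∉ C) (hux : WalkOfLength A k u x) (hxv : WalkOfLength A l x v) :
    ∃ j < k + l, WalkOfLength (ArcsWithin A C) j u v := by
  obtain ⟨j, hj, hmin⟩ := (hS u v).exists_shortest
  refine ⟨j, ?_, hC.shortest_within hu hv hj hmin⟩
  by_contra! hlt
  exact hx (hC.mem_of_shortest hu hv hux hxv fun i hi => hlt.trans (hmin i hi))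

theorem dConvex_of_mem_of_shortest (hC : C.Nonempty)
    (h : ∀ u ∈ C, ∀ v ∈ C, ∀ k l x, WalkOfLength A k u x → WalkOfLength A l x v →
      (∀ j, WalkOfLength A j u v → k + l ≤ j) → x ∈ C) : DConvex A C := by
  refine ⟨hC, fun u hu v hv k f hf i hi => h u hu v hv i (k - i) _ ?_ ?_ fun j hj => ?_⟩
  · simpa [hf.1.1] using hf.1.segment i.zero_le hi
  · simpa [hf.1.2.1] using hf.1.segment hi le_rfl
  · obtain ⟨g, hg⟩ := walkOfLength_iff_exists_isDirWalk.1 hj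
    rw [Nat.add_sub_cancel' hi]
    exact hf.2 j g hg

/-- A geodesic that leaves `S` has to come back through the arc from `t` to `z`, but walking inside
`S` to `z` is shorter. -/
theorem dConvex_of_unique_entry {t z : V} (hC : C.Nonempty)
    (hentry : ∀ x y, A x y → x ∉ C → y ∈ C → x = t ∧ y = z)
    (hdetour : ∀ x y, A x y → x ∈ C → y ∉ C →
      ∃ d, WalkOfLength A d x z ∧ ∀ l, WalkOfLength A l y t → d < l + 2) : DConvex A C := by
  refine dConvex_of_mem_of_shortest hC fun u hu v hv k l w huw hwv hmin => ?_
  by_contra hw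
  obtain ⟨i, x, y, hi, hux, hx, hy, hxy, hyw⟩ := huw.exists_first_exit hu hw
  obtain ⟨j, p, q, hj, hyp, hp, hq, hpq, hqv⟩ :=
    (hyw.trans hwv).exists_first_exit (S := Cᶜ) hy (not_not.2 hv)
  obtain ⟨rfl, rfl⟩ := hentry p q hpq hp (not_not.1 hq)
  obtain ⟨d, hd, hlt⟩ := hdetour x y hxy hx hy
  have hj' := hlt j (hyp.mono fun _ _ h => h.2.2)
  have := hmin _ (((hux.mono fun _ _ h => h.2.2).trans hd).trans hqv)
  omega

end Convexity

/-- A set with at least two vertices which is convex and whose vertices reach each other.  In a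
strongly connected digraph these are the convex sets that are not singletons; in an arbitrary one
the terminal strong components are of this kind as well, so that the same analysis of these sets
yields strong connectivity and the convexity number. -/
structure IsStrongConvex (A : V → V → Prop) (C : Set V) : Prop where
  dConvex : DConvex A C
  nontrivial : C.Nontrivial
  reachable : ∀ u ∈ C, ∀ v ∈ C, DirReachable A u v

section IsStrongConvex

variable {A : V → V → Prop} {C X : Set V} {u v : V} {k : ℕ}

theorem DConvex.isStrongConvex (hC : DConvex A C) (hS : StrongConnected A) (h2 : C.Nontrivial) :
    IsStrongConvex A C :=
  ⟨hC, h2, fun u _ v _ => hS u v⟩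

namespace IsStrongConvex

theorem flip (hC : IsStrongConvex A C) : IsStrongConvex (fun x y => A y x) C := by
  refine ⟨hC.dConvex.flip, hC.nontrivial, fun u hu v hv => ?_⟩
  obtain ⟨k, hk⟩ := dirReachable_iff_exists_walkOfLength.1 (hC.reachable v hv u hu)
  exact dirReachable_iff_exists_walkOfLength.2 ⟨k, hk.flip⟩

theorem exists_arc_leaving (hC : IsStrongConvex A C) (hu : u ∈ C) (huX : u ∈ X) (hv : v ∈ C)
    (hvX : v ∉ X) : ∃ x ∈ C, x ∈ X ∧ ∃ y ∈ C, y ∉ X ∧ A x y := by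
  obtain ⟨k, hk, hmin⟩ := (hC.reachable u hu v hv).exists_shortest
  obtain ⟨i, x, y, -, -, hx, hy, hxy, -⟩ :=
    (hC.dConvex.shortest_within hu hv hk hmin).exists_first_exit huX hvX
  exact ⟨x, hxy.1, hx, y, hxy.2.1, hy, hxy.2.2⟩

theorem exists_out (hC : IsStrongConvex A C) (hu : u ∈ C) : ∃ y ∈ C, A u y := by
  obtain ⟨v, hv, hvu⟩ := hC.nontrivial.exists_ne u
  obtain ⟨x, -, rfl, y, hy, -, hxy⟩ := hC.exists_arc_leaving (X := {u}) hu rfl hv hvu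
  exact ⟨y, hy, hxy⟩

theorem exists_in (hC : IsStrongConvex A C) (hu : u ∈ C) : ∃ y ∈ C, A y u :=
  hC.flip.exists_out hu

end IsStrongConvex

theorem mem_of_walkOfLength_of_forall_arc (hC : ∀ x ∈ C, ∀ y, A x y → y ∈ C) (hu : u ∈ C)
    (h : WalkOfLength A k u v) : v ∈ C := by
  by_contra hv
  obtain ⟨-, x, y, -, -, hx, hy, hxy, -⟩ := h.exists_first_exit hu hv
  exact hy (hC x hx y hxy)

theorem strongConnected_of_forall_isStrongConvex [Finite V] [Nonempty V]
    (hout : ∀ x, ∃ y, y ≠ x ∧ A x y)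
    (hterm : ∀ C, IsStrongConvex A C → (∀ x ∈ C, ∀ y, A x y → y ∈ C) → C = Set.univ) :
    StrongConnected A := by
  obtain ⟨u, -, hu⟩ := Set.exists_min_image Set.univ (fun u => {v | DirReachable A u v}.ncard)
    Set.finite_univ Set.univ_nonempty
  have hclosed : ∀ x ∈ {v | DirReachable A u v}, ∀ y, A x y → y ∈ {v | DirReachable A u v} :=
    fun x hx y hxy => DirReachable.trans hx
      (dirReachable_iff_exists_walkOfLength.2 ⟨1, .single hxy⟩)
  have hback : ∀ v, DirReachable A u v → DirReachable A v u := fun v hv => by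
    have heq := Set.eq_of_subset_of_ncard_le (s := {x | DirReachable A v x})
      (t := {x | DirReachable A u x}) (fun x hx => hv.trans hx) (hu v trivial)
    exact heq.symm.subset (DirReachable.refl u)
  have huniv := hterm {v | DirReachable A u v} ⟨?_, ?_, fun x hx y hy => (hback x hx).trans hy⟩
    hclosed
  · exact fun x y => (hback x (huniv.symm.subset trivial)).trans (huniv.symm.subset trivial)
  · exact dConvex_of_mem_of_shortest ⟨u, .refl u⟩ fun x hx _ _ k _ y hxy _ _ =>
      mem_of_walkOfLength_of_forall_arc hclosed hx hxy
  · obtain ⟨y, hyu, huy⟩ := hout u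
    exact ⟨u, .refl u, y, hclosed u (.refl u) y huy, hyu.symm⟩

end IsStrongConvex

section Comap

variable {α : Type*} {r : α → α → Prop} {ρ : V → α} {k : ℕ}

theorem exists_walkOfLength_comap (hr : ∀ x y, r x y → y ∈ Set.range ρ) {x y : α}
    (h : WalkOfLength r k x y) {u : V} (hu : ρ u = x) :
    ∃ v, ρ v = y ∧ WalkOfLength (fun u v => r (ρ u) (ρ v)) k u v := by
  induction h generalizing u with
  | nil => exact ⟨u, hu, .nil u⟩
  | cons hab _ ih =>
    obtain ⟨w, rfl⟩ := hr _ _ hab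
    obtain ⟨v, hv, h⟩ := ih rfl
    exact ⟨v, hv, .cons (by rwa [hu]) h⟩

theorem walkOfLength_comap_iff (hρ : Function.Injective ρ)
    (hr : ∀ x y, r x y → y ∈ Set.range ρ) {u v : V} :
    WalkOfLength (fun u v => r (ρ u) (ρ v)) k u v ↔ WalkOfLength r k (ρ u) (ρ v) := by
  refine ⟨fun h => h.map ρ fun _ _ h => h, fun h => ?_⟩
  obtain ⟨w, hw, h⟩ := exists_walkOfLength_comap hr h rfl
  rwa [hρ hw] at h

theorem DConvex.preimage (hρ : Function.Injective ρ) (hr : ∀ x y, r x y → y ∈ Set.range ρ)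
    {S : Set α} (hS : DConvex r S) (hsub : S ⊆ Set.range ρ) :
    DConvex (fun u v => r (ρ u) (ρ v)) (ρ ⁻¹' S) := by
  refine dConvex_of_mem_of_shortest (hS.1.preimage' hsub) fun u hu v hv k l x hux hxv hmin => ?_
  rw [walkOfLength_comap_iff hρ hr] at hux hxv
  exact hS.mem_of_shortest hu hv hux hxv fun j hj =>
    hmin j ((walkOfLength_comap_iff hρ hr).2 hj)

theorem IsStrongConvex.image (hρ : Function.Injective ρ) (hr : ∀ x y, r x y → y ∈ Set.range ρ)
    {C : Set V} (hC : IsStrongConvex (fun u v => r (ρ u) (ρ v)) C) : IsStrongConvex r (ρ '' C) := by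
  refine ⟨?_, hC.nontrivial.image hρ, ?_⟩
  · refine dConvex_of_mem_of_shortest (hC.dConvex.1.image ρ) ?_
    rintro _ ⟨u, hu, rfl⟩ _ ⟨v, hv, rfl⟩ k l x hux hxv hmin
    obtain ⟨w, rfl, huw⟩ := exists_walkOfLength_comap hr hux rfl
    rw [← walkOfLength_comap_iff hρ hr] at hxv
    exact ⟨w, hC.dConvex.mem_of_shortest hu hv huw hxv fun j hj =>
      hmin j ((walkOfLength_comap_iff hρ hr).1 hj), rfl⟩
  · rintro _ ⟨u, hu, rfl⟩ _ ⟨v, hv, rfl⟩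
    obtain ⟨k, hk⟩ := dirReachable_iff_exists_walkOfLength.1 (hC.reachable u hu v hv)
    exact dirReachable_iff_exists_walkOfLength.2 ⟨k, (walkOfLength_comap_iff hρ hr).1 hk⟩

end Comap

/-- The graph distance in the infinite grid `ℤ × ℤ`. -/
def gridDist (p q : ℤ × ℤ) : ℕ :=
  (p.1 - q.1).natAbs + (p.2 - q.2).natAbs

theorem gridDist_comm (p q : ℤ × ℤ) : gridDist p q = gridDist q p := by
  unfold gridDist; omega

/-- A product of two intervals of at least six integers each. -/
def IsLargeBox (G : Set (ℤ × ℤ)) : Prop :=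
  ∃ l r b t : ℤ, l + 5 ≤ r ∧ b + 5 ≤ t ∧ ∀ i j, (i, j) ∈ G ↔ l ≤ i ∧ i ≤ r ∧ b ≤ j ∧ j ≤ t

/-- A symmetry of the infinite grid; it preserves distances and maps boxes to boxes. -/
structure IsGridSymmetry (φ : ℤ × ℤ ≃ ℤ × ℤ) : Prop where
  gridDist_eq : ∀ p q, gridDist (φ p) (φ q) = gridDist p q
  preimage_box : ∀ {G}, IsLargeBox G → IsLargeBox (φ ⁻¹' G)

/-- The map `i ↦ c + s * i`. -/
def signedShift (s : ℤˣ) (c : ℤ) : ℤ ≃ ℤ :=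
  (Units.mulLeft s).trans (Equiv.addLeft c)

@[simp]
theorem signedShift_apply (s : ℤˣ) (c i : ℤ) : signedShift s c i = c + s * i := rfl

theorem isGridSymmetry_prodComm : IsGridSymmetry (Equiv.prodComm ℤ ℤ) where
  gridDist_eq p q := Nat.add_comm _ _
  preimage_box := by
    rintro G ⟨l, r, b, t, hlr, hbt, hG⟩
    refine ⟨b, t, l, r, hbt, hlr, fun i j => ?_⟩
    have : (i, j) ∈ Equiv.prodComm ℤ ℤ ⁻¹' G ↔ (j, i) ∈ G := Iff.rfl
    rw [this, hG]
    tauto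

theorem isGridSymmetry_signedShift (s t : ℤˣ) (c d : ℤ) :
    IsGridSymmetry ((signedShift s c).prodCongr (signedShift t d)) where
  gridDist_eq p q := by
    rcases Int.units_eq_one_or s with rfl | rfl <;> rcases Int.units_eq_one_or t with rfl | rfl <;>
      simp [gridDist] <;> omega
  preimage_box := by
    rintro G ⟨l, r, b, u, hlr, hbu, hG⟩
    have hmem : ∀ i j, (i, j) ∈ (signedShift s c).prodCongr (signedShift t d) ⁻¹' G ↔
        (c + s * i, d + t * j) ∈ G := fun i j => Iff.rfl
    simp only [IsLargeBox, hmem, hG]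
    rcases Int.units_eq_one_or s with rfl | rfl <;> rcases Int.units_eq_one_or t with rfl | rfl
    · exact ⟨l - c, r - c, b - d, u - d, by omega, by omega, fun i j => by simp; omega⟩
    · exact ⟨l - c, r - c, d - u, d - b, by omega, by omega, fun i j => by simp; omega⟩
    · exact ⟨c - r, c - l, b - d, u - d, by omega, by omega, fun i j => by simp; omega⟩
    · exact ⟨c - r, c - l, d - u, d - b, by omega, by omega, fun i j => by simp; omega⟩

theorem IsGridSymmetry.trans {φ ψ : ℤ × ℤ ≃ ℤ × ℤ} (hφ : IsGridSymmetry φ)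
    (hψ : IsGridSymmetry ψ) : IsGridSymmetry (φ.trans ψ) where
  gridDist_eq p q := (hψ.gridDist_eq _ _).trans (hφ.gridDist_eq p q)
  preimage_box hG := hφ.preimage_box (hψ.preimage_box hG)

theorem exists_isGridSymmetry_of_gridDist_eq_one {p q : ℤ × ℤ} (h : gridDist p q = 1) :
    ∃ φ, IsGridSymmetry φ ∧ φ (0, 0) = p ∧ φ (1, 0) = q := by
  obtain ⟨a, b⟩ := p
  obtain ⟨c, d⟩ := q
  have hcases : (c = a + 1 ∧ d = b) ∨ (c = a - 1 ∧ d = b) ∨ (c = a ∧ d = b + 1) ∨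
      (c = a ∧ d = b - 1) := by simp only [gridDist] at h; omega
  rcases hcases with ⟨rfl, rfl⟩ | ⟨rfl, rfl⟩ | ⟨rfl, rfl⟩ | ⟨rfl, rfl⟩
  · exact ⟨_, isGridSymmetry_signedShift 1 1 a d, by simp, by simp⟩
  · exact ⟨_, isGridSymmetry_signedShift (-1) 1 a d, by simp, by simp [sub_eq_add_neg]⟩
  · exact ⟨_, isGridSymmetry_prodComm.trans (isGridSymmetry_signedShift 1 1 c b), by simp, by simp⟩
  · exact ⟨_, isGridSymmetry_prodComm.trans (isGridSymmetry_signedShift 1 (-1) c b), by simp,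
      by simp [sub_eq_add_neg]⟩

/-- What has to be known about a convex set of a strong orientation of a grid and its nonempty
complement in order to rule out that the complement has at most five vertices: `box` is the vertex
set of the grid and `holes` the complement of the convex set. By convexity a walk through the
complement is not a geodesic; the grid being bipartite, the shorter walk within the convex set
saves at least two arcs. -/
structure Pocket where
  box : Set (ℤ × ℤ)
  holes : Finset (ℤ × ℤ)
  arc : ℤ × ℤ → ℤ × ℤ → Prop
  isLargeBox : IsLargeBox box
  holes_nonempty : holes.Nonempty
  holes_subset : ∀ p ∈ holes, p ∈ box
  card_holes_le : holes.card ≤ 5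
  arc_total : ∀ p ∈ box, ∀ q ∈ box, gridDist p q = 1 → arc p q ∨ arc q p
  arc_asymm : ∀ p q, arc p q → ¬ arc q p
  gridDist_of_arc : ∀ p q, arc p q → gridDist p q = 1
  exists_enter : ∀ p ∈ holes, ∃ k u e, u ∈ box \ holes ∧ arc u e ∧ e ∈ holes ∧
    WalkOfLength (ArcsWithin arc holes) k e p
  exists_leave : ∀ p ∈ holes, ∃ k x v, v ∈ box \ holes ∧ arc x v ∧ x ∈ holes ∧
    WalkOfLength (ArcsWithin arc holes) k p x
  exists_shortcut : ∀ k u e x v, u ∈ box \ holes → arc u e → e ∈ holes →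
    WalkOfLength (ArcsWithin arc holes) k e x → x ∈ holes → arc x v → v ∈ box \ holes →
    ∃ j ≤ k, WalkOfLength (ArcsWithin arc (box \ holes)) j u v

namespace Pocket

variable (P : Pocket)

/-- The convex set whose complement is the pocket. -/
def outside : Set (ℤ × ℤ) := P.box \ P.holes

/-- The arcs between vertices of the pocket. -/
def inner : ℤ × ℤ → ℤ × ℤ → Prop := ArcsWithin P.arc P.holes

/-- A vertex of the pocket with an arc coming from outside. -/
def Entry (e : ℤ × ℤ) : Prop := e ∈ P.holes ∧ ∃ u ∈ P.outside, P.arc u e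

/-- A vertex of the pocket with an arc leading outside. -/
def Exit (x : ℤ × ℤ) : Prop := x ∈ P.holes ∧ ∃ v ∈ P.outside, P.arc x v

/-- The pocket with all arcs reversed; entries and exits change roles. -/
def reverse : Pocket where
  box := P.box
  holes := P.holes
  arc := fun p q => P.arc q p
  isLargeBox := P.isLargeBox
  holes_nonempty := P.holes_nonempty
  holes_subset := P.holes_subset
  card_holes_le := P.card_holes_le
  arc_total p hp q hq h := (P.arc_total p hp q hq h).symm
  arc_asymm p q h := P.arc_asymm q p h
  gridDist_of_arc p q h := (gridDist_comm p q).trans (P.gridDist_of_arc q p h)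
  exists_enter p hp := by
    obtain ⟨k, x, v, hv, hxv, hx, h⟩ := P.exists_leave p hp
    exact ⟨k, v, x, hv, hxv, hx, h.flip_within⟩
  exists_leave p hp := by
    obtain ⟨k, u, e, hu, hue, he, h⟩ := P.exists_enter p hp
    exact ⟨k, e, u, hu, hue, he, h.flip_within⟩
  exists_shortcut k u e x v hu hue he h hx hxv hv := by
    obtain ⟨j, hj, hw⟩ := P.exists_shortcut k v x e u hv hxv hx h.flip_within he hue hu
    exact ⟨j, hj, hw.flip_within⟩

theorem map_walkOfLength_within {A : ℤ × ℤ → ℤ × ℤ → Prop} {S S' : Set (ℤ × ℤ)} (φ : ℤ × ℤ ≃ ℤ × ℤ)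
    (hS : ∀ p, φ p ∈ S ↔ p ∈ S') {k : ℕ} {p q : ℤ × ℤ} :
    WalkOfLength (ArcsWithin (fun p q => A (φ p) (φ q)) S') k p q ↔
      WalkOfLength (ArcsWithin A S) k (φ p) (φ q) := by
  constructor
  · exact fun h => h.map φ fun x y h => ⟨(hS x).2 h.1, (hS y).2 h.2.1, h.2.2⟩
  · intro h
    have := h.map (t := ArcsWithin (fun p q => A (φ p) (φ q)) S') φ.symm fun x y h =>
      ⟨(hS _).1 (by simpa using h.1), (hS _).1 (by simpa using h.2.1), by simpa using h.2.2⟩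
    simpa using this

/-- The pocket seen in the coordinates given by a symmetry of the grid. -/
def comap {φ : ℤ × ℤ ≃ ℤ × ℤ} (hφ : IsGridSymmetry φ) : Pocket where
  box := φ ⁻¹' P.box
  holes := P.holes.map φ.symm.toEmbedding
  arc := fun p q => P.arc (φ p) (φ q)
  isLargeBox := hφ.preimage_box P.isLargeBox
  holes_nonempty := by simpa using P.holes_nonempty
  holes_subset p hp := P.holes_subset _ (by simpa using hp)
  card_holes_le := by simpa using P.card_holes_le
  arc_total p hp q hq h := P.arc_total _ hp _ hq (by rwa [hφ.gridDist_eq])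
  arc_asymm p q h := P.arc_asymm _ _ h
  gridDist_of_arc p q h := (hφ.gridDist_eq p q).symm.trans (P.gridDist_of_arc _ _ h)
  exists_enter p hp := by
    obtain ⟨k, u, e, hu, hue, he, h⟩ := P.exists_enter (φ p) (by simpa using hp)
    refine ⟨k, φ.symm u, φ.symm e, by simpa using hu, by simpa using hue, by simpa using he, ?_⟩
    rw [map_walkOfLength_within φ (S := P.holes) (by simp)]
    simpa using h
  exists_leave p hp := by
    obtain ⟨k, x, v, hv, hxv, hx, h⟩ := P.exists_leave (φ p) (by simpa using hp)
    refine ⟨k, φ.symm x, φ.symm v, by simpa using hv, by simpa using hxv, by simpa using hx, ?_⟩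
    rw [map_walkOfLength_within φ (S := P.holes) (by simp)]
    simpa using h
  exists_shortcut k u e x v hu hue he h hx hxv hv := by
    rw [map_walkOfLength_within φ (S := P.holes) (by simp)] at h
    obtain ⟨j, hj, hw⟩ := P.exists_shortcut k _ _ _ _ (by simpa using hu) hue (by simpa using he) h
      (by simpa using hx) hxv (by simpa using hv)
    exact ⟨j, hj, (map_walkOfLength_within φ (by simp)).2 hw⟩

variable {P} {φ : ℤ × ℤ ≃ ℤ × ℤ} {p : ℤ × ℤ}

@[simp]
theorem mem_holes_comap (hφ : IsGridSymmetry φ) : p ∈ (P.comap hφ).holes ↔ φ p ∈ P.holes := by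
  simp [comap]

@[simp]
theorem mem_outside_comap (hφ : IsGridSymmetry φ) : p ∈ (P.comap hφ).outside ↔ φ p ∈ P.outside := by
  simp [outside, comap]

@[simp]
theorem entry_comap (hφ : IsGridSymmetry φ) : (P.comap hφ).Entry p ↔ P.Entry (φ p) := by
  refine and_congr (mem_holes_comap hφ)
    ⟨fun ⟨u, hu, h⟩ => ⟨φ u, (mem_outside_comap hφ).1 hu, h⟩, fun ⟨u, hu, h⟩ =>
      ⟨φ.symm u, by simpa using hu, by simpa [comap] using h⟩⟩

@[simp]
theorem exit_comap (hφ : IsGridSymmetry φ) : (P.comap hφ).Exit p ↔ P.Exit (φ p) :=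
  entry_comap (P := P.reverse) hφ

end Pocket

namespace Pocket

variable {P : Pocket} {k : ℕ} {e x u v p q : ℤ × ℤ} {i j : ℤ}

theorem gridDist_le_of_walk {S : Set (ℤ × ℤ)} (h : WalkOfLength (ArcsWithin P.arc S) k u v) :
    gridDist u v ≤ k := by
  induction h with
  | nil => simp [gridDist]
  | cons hab _ ih =>
    have := P.gridDist_of_arc _ _ hab.2.2
    simp only [gridDist] at *
    omega

theorem exists_shortcut' (he : P.Entry e) (hx : P.Exit x) (h : WalkOfLength P.inner k e x)
    (hu : u ∈ P.outside) (hue : P.arc u e) (hv : v ∈ P.outside) (hxv : P.arc x v) :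
    ∃ j ≤ k, WalkOfLength (ArcsWithin P.arc P.outside) j u v :=
  P.exists_shortcut k u e x v hu hue he.1 h hx.1 hxv hv

theorem mem_holes_of_mem_box (hp : p ∈ P.box) (h : p ∉ P.outside) : p ∈ P.holes :=
  by_contra fun hp' => h ⟨hp, hp'⟩

theorem Entry.not_exit (he : P.Entry e) : ¬ P.Exit e := by
  intro hx
  obtain ⟨u, hu, hue⟩ := he.2
  obtain ⟨v, hv, hev⟩ := hx.2
  obtain ⟨j, hj, hw⟩ := exists_shortcut' he hx (.nil e) hu hue hv hev
  obtain rfl : j = 0 := by omega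
  obtain rfl := hw.eq_of_zero
  exact P.arc_asymm _ _ hue hev

theorem Entry.arc (he : P.Entry e) (hu : u ∈ P.outside) (h : gridDist u e = 1) : P.arc u e :=
  (P.arc_total u hu.1 e (P.holes_subset e he.1) h).resolve_right
    fun h => he.not_exit ⟨he.1, u, hu, h⟩

theorem Exit.arc (hx : P.Exit x) (hv : v ∈ P.outside) (h : gridDist x v = 1) : P.arc x v :=
  Entry.arc (P := P.reverse) hx hv ((gridDist_comm v x).trans h)

theorem entry_or_exit (hp : p ∈ P.holes) (hu : u ∈ P.outside) (h : gridDist u p = 1) :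
    P.Entry p ∨ P.Exit p :=
  (P.arc_total u hu.1 p (P.holes_subset p hp) h).imp (fun h => ⟨hp, u, hu, h⟩)
    fun h => ⟨hp, u, hu, h⟩

theorem gridDist_le (he : P.Entry e) (hx : P.Exit x) (h : WalkOfLength P.inner k e x)
    (hu : u ∈ P.outside) (hue : gridDist u e = 1) (hv : v ∈ P.outside) (hxv : gridDist x v = 1) :
    gridDist u v ≤ k := by
  obtain ⟨j, hj, hw⟩ := exists_shortcut' he hx h hu (he.arc hu hue) hv (hx.arc hv hxv)
  exact (gridDist_le_of_walk hw).trans hj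

/-- The contradiction in which the case analysis ends: a neighbour of an entry and a neighbour of
an exit are too far apart. -/
theorem false_of_walk (he : P.Entry e) (hx : P.Exit x) (h : WalkOfLength P.inner k e x)
    (hu : u ∈ P.outside) (hv : v ∈ P.outside)
    (hd : gridDist u e = 1 ∧ gridDist x v = 1 ∧ k < gridDist u v) : False :=
  absurd (gridDist_le he hx h hu hd.1 hv hd.2.1) (not_le.2 hd.2.2)

theorem exists_pred (hp : p ∈ P.holes) (h : ¬ P.Entry p) : ∃ q, P.inner q p := by
  obtain ⟨k, u, e, hu, hue, he, hw⟩ := P.exists_enter p hp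
  cases k with
  | zero => obtain rfl := hw.eq_of_zero; exact absurd ⟨he, u, hu, hue⟩ h
  | succ k =>
    cases hw.flip with
    | cons h _ => exact ⟨_, h⟩

theorem exists_succ (hp : p ∈ P.holes) (h : ¬ P.Exit p) : ∃ q, P.inner p q := by
  obtain ⟨q, hq⟩ := exists_pred (P := P.reverse) hp h
  exact ⟨q, hq.2.1, hq.1, hq.2.2⟩

theorem eq_neighbor_of_gridDist (h : gridDist p (i, j) = 1) :
    p = (i - 1, j) ∨ p = (i + 1, j) ∨ p = (i, j - 1) ∨ p = (i, j + 1) := by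
  obtain ⟨a, b⟩ := p
  simp only [gridDist, Prod.mk.injEq] at *
  omega

theorem pred_cases (hp : (i, j) ∈ P.holes) (h : ¬ P.Entry (i, j)) :
    P.inner (i - 1, j) (i, j) ∨ P.inner (i + 1, j) (i, j) ∨ P.inner (i, j - 1) (i, j) ∨
      P.inner (i, j + 1) (i, j) := by
  obtain ⟨q, hq⟩ := exists_pred hp h
  rcases eq_neighbor_of_gridDist (P.gridDist_of_arc _ _ hq.2.2) with rfl | rfl | rfl | rfl <;>
    simp only [hq, true_or, or_true]

theorem succ_cases (hp : (i, j) ∈ P.holes) (h : ¬ P.Exit (i, j)) :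
    P.inner (i, j) (i - 1, j) ∨ P.inner (i, j) (i + 1, j) ∨ P.inner (i, j) (i, j - 1) ∨
      P.inner (i, j) (i, j + 1) := by
  obtain ⟨q, hq⟩ := exists_succ hp h
  have hd := (gridDist_comm _ _).trans (P.gridDist_of_arc _ _ hq.2.2)
  rcases eq_neighbor_of_gridDist hd with rfl | rfl | rfl | rfl <;>
    simp only [hq, true_or, or_true]

theorem holes_eq {s : Finset (ℤ × ℤ)} (hs : ∀ p ∈ s, p ∈ P.holes) (h5 : s.card = 5) :
    P.holes = s :=
  (Finset.eq_of_subset_of_card_le hs (P.card_holes_le.trans h5.ge)).symm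

theorem inner_asymm (h : P.inner p q) : ¬ P.inner q p :=
  fun h' => P.arc_asymm _ _ h.2.2 h'.2.2

theorem false_of_six {s : Finset (ℤ × ℤ)} (hs : ∀ p ∈ s, p ∈ P.holes) (h6 : s.card = 6) : False :=
  absurd ((Finset.card_le_card hs).trans P.card_holes_le) (by omega)

theorem inner_reverse : P.reverse.inner p q ↔ P.inner q p :=
  and_left_comm

theorem leaf_cases (hp : p ∈ P.holes) (hu : u ∈ P.outside) (hd : gridDist u p = 1)
    (hleaf : ∀ s ∈ P.holes, gridDist s p = 1 → s = q) :
    P.Entry p ∧ P.inner p q ∨ P.Exit p ∧ P.inner q p := by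
  rcases entry_or_exit hp hu hd with hE | hX
  · obtain ⟨s, hs⟩ := exists_succ hp hE.not_exit
    obtain rfl := hleaf s hs.2.1 ((gridDist_comm _ _).trans (P.gridDist_of_arc _ _ hs.2.2))
    exact .inl ⟨hE, hs⟩
  · obtain ⟨s, hs⟩ := exists_pred hp fun h => h.not_exit hX
    obtain rfl := hleaf s hs.1 (P.gridDist_of_arc _ _ hs.2.2)
    exact .inr ⟨hX, hs⟩

/-! ### An arc from an entry to an exit -/

/-- The standard position of an arc from an entry to an exit: the neighbours of its ends in the next
row are outside the pocket. -/
structure Hinge (P : Pocket) : Prop where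
  entry : P.Entry (0, 0)
  exit : P.Exit (1, 0)
  inner : P.inner (0, 0) (1, 0)
  above₀ : (0, 1) ∈ P.outside
  above₁ : (1, 1) ∈ P.outside

/-- The box ends below the horizontal axis and extends far enough up and to the right. -/
structure OnFloor (P : Pocket) : Prop where
  below : ∀ i, (i, -1) ∉ P.box
  mem_box : ∀ i j, 0 ≤ i → i ≤ 4 → 0 ≤ j → j ≤ 4 → (i, j) ∈ P.box

theorem OnFloor.reverse (F : P.OnFloor) : P.reverse.OnFloor := ⟨F.below, F.mem_box⟩

theorem OnFloor.not_mem_holes (F : P.OnFloor) (i : ℤ) : (i, -1) ∉ P.holes :=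
  fun h => F.below i (P.holes_subset _ h)

theorem OnFloor.mem_outside (F : P.OnFloor) (hb : 0 ≤ i ∧ i ≤ 4 ∧ 0 ≤ j ∧ j ≤ 4)
    (h : (i, j) ∉ P.holes) : (i, j) ∈ P.outside :=
  ⟨F.mem_box i j hb.1 hb.2.1 hb.2.2.1 hb.2.2.2, h⟩

theorem inner_left_of_entry (F : P.OnFloor) (hE : P.Entry (i, 0)) (hu : (i, 1) ∈ P.outside)
    (h : P.inner (i + 1, 0) (i, 0)) : P.inner (i, 0) (i - 1, 0) := by
  rcases succ_cases hE.1 hE.not_exit with h' | h' | h' | h'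
  · exact h'
  · exact absurd h' (inner_asymm h)
  · exact absurd h'.2.1 (F.not_mem_holes i)
  · exact absurd h'.2.1 hu.2

theorem inner_left_of_exit (F : P.OnFloor) (hX : P.Exit (i, 0)) (hv : (i, 1) ∈ P.outside)
    (h : P.inner (i, 0) (i + 1, 0)) : P.inner (i - 1, 0) (i, 0) :=
  inner_reverse.1 (inner_left_of_entry F.reverse hX hv (inner_reverse.2 h))

namespace Hinge

theorem false_of_third_leaf (H : P.Hinge) (h₂ : (2, 0) ∈ P.holes) (h₃ : (3, 0) ∈ P.outside)
    (hd : (2, 1) ∈ P.outside) (hb : (2, -1) ∉ P.holes) : False := by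
  have hleaf : ∀ s ∈ P.holes, gridDist s (2, 0) = 1 → s = (1, 0) := by
    intro s hs hs₁
    rcases eq_neighbor_of_gridDist hs₁ with rfl | rfl | rfl | rfl
    · rfl
    · exact absurd hs h₃.2
    · exact absurd hs hb
    · exact absurd hs hd.2
  rcases leaf_cases h₂ h₃ (by decide) hleaf with ⟨hE, h⟩ | ⟨hX, h⟩
  · exact false_of_walk hE H.exit (.single h) h₃ H.above₁ (by decide)
  · exact false_of_walk H.entry hX (.cons H.inner (.single h)) H.above₀ h₃ (by decide)

end Hinge

theorem inner_of_entry_bend (F : P.OnFloor) (h₀ : (0, 0) ∈ P.holes) (h₁ : (1, 0) ∈ P.holes)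
    (h₂ : (2, 0) ∈ P.holes) (hv : (1, 1) ∈ P.outside) (hq : P.Entry (2, 1)) :
    P.inner (2, 1) (2, 0) := by
  have hs := succ_cases hq.1 hq.not_exit
  norm_num at hs
  rcases hs with h | h | h | h
  · exact absurd h.2.1 hv.2
  · have hT : P.holes = {(0, 0), (1, 0), (2, 0), (2, 1), (3, 1)} :=
      holes_eq (by simpa using ⟨h₀, h₁, h₂, h.1, h.2.1⟩) rfl
    have hout : (3, 2) ∈ P.outside := F.mem_outside (by decide) (by simp [hT])
    rcases leaf_cases (q := (2, 1)) h.2.1 hout (by decide)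
      (by rw [hT]; decide) with ⟨-, h'⟩ | ⟨hX, -⟩
    · exact absurd h' (inner_asymm h)
    · exact (false_of_walk hq hX (.single h) hv hout (by decide)).elim
  · exact h
  · have hT : P.holes = {(0, 0), (1, 0), (2, 0), (2, 1), (2, 2)} :=
      holes_eq (by simpa using ⟨h₀, h₁, h₂, h.1, h.2.1⟩) rfl
    have hout : (2, 3) ∈ P.outside := F.mem_outside (by decide) (by simp [hT])
    rcases leaf_cases (q := (2, 1)) h.2.1 hout (by decide)
      (by rw [hT]; decide) with ⟨-, h'⟩ | ⟨hX, -⟩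
    · exact absurd h' (inner_asymm h)
    · exact (false_of_walk hq hX (.single h) hv hout (by decide)).elim

theorem inner_of_exit_bend (F : P.OnFloor) (h₀ : (0, 0) ∈ P.holes) (h₁ : (1, 0) ∈ P.holes)
    (h₂ : (2, 0) ∈ P.holes) (hv : (1, 1) ∈ P.outside) (hq : P.Exit (2, 1)) :
    P.inner (2, 0) (2, 1) :=
  inner_reverse.1 (inner_of_entry_bend F.reverse h₀ h₁ h₂ hv hq)

theorem inner_of_entry_long (F : P.OnFloor) (h₀ : (0, 0) ∈ P.holes) (h₁ : (1, 0) ∈ P.holes)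
    (h₂ : (2, 0) ∈ P.holes) (h₄ : (4, 0) ∈ P.outside)
    (hq : P.Entry (3, 0)) : P.inner (3, 0) (2, 0) := by
  have hs := succ_cases hq.1 hq.not_exit
  norm_num at hs
  rcases hs with h | h | h | h
  · exact h
  · exact absurd h.2.1 h₄.2
  · exact absurd h.2.1 (F.not_mem_holes _)
  · have hT : P.holes = {(0, 0), (1, 0), (2, 0), (3, 0), (3, 1)} :=
      holes_eq (by simpa using ⟨h₀, h₁, h₂, h.1, h.2.1⟩) rfl
    have hout : (3, 2) ∈ P.outside := F.mem_outside (by decide) (by simp [hT])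
    rcases leaf_cases (q := (3, 0)) h.2.1 hout (by decide)
      (by rw [hT]; decide) with ⟨-, h'⟩ | ⟨hX, -⟩
    · exact absurd h' (inner_asymm h)
    · exact (false_of_walk hq hX (.single h) h₄ hout (by decide)).elim

theorem inner_of_exit_long (F : P.OnFloor) (h₀ : (0, 0) ∈ P.holes) (h₁ : (1, 0) ∈ P.holes)
    (h₂ : (2, 0) ∈ P.holes) (h₄ : (4, 0) ∈ P.outside)
    (hq : P.Exit (3, 0)) : P.inner (2, 0) (3, 0) :=
  inner_reverse.1 (inner_of_entry_long F.reverse h₀ h₁ h₂ h₄ hq)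

namespace Hinge

theorem false_of_bend (H : P.Hinge) (F : P.OnFloor) (h₂ : (2, 0) ∈ P.holes)
    (h₃ : (3, 0) ∈ P.outside) (hq : (2, 1) ∈ P.holes) : False := by
  have h₀ := H.entry.1
  have h₁ := H.exit.1
  rcases entry_or_exit h₂ h₃ (by decide) with hE | hX
  · rcases succ_cases h₂ hE.not_exit with h | h | h | h <;> norm_num at h
    · exact false_of_walk hE H.exit (.single h) h₃ H.above₁ (by decide)
    · exact h₃.2 h.2.1
    · exact F.not_mem_holes _ h.2.1
    · rcases entry_or_exit hq H.above₁ (by decide) with hqE | hqX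
      · exact inner_asymm h (inner_of_entry_bend F h₀ h₁ h₂ H.above₁ hqE)
      · exact false_of_walk hE hqX (.single h) h₃ H.above₁ (by decide)
  · rcases pred_cases h₂ (fun h => h.not_exit hX) with h | h | h | h <;> norm_num at h
    · exact false_of_walk H.entry hX (.cons H.inner (.single h)) H.above₀ h₃ (by decide)
    · exact h₃.2 h.1
    · exact F.not_mem_holes _ h.1
    · rcases entry_or_exit hq H.above₁ (by decide) with hqE | hqX
      · exact false_of_walk hqE hX (.single h) H.above₁ h₃ (by decide)
      · exact inner_asymm h (inner_of_exit_bend F h₀ h₁ h₂ H.above₁ hqX)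

theorem false_of_row_of_four (H : P.Hinge) (F : P.OnFloor) (h₂ : (2, 0) ∈ P.holes)
    (hd : (2, 1) ∈ P.outside) (h₃ : (3, 0) ∈ P.holes) (h₄ : (4, 0) ∈ P.outside) : False := by
  have h₀ := H.entry.1
  have h₁ := H.exit.1
  rcases entry_or_exit h₃ h₄ (by decide) with hE | hX
  · have h := inner_of_entry_long F h₀ h₁ h₂ h₄ hE
    rcases entry_or_exit h₂ hd (by decide) with hdE | hdX
    · have h' := inner_left_of_entry F hdE hd h
      norm_num at h'
      exact false_of_walk hE H.exit (.cons h (.single h')) h₄ H.above₁ (by decide)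
    · exact false_of_walk hE hdX (.single h) h₄ hd (by decide)
  · have h := inner_of_exit_long F h₀ h₁ h₂ h₄ hX
    rcases entry_or_exit h₂ hd (by decide) with hdE | hdX
    · exact false_of_walk hdE hX (.single h) hd h₄ (by decide)
    · have h' := inner_left_of_exit F hdX hd h
      norm_num at h'
      exact false_of_walk H.entry hX (.cons H.inner (.cons h' (.single h))) H.above₀ h₄ (by decide)

theorem false_of_fork (H : P.Hinge) (F : P.OnFloor) (h₂ : (2, 0) ∈ P.holes) (hq : (2, 1) ∈ P.holes)
    (h₃ : (3, 0) ∈ P.holes) : False := by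
  have hT : P.holes = {(0, 0), (1, 0), (2, 0), (2, 1), (3, 0)} :=
    holes_eq (by simpa using ⟨H.entry.1, H.exit.1, h₂, hq, h₃⟩) rfl
  have h₄ : (4, 0) ∈ P.outside := F.mem_outside (by decide) (by simp [hT])
  have hqc := leaf_cases hq H.above₁ (q := (2, 0)) (by decide) (by rw [hT]; decide)
  have hmid : ∀ v ∈ P.outside, gridDist v (2, 0) ≠ 1 := by
    intro v hv hd
    rcases eq_neighbor_of_gridDist hd with rfl | rfl | rfl | rfl
    · exact hv.2 H.exit.1
    · exact hv.2 h₃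
    · exact F.below _ hv.1
    · exact hv.2 hq
  rcases leaf_cases h₃ h₄ (q := (2, 0)) (by decide) (by rw [hT]; decide) with ⟨hE, h⟩ | ⟨hX, h⟩
  · rcases hqc with ⟨-, hq'⟩ | ⟨hqX, hq'⟩
    · rcases succ_cases h₂ (fun ⟨_, v, hv, h⟩ =>
          hmid v hv ((gridDist_comm _ _).trans (P.gridDist_of_arc _ _ h)))
        with h' | h' | h' | h' <;> norm_num at h'
      · exact false_of_walk hE H.exit (.cons h (.single h')) h₄ H.above₁ (by decide)
      · exact inner_asymm h h'
      · exact F.not_mem_holes _ h'.2.1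
      · exact inner_asymm hq' h'
    · exact false_of_walk hE hqX (.cons h (.single hq')) h₄ H.above₁ (by decide)
  · rcases hqc with ⟨hqE, hq'⟩ | ⟨-, hq'⟩
    · exact false_of_walk hqE hX (.cons hq' (.single h)) H.above₁ h₄ (by decide)
    · rcases pred_cases h₂ (fun ⟨_, u, hu, h⟩ => hmid u hu (P.gridDist_of_arc _ _ h))
        with h' | h' | h' | h' <;> norm_num at h'
      · exact false_of_walk H.entry hX (.cons H.inner (.cons h' (.single h))) H.above₀ h₄
          (by decide)
      · exact inner_asymm h h'
      · exact F.not_mem_holes _ h'.1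
      · exact inner_asymm hq' h'

theorem false_of_row_of_five (H : P.Hinge) (F : P.OnFloor) (h₂ : (2, 0) ∈ P.holes)
    (hd : (2, 1) ∈ P.outside)
    (h₃ : (3, 0) ∈ P.holes) (h₄ : (4, 0) ∈ P.holes) (h₅ : (5, 0) ∈ P.box) : False := by
  have hT : P.holes = {(0, 0), (1, 0), (2, 0), (3, 0), (4, 0)} :=
    holes_eq (by simpa using ⟨H.entry.1, H.exit.1, h₂, h₃, h₄⟩) rfl
  have h₅' : (5, 0) ∈ P.outside := ⟨h₅, by simp [hT]⟩
  have h₃' : (3, 1) ∈ P.outside := F.mem_outside (by decide) (by simp [hT])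
  rcases leaf_cases h₄ h₅' (q := (3, 0)) (by decide) (by rw [hT]; decide) with ⟨hE, h⟩ | ⟨hX, h⟩
  · rcases entry_or_exit h₃ h₃' (by decide) with hE₃ | hX₃
    · have h' := inner_left_of_entry F hE₃ h₃' h
      norm_num at h'
      rcases entry_or_exit h₂ hd (by decide) with hE₂ | hX₂
      · have h'' := inner_left_of_entry F hE₂ hd h'
        norm_num at h''
        exact false_of_walk hE H.exit (.cons h (.cons h' (.single h''))) h₅' H.above₁ (by decide)
      · exact false_of_walk hE hX₂ (.cons h (.single h')) h₅' hd (by decide)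
    · exact false_of_walk hE hX₃ (.single h) h₅' h₃' (by decide)
  · rcases entry_or_exit h₃ h₃' (by decide) with hE₃ | hX₃
    · exact false_of_walk hE₃ hX (.single h) h₃' h₅' (by decide)
    · have h' := inner_left_of_exit F hX₃ h₃' h
      norm_num at h'
      rcases entry_or_exit h₂ hd (by decide) with hE₂ | hX₂
      · exact false_of_walk hE₂ hX (.cons h' (.single h)) hd h₅' (by decide)
      · have h'' := inner_left_of_exit F hX₂ hd h'
        norm_num at h''
        exact false_of_walk H.entry hX (.cons H.inner (.cons h'' (.cons h' (.single h)))) H.above₀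
          h₅' (by decide)

theorem false_of_third (H : P.Hinge) (F : P.OnFloor) (h₂ : (2, 0) ∈ P.holes)
    (h₅ : (3, 0) ∈ P.holes → (4, 0) ∈ P.holes → (5, 0) ∈ P.box) : False := by
  by_cases hd : (2, 1) ∈ P.holes <;> by_cases h₃ : (3, 0) ∈ P.holes
  · exact H.false_of_fork F h₂ hd h₃
  · exact H.false_of_bend F h₂ (F.mem_outside (by decide) h₃) hd
  · have hd := F.mem_outside (by decide) hd
    by_cases h₄ : (4, 0) ∈ P.holes
    · exact H.false_of_row_of_five F h₂ hd h₃ h₄ (h₅ h₃ h₄)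
    · exact H.false_of_row_of_four F h₂ hd h₃ (F.mem_outside (by decide) h₄)
  · exact H.false_of_third_leaf h₂ (F.mem_outside (by decide) h₃) (F.mem_outside (by decide) hd)
      (F.not_mem_holes _)

theorem not_outside_of_entry_side (H : P.Hinge) (hd : gridDist p (0, 0) = 1)
    (hp : 1 < gridDist p (1, 1)) : p ∉ P.outside :=
  fun h => false_of_walk H.entry H.exit (.single H.inner) h H.above₁ ⟨hd, by decide, hp⟩

theorem not_outside_of_exit_side (H : P.Hinge) (hd : gridDist (1, 0) p = 1)
    (hp : 1 < gridDist (0, 1) p) : p ∉ P.outside :=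
  fun h => false_of_walk H.entry H.exit (.single H.inner) H.above₀ h ⟨by decide, hd, hp⟩

theorem mirror (H : P.Hinge) :
    (P.reverse.comap (isGridSymmetry_signedShift (-1) 1 1 0)).Hinge where
  entry := by rw [entry_comap]; exact H.exit
  exit := by rw [exit_comap]; exact H.entry
  inner := ⟨(mem_holes_comap _).2 H.exit.1, (mem_holes_comap _).2 H.entry.1, H.inner.2.2⟩
  above₀ := (mem_outside_comap _).2 H.above₁
  above₁ := (mem_outside_comap _).2 H.above₀

theorem false_of_below (H : P.Hinge) (hb₀ : (0, -1) ∈ P.holes) (hb₁ : (1, -1) ∈ P.holes)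
    (h₂ : (2, 0) ∈ P.holes) : False := by
  have hT : P.holes = {(0, 0), (1, 0), (0, -1), (1, -1), (2, 0)} :=
    holes_eq (by simpa using ⟨H.entry.1, H.exit.1, hb₀, hb₁, h₂⟩) rfl
  have hl : (-1, 0) ∉ P.box := fun h =>
    H.not_outside_of_entry_side (by decide) (by decide) ⟨h, by simp [hT]⟩
  obtain ⟨l, r, b, t, hlr, hbt, hbox⟩ := P.isLargeBox
  have h₀ := (hbox _ _).1 (P.holes_subset _ H.entry.1)
  have h₁ := (hbox _ _).1 H.above₁.1
  rw [hbox] at hl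
  refine H.false_of_third_leaf h₂ ⟨(hbox _ _).2 (by omega), ?_⟩ ⟨(hbox _ _).2 (by omega), ?_⟩ ?_ <;>
    simp [hT]

theorem false_of_left_boundary (H : P.Hinge) (hb : (0, -1) ∉ P.box) (hl : (-1, 0) ∉ P.box) :
    False := by
  obtain ⟨l, r, b, t, hlr, hbt, hbox⟩ := P.isLargeBox
  have h₀ := (hbox _ _).1 (P.holes_subset _ H.entry.1)
  have h₁ := (hbox _ _).1 H.above₁.1
  rw [hbox] at hl hb
  have h₂ : (2, 0) ∈ P.holes := mem_holes_of_mem_box ((hbox _ _).2 (by omega))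
    (H.not_outside_of_exit_side (by decide) (by decide))
  exact H.false_of_third ⟨fun i => by rw [hbox]; omega, fun i j _ _ _ _ => by rw [hbox]; omega⟩ h₂
    fun _ _ => (hbox _ _).2 (by omega)

theorem false_of_both_sides (H : P.Hinge) (hb : (0, -1) ∉ P.box) (hl : (-1, 0) ∈ P.holes)
    (h₂ : (2, 0) ∈ P.holes) (hf₁ : (-2, 0) ∉ P.holes) (hf₂ : (-1, 1) ∉ P.holes) : False := by
  obtain ⟨l, r, b, t, hlr, hbt, hbox⟩ := P.isLargeBox
  have h₀ := (hbox _ _).1 (P.holes_subset _ H.entry.1)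
  have h₁ := (hbox _ _).1 H.above₁.1
  have hl' := (hbox _ _).1 (P.holes_subset _ hl)
  rw [hbox] at hb
  by_cases hf : (-2, 0) ∈ P.box
  · have hu : (-1, 1) ∈ P.outside := ⟨(hbox _ _).2 (by omega), hf₂⟩
    exact H.mirror.false_of_third_leaf ((mem_holes_comap _).2 hl)
      ((mem_outside_comap _).2 ⟨hf, hf₁⟩)
      ((mem_outside_comap _).2 hu)
      fun h => by
        have h : (-1, -1) ∈ P.holes := by simpa [reverse] using (mem_holes_comap _).1 h
        have := (hbox _ _).1 (P.holes_subset _ h)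
        omega
  · rw [hbox] at hf
    refine H.false_of_third ⟨fun i => by rw [hbox]; omega, fun i j _ _ _ _ => by rw [hbox]; omega⟩
      h₂ fun h₃ h₄ => (false_of_six (P := P)
        (s := {(-1, 0), (0, 0), (1, 0), (2, 0), (3, 0), (4, 0)}) ?_ rfl).elim
    simpa using ⟨hl, H.entry.1, H.exit.1, h₂, h₃, h₄⟩

theorem false (H : P.Hinge) : False := by
  obtain ⟨l, r, b, t, hlr, _, hbox⟩ := P.isLargeBox
  have h₀ := (hbox _ _).1 (P.holes_subset _ H.entry.1)
  have h₁ := (hbox _ _).1 H.above₁.1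
  have hl : (-1, 0) ∈ P.box → (-1, 0) ∈ P.holes := fun h =>
    mem_holes_of_mem_box h (H.not_outside_of_entry_side (by decide) (by decide))
  have hr : (2, 0) ∈ P.box → (2, 0) ∈ P.holes := fun h =>
    mem_holes_of_mem_box h (H.not_outside_of_exit_side (by decide) (by decide))
  by_cases hb : (0, -1) ∈ P.box
  · have hb₀ := mem_holes_of_mem_box hb (H.not_outside_of_entry_side (by decide) (by decide))
    have hb₁ := mem_holes_of_mem_box ((hbox _ _).2 (by rw [hbox] at hb; omega))
      (H.not_outside_of_exit_side (p := (1, -1)) (by decide) (by decide))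
    by_cases h₂ : (2, 0) ∈ P.box
    · exact H.false_of_below hb₀ hb₁ (hr h₂)
    · refine H.mirror.false_of_below ((mem_holes_comap _).2 hb₁) ((mem_holes_comap _).2 hb₀)
        ((mem_holes_comap _).2 (hl ((hbox _ _).2 ?_)))
      rw [hbox] at h₂
      omega
  · have hb' : (1, -1) ∉ P.box := by rw [hbox] at hb ⊢; omega
    by_cases hl' : (-1, 0) ∈ P.box
    swap; · exact H.false_of_left_boundary hb hl'
    by_cases hr' : (2, 0) ∈ P.box
    swap; · exact H.mirror.false_of_left_boundary hb' hr'
    by_cases hf : (-2, 0) ∈ P.holes ∨ (-1, 1) ∈ P.holes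
    · obtain ⟨f, hf, hfm⟩ : ∃ f : ℤ × ℤ, (f = (-2, 0) ∨ f = (-1, 1)) ∧ f ∈ P.holes := by
        rcases hf with hf | hf <;> exact ⟨_, by simp, hf⟩
      have hT : P.holes = {(-1, 0), (0, 0), (1, 0), (2, 0), f} :=
        holes_eq (by simpa using ⟨hl hl', H.entry.1, H.exit.1, hr hr', hfm⟩)
          (by rcases hf with rfl | rfl <;> rfl)
      refine H.mirror.false_of_both_sides hb' ((mem_holes_comap _).2 (hr hr'))
        ((mem_holes_comap _).2 (hl hl')) (fun h => ?_) (fun h => ?_) <;>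
      · have h := (mem_holes_comap _).1 h
        change _ ∈ P.holes at h
        rcases hf with rfl | rfl <;> simp [hT] at h
    · exact H.false_of_both_sides hb (hl hl') (hr hr') (fun h => hf (.inl h)) fun h => hf (.inr h)

end Hinge

theorem exists_hinge (he : P.Entry e) (hx : P.Exit x) (h : P.inner e x) :
    ∃ Q : Pocket, Q.Hinge := by
  obtain ⟨φ, hφ, rfl, rfl⟩ :=
    exists_isGridSymmetry_of_gridDist_eq_one (P.gridDist_of_arc _ _ h.2.2)
  obtain ⟨u, hu, hue⟩ := ((entry_comap hφ).2 he).2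
  obtain ⟨v, hv, hxv⟩ := ((exit_comap hφ).2 hx).2
  have hue := (P.comap hφ).gridDist_of_arc _ _ hue
  have hxv := (P.comap hφ).gridDist_of_arc _ _ hxv
  have hi : (P.comap hφ).inner (0, 0) (1, 0) :=
    ⟨(mem_holes_comap hφ).2 h.1, (mem_holes_comap hφ).2 h.2.1, h.2.2⟩
  have hd := gridDist_le ((entry_comap hφ).2 he) ((exit_comap hφ).2 hx) (.single hi) hu hue hv hxv
  have hu' : u ≠ (1, 0) := fun h => hu.2 (h ▸ hi.2.1)
  have hv' : v ≠ (0, 0) := fun h => hv.2 (h ▸ hi.1)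
  have hcases : u = (0, 1) ∧ v = (1, 1) ∨ u = (0, -1) ∧ v = (1, -1) := by
    obtain ⟨a, b⟩ := u
    obtain ⟨c, d⟩ := v
    simp only [gridDist, ne_eq, Prod.mk.injEq] at *
    omega
  rcases hcases with ⟨rfl, rfl⟩ | ⟨rfl, rfl⟩
  · exact ⟨_, (entry_comap hφ).2 he, (exit_comap hφ).2 hx, hi, hu, hv⟩
  · have hψ := isGridSymmetry_signedShift 1 (-1) 0 0
    exact ⟨(P.comap hφ).comap hψ, (entry_comap hψ).2 ((entry_comap hφ).2 he),
      (exit_comap hψ).2 ((exit_comap hφ).2 hx),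
      ⟨(mem_holes_comap hψ).2 hi.1, (mem_holes_comap hψ).2 hi.2.1, hi.2.2⟩,
      (mem_outside_comap hψ).2 hu, (mem_outside_comap hψ).2 hv⟩

theorem not_inner_entry_exit (he : P.Entry e) (hx : P.Exit x) : ¬ P.inner e x := by
  intro h
  obtain ⟨Q, H⟩ := exists_hinge he hx h
  exact H.false

end Pocket

namespace Pocket

variable {P : Pocket} {e x u v p q : ℤ × ℤ}

/-! ### A path of two arcs from an entry to an exit -/

/-- A vertex of the pocket that is neither an entry nor an exit. -/
structure Neutral (P : Pocket) (p : ℤ × ℤ) : Prop where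
  mem_holes : p ∈ P.holes
  not_entry : ¬ P.Entry p
  not_exit : ¬ P.Exit p

theorem Neutral.neighbor_mem_holes (hp : P.Neutral p) (hq : q ∈ P.box) (hd : gridDist q p = 1) :
    q ∈ P.holes :=
  mem_holes_of_mem_box hq fun h => (entry_or_exit hp.mem_holes h hd).elim hp.not_entry hp.not_exit

theorem neutral_comap {φ : ℤ × ℤ ≃ ℤ × ℤ} (hφ : IsGridSymmetry φ) (h : P.Neutral (φ p)) :
    (P.comap hφ).Neutral p :=
  ⟨(mem_holes_comap hφ).2 h.mem_holes, fun he => h.not_entry ((entry_comap hφ).1 he),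
    fun hx => h.not_exit ((exit_comap hφ).1 hx)⟩

theorem inner_comap {φ : ℤ × ℤ ≃ ℤ × ℤ} (hφ : IsGridSymmetry φ) (h : P.inner (φ p) (φ q)) :
    (P.comap hφ).inner p q :=
  ⟨(mem_holes_comap hφ).2 h.1, (mem_holes_comap hφ).2 h.2.1, h.2.2⟩

/-- A path of two arcs from an entry through a neutral vertex to an exit. -/
structure Passage (P : Pocket) (e p x : ℤ × ℤ) : Prop where
  entry : P.Entry e
  neutral : P.Neutral p
  exit : P.Exit x
  inner₁ : P.inner e p
  inner₂ : P.inner p x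

namespace Passage

theorem reverse (S : P.Passage e p x) : P.reverse.Passage x p e where
  entry := S.exit
  neutral := ⟨S.neutral.1, S.neutral.3, S.neutral.2⟩
  exit := S.entry
  inner₁ := inner_reverse.2 S.inner₂
  inner₂ := inner_reverse.2 S.inner₁

theorem comap {φ : ℤ × ℤ ≃ ℤ × ℤ} (hφ : IsGridSymmetry φ) (S : P.Passage (φ e) (φ p) (φ x)) :
    (P.comap hφ).Passage e p x where
  entry := (entry_comap hφ).2 S.entry
  neutral := neutral_comap hφ S.neutral
  exit := (exit_comap hφ).2 S.exit
  inner₁ := inner_comap hφ S.inner₁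
  inner₂ := inner_comap hφ S.inner₂

theorem not_outside_of_outside (S : P.Passage e p x) (hu : u ∈ P.outside)
    (h : gridDist u e = 1 ∧ gridDist x v = 1 ∧ 2 < gridDist u v) : v ∉ P.outside := fun hv =>
  false_of_walk S.entry S.exit (.cons S.inner₁ (.single S.inner₂)) hu hv h

theorem not_cross_of_straight (S : P.Passage (-1, 0) (0, 0) (1, 0)) (hD : (0, 1) ∈ P.holes) :
    (0, -1) ∉ P.holes := by
  intro hB
  have hT : P.holes = {(-1, 0), (0, 0), (1, 0), (0, 1), (0, -1)} :=
    holes_eq (by simpa using ⟨S.entry.1, S.neutral.1, S.exit.1, hD, hB⟩) rfl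
  obtain ⟨l, r, b, t, _, _, hbox⟩ := P.isLargeBox
  have hl := (hbox _ _).1 (P.holes_subset _ S.entry.1)
  have hr := (hbox _ _).1 (P.holes_subset _ S.exit.1)
  have hd := (hbox _ _).1 (P.holes_subset _ hD)
  have hb := (hbox _ _).1 (P.holes_subset _ hB)
  have hu : (-1, 1) ∈ P.outside := ⟨(hbox _ _).2 (by omega), by simp [hT]⟩
  exact S.not_outside_of_outside (v := (1, -1)) hu (by decide)
    ⟨(hbox _ _).2 (by omega), by simp [hT]⟩

theorem left_not_outside_of_straight (S : P.Passage (-1, 0) (0, 0) (1, 0))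
    (hb : (0, -1) ∉ P.box) : (-2, 0) ∉ P.outside := by
  intro hu
  obtain ⟨l, r, b, t, hlr, hbt, hbox⟩ := P.isLargeBox
  have h₀ := (hbox _ _).1 (P.holes_subset _ S.neutral.1)
  have hr := (hbox _ _).1 (P.holes_subset _ S.exit.1)
  rw [hbox] at hb
  have h₁ : (1, 1) ∈ P.holes := mem_holes_of_mem_box ((hbox _ _).2 (by omega))
    (S.not_outside_of_outside hu (by decide))
  obtain ⟨-, v, hv, hxv⟩ := S.exit
  rcases eq_neighbor_of_gridDist ((gridDist_comm _ _).trans (P.gridDist_of_arc _ _ hxv))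
    with rfl | rfl | rfl | rfl
  · exact hv.2 S.neutral.1
  · exact S.not_outside_of_outside hu (by decide) hv
  · have := (hbox _ _).1 hv.1
    omega
  · exact hv.2 h₁

theorem false_of_straight_of_right (S : P.Passage (-1, 0) (0, 0) (1, 0)) (hb : (0, -1) ∉ P.box)
    (hf : (2, 0) ∈ P.holes) : False := by
  obtain ⟨l, r, b, t, hlr, hbt, hbox⟩ := P.isLargeBox
  have h₀ := (hbox _ _).1 (P.holes_subset _ S.neutral.1)
  have hl := (hbox _ _).1 (P.holes_subset _ S.entry.1)
  have hl' := S.left_not_outside_of_straight hb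
  rw [hbox] at hb
  have hD : (0, 1) ∈ P.holes := S.neutral.neighbor_mem_holes ((hbox _ _).2 (by omega)) (by decide)
  have hT : P.holes = {(-1, 0), (0, 0), (1, 0), (0, 1), (2, 0)} :=
    holes_eq (by simpa using ⟨S.entry.1, S.neutral.1, S.exit.1, hD, hf⟩) rfl
  have hbox' : (-2, 0) ∉ P.box := fun h => hl' ⟨h, by simp [hT]⟩
  rw [hbox] at hbox'
  have hu : (-1, 1) ∈ P.outside := ⟨(hbox _ _).2 (by omega), by simp [hT]⟩
  have hv : (3, 0) ∈ P.outside := ⟨(hbox _ _).2 (by omega), by simp [hT]⟩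
  rcases leaf_cases hf hv (q := (1, 0)) (by decide) (by rw [hT]; decide) with ⟨hE, h⟩ | ⟨hX, h⟩
  · exact not_inner_entry_exit hE S.exit h
  · exact false_of_walk S.entry hX (.cons S.inner₁ (.cons S.inner₂ (.single h))) hu hv (by decide)

theorem mirror_of_straight (S : P.Passage (-1, 0) (0, 0) (1, 0)) :
    (P.reverse.comap (isGridSymmetry_signedShift (-1) 1 0 0)).Passage (-1, 0) (0, 0) (1, 0) :=
  S.reverse.comap _

theorem false_of_straight_of_floor (S : P.Passage (-1, 0) (0, 0) (1, 0)) (hb : (0, -1) ∉ P.box) :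
    False := by
  obtain ⟨l, r, b, t, hlr, _, hbox⟩ := P.isLargeBox
  have h₀ := (hbox _ _).1 (P.holes_subset _ S.neutral.1)
  by_cases hr : (2, 0) ∈ P.box
  · exact S.false_of_straight_of_right hb (mem_holes_of_mem_box hr fun h =>
      S.mirror_of_straight.left_not_outside_of_straight hb ((mem_outside_comap _).2 h))
  · rw [hbox] at hr
    have hl : (-2, 0) ∈ P.holes := mem_holes_of_mem_box ((hbox _ _).2 (by omega))
      (S.left_not_outside_of_straight hb)
    exact S.mirror_of_straight.false_of_straight_of_right hb ((mem_holes_comap _).2 hl)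

theorem false_of_straight (S : P.Passage (-1, 0) (0, 0) (1, 0)) : False := by
  by_cases hb : (0, -1) ∈ P.box
  · have hB := S.neutral.neighbor_mem_holes hb (by decide)
    have hD : (0, 1) ∉ P.box := fun h =>
      S.not_cross_of_straight (S.neutral.neighbor_mem_holes h (by decide)) hB
    have S' : (P.comap (isGridSymmetry_signedShift 1 (-1) 0 0)).Passage (-1, 0) (0, 0) (1, 0) :=
      S.comap _
    exact S'.false_of_straight_of_floor hD
  · exact S.false_of_straight_of_floor hb

theorem not_cross_of_bent (S : P.Passage (-1, 0) (0, 0) (0, 1)) (hR : (1, 0) ∈ P.holes) :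
    (0, -1) ∉ P.holes := by
  intro hB
  have hT : P.holes = {(-1, 0), (0, 0), (1, 0), (0, 1), (0, -1)} :=
    holes_eq (by simpa using ⟨S.entry.1, S.neutral.1, hR, S.exit.1, hB⟩) rfl
  obtain ⟨l, r, b, t, _, _, hbox⟩ := P.isLargeBox
  have hl := (hbox _ _).1 (P.holes_subset _ S.entry.1)
  have hr := (hbox _ _).1 (P.holes_subset _ hR)
  have hd := (hbox _ _).1 (P.holes_subset _ S.exit.1)
  have hb := (hbox _ _).1 (P.holes_subset _ hB)
  have hu : (-1, -1) ∈ P.outside := ⟨(hbox _ _).2 (by omega), by simp [hT]⟩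
  exact S.not_outside_of_outside (v := (1, 1)) hu (by decide)
    ⟨(hbox _ _).2 (by omega), by simp [hT]⟩

theorem left_not_outside_of_bent (S : P.Passage (-1, 0) (0, 0) (0, 1)) (hb : (0, -1) ∉ P.box)
    (hR : (1, 0) ∈ P.holes) : (-2, 0) ∉ P.outside := by
  intro hu
  obtain ⟨l, r, b, t, hlr, hbt, hbox⟩ := P.isLargeBox
  have h₀ := (hbox _ _).1 (P.holes_subset _ S.neutral.1)
  have hr := (hbox _ _).1 (P.holes_subset _ hR)
  rw [hbox] at hb
  have h₁ : (1, 1) ∈ P.holes := mem_holes_of_mem_box ((hbox _ _).2 (by omega))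
    (S.not_outside_of_outside hu (by decide))
  have h₂ : (0, 2) ∈ P.holes := mem_holes_of_mem_box ((hbox _ _).2 (by omega))
    (S.not_outside_of_outside hu (by decide))
  refine false_of_six (P := P) (s := {(-1, 0), (0, 0), (1, 0), (0, 1), (1, 1), (0, 2)}) ?_ rfl
  simpa using ⟨S.entry.1, S.neutral.1, hR, S.exit.1, h₁, h₂⟩

theorem false_of_bent_of_left_right (S : P.Passage (-1, 0) (0, 0) (0, 1)) (hb : (0, -1) ∉ P.box)
    (hR : (1, 0) ∈ P.holes) (hf : (-2, 0) ∈ P.holes) : False := by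
  have hT : P.holes = {(-1, 0), (0, 0), (1, 0), (0, 1), (-2, 0)} :=
    holes_eq (by simpa using ⟨S.entry.1, S.neutral.1, hR, S.exit.1, hf⟩) rfl
  obtain ⟨l, r, b, t, hlr, hbt, hbox⟩ := P.isLargeBox
  have h₀ := (hbox _ _).1 (P.holes_subset _ S.neutral.1)
  have hr := (hbox _ _).1 (P.holes_subset _ hR)
  have hl := (hbox _ _).1 (P.holes_subset _ S.entry.1)
  rw [hbox] at hb
  have h₁ : (1, 1) ∈ P.outside := ⟨(hbox _ _).2 (by omega), by simp [hT]⟩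
  have hu : (-1, 1) ∈ P.outside := ⟨(hbox _ _).2 (by omega), by simp [hT]⟩
  rcases leaf_cases hR h₁ (q := (0, 0)) (by decide) (by rw [hT]; decide) with ⟨hE, h⟩ | ⟨hX, h⟩
  · have hr' : (2, 0) ∉ P.box := fun h₂ => false_of_walk hE S.exit (.cons h (.single S.inner₂))
      ⟨h₂, by simp [hT]⟩ hu (by decide)
    rw [hbox] at hr'
    have h₃ : (-3, 0) ∈ P.outside := ⟨(hbox _ _).2 (by omega), by simp [hT]⟩
    rcases leaf_cases hf h₃ (q := (-1, 0)) (by decide) (by rw [hT]; decide)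
      with ⟨hfE, h'⟩ | ⟨hfX, h'⟩
    · exact false_of_walk hfE S.exit (.cons h' (.cons S.inner₁ (.single S.inner₂))) h₃ h₁
        (by decide)
    · exact not_inner_entry_exit S.entry hfX h'
  · exact false_of_straight ⟨S.entry, S.neutral, hX, S.inner₁, h⟩

end Passage

/-- The bent path running along the floor of the box next to its left side, so that `(-1, 1)` is
the only neighbour outside of the entry. -/
structure BentAtSide (P : Pocket) : Prop where
  passage : P.Passage (-1, 0) (0, 0) (0, 1)
  right : (1, 0) ∈ P.holes
  above_left : (-1, 1) ∈ P.outside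
  mem_box : ∀ i j, (i, j) ∈ P.box → -1 ≤ i ∧ 0 ≤ j
  box_mem : ∀ i j, -1 ≤ i → i ≤ 4 → 0 ≤ j → j ≤ 5 → (i, j) ∈ P.box

namespace BentAtSide

/-- The entry `(-1, 0)` has no other neighbour outside than `(-1, 1)`, and from there the walk
in the convex set has to make a detour around `(0, 1)`. -/
theorem not_inner_exit_corner (B : P.BentAtSide) (hX : P.Exit (1, 1)) (hv : (2, 1) ∈ P.outside) :
    ¬ P.inner (0, 1) (1, 1) := by
  intro h
  have S := B.passage
  obtain ⟨j, hj, hw⟩ := exists_shortcut' S.entry hX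
    (.cons S.inner₁ (.cons S.inner₂ (.single h))) B.above_left
    (S.entry.arc B.above_left (by decide)) hv (hX.arc hv (by decide))
  cases hw with
  | @cons j _ w _ hw hwv =>
    have hd := gridDist_le_of_walk hwv
    have hw' := B.mem_box _ _ hw.2.1.1
    rcases eq_neighbor_of_gridDist ((gridDist_comm _ _).trans (P.gridDist_of_arc _ _ hw.2.2))
      with rfl | rfl | rfl | rfl
    · norm_num at hw'
    · exact hw.2.1.2 S.exit.1
    · exact hw.2.1.2 S.entry.1
    · simp only [gridDist] at hd
      omega

theorem right_leaf_cases (B : P.BentAtSide) (hg : (2, 0) ∈ P.holes) :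
    P.Entry (2, 0) ∧ P.inner (2, 0) (1, 0) ∨ P.Exit (2, 0) ∧ P.inner (1, 0) (2, 0) := by
  have S := B.passage
  have hT : P.holes = {(-1, 0), (0, 0), (1, 0), (0, 1), (2, 0)} :=
    holes_eq (by simpa using ⟨S.entry.1, S.neutral.1, B.right, S.exit.1, hg⟩) rfl
  exact leaf_cases hg (u := (3, 0)) ⟨B.box_mem _ _ (by decide) (by decide) (by decide) (by decide),
    by simp [hT]⟩ (by decide) (by rw [hT]; decide)

theorem holes_eq_of_corner (B : P.BentAtSide) (hg : (1, 1) ∈ P.holes) :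
    P.holes = {(-1, 0), (0, 0), (1, 0), (0, 1), (1, 1)} :=
  holes_eq (by simpa using ⟨B.passage.entry.1, B.passage.neutral.1, B.right, B.passage.exit.1, hg⟩)
    rfl

theorem mem_outside_of_corner (B : P.BentAtSide) (hg : (1, 1) ∈ P.holes) :
    (2, 1) ∈ P.outside ∧ (1, 2) ∈ P.outside := by
  constructor <;> refine ⟨B.box_mem _ _ ?_ ?_ ?_ ?_, ?_⟩ <;> simp [B.holes_eq_of_corner hg]

theorem not_exit_right (B : P.BentAtSide) : ¬ P.Exit (1, 0) := by
  intro hX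
  have S := B.passage
  rcases pred_cases hX.1 (fun h => h.not_exit hX) with h | h | h | h <;> norm_num at h
  · exact Passage.false_of_straight ⟨S.entry, S.neutral, hX, S.inner₁, h⟩
  · rcases B.right_leaf_cases h.1 with ⟨hE, -⟩ | ⟨-, h'⟩
    · exact not_inner_entry_exit hE hX h
    · exact inner_asymm h h'
  · exact absurd (B.mem_box _ _ (P.holes_subset _ h.1)) (by decide)
  · have hout := B.mem_outside_of_corner h.1
    rcases entry_or_exit h.1 hout.1 (by decide) with hgE | hgX
    · exact not_inner_entry_exit hgE hX h
    · rcases pred_cases h.1 (fun h => h.not_exit hgX) with h' | h' | h' | h' <;> norm_num at h'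
      · exact B.not_inner_exit_corner hgX hout.1 h'
      · exact hout.1.2 h'.1
      · exact inner_asymm h h'
      · exact hout.2.2 h'.1

theorem not_inner_right_center (B : P.BentAtSide) (hE : P.Entry (1, 0)) :
    ¬ P.inner (1, 0) (0, 0) := by
  intro h
  have S := B.passage
  have hw := WalkOfLength.cons h (.single S.inner₂)
  have hbox : ∀ i, -1 ≤ i → i ≤ 4 → (i, 0) ∈ P.box := fun i h₁ h₂ =>
    B.box_mem _ _ h₁ h₂ (by decide) (by decide)
  by_cases hg : (2, 0) ∈ P.holes
  · rcases B.right_leaf_cases hg with ⟨hgE, h'⟩ | ⟨hgX, h'⟩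
    · have h₃ : (3, 0) ∉ P.holes := fun h₃ => false_of_six (P := P)
        (s := {(-1, 0), (0, 0), (1, 0), (0, 1), (2, 0), (3, 0)})
        (by simpa using ⟨S.entry.1, S.neutral.1, B.right, S.exit.1, hg, h₃⟩) rfl
      exact false_of_walk hgE S.exit (.cons h' hw) ⟨hbox 3 (by decide) (by decide), h₃⟩
        B.above_left (by decide)
    · exact not_inner_entry_exit hE hgX h'
  · exact false_of_walk hE S.exit hw ⟨hbox 2 (by decide) (by decide), hg⟩ B.above_left (by decide)

theorem not_entry_right (B : P.BentAtSide) : ¬ P.Entry (1, 0) := by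
  intro hE
  rcases succ_cases hE.1 hE.not_exit with h | h | h | h <;> norm_num at h
  · exact B.not_inner_right_center hE h
  · rcases B.right_leaf_cases h.2.1 with ⟨-, h'⟩ | ⟨hX, -⟩
    · exact inner_asymm h h'
    · exact not_inner_entry_exit hE hX h
  · exact absurd (B.mem_box _ _ (P.holes_subset _ h.2.1)) (by decide)
  · have hout := B.mem_outside_of_corner h.2.1
    rcases entry_or_exit h.2.1 hout.1 (by decide) with hgE | hgX
    · rcases succ_cases h.2.1 hgE.not_exit with h' | h' | h' | h' <;> norm_num at h'
      · exact not_inner_entry_exit hgE B.passage.exit h'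
      · exact hout.1.2 h'.2.1
      · exact inner_asymm h h'
      · exact hout.2.2 h'.2.1
    · exact not_inner_entry_exit hE hgX h

theorem false (B : P.BentAtSide) : False := by
  obtain ⟨v, hv, hd⟩ : ∃ v ∈ P.outside, gridDist v (1, 0) = 1 := by
    by_contra! hall
    have h : ∀ v ∈ P.box, gridDist v (1, 0) = 1 → v ∈ P.holes := fun v hv hd =>
      mem_holes_of_mem_box hv fun h => hall v h hd
    have hg := h (2, 0) (B.box_mem _ _ (by decide) (by decide) (by decide) (by decide)) (by decide)
    have hg' := h (1, 1) (B.box_mem _ _ (by decide) (by decide) (by decide) (by decide)) (by decide)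
    rw [B.holes_eq_of_corner hg'] at hg
    simp at hg
  exact (entry_or_exit B.right hv hd).elim B.not_entry_right B.not_exit_right

end BentAtSide

namespace Passage

theorem false_of_bent_of_right (S : P.Passage (-1, 0) (0, 0) (0, 1)) (hb : (0, -1) ∉ P.box)
    (hR : (1, 0) ∈ P.holes) : False := by
  have hl := S.left_not_outside_of_bent hb hR
  by_cases hf : (-2, 0) ∈ P.box
  · exact S.false_of_bent_of_left_right hb hR (mem_holes_of_mem_box hf hl)
  obtain ⟨l, r, b, t, hlr, hbt, hbox⟩ := P.isLargeBox
  have h₀ := (hbox _ _).1 (P.holes_subset _ S.neutral.1)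
  have hl' := (hbox _ _).1 (P.holes_subset _ S.entry.1)
  have hf' := hf
  rw [hbox] at hb hf
  refine BentAtSide.false ⟨S, hR, ?_, fun i j h => by rw [hbox] at h; omega,
    fun i j _ _ _ _ => (hbox _ _).2 (by omega)⟩
  obtain ⟨-, u, hu, hue⟩ := S.entry
  rcases eq_neighbor_of_gridDist (P.gridDist_of_arc _ _ hue) with rfl | rfl | rfl | rfl
  · exact absurd hu.1 hf'
  · exact absurd S.neutral.1 hu.2
  · have := (hbox _ _).1 hu.1
    omega
  · exact hu

end Passage

/-- The bent path running around a corner of the box, with one more vertex of the pocket behind its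
entry. -/
structure BentAtCorner (P : Pocket) : Prop where
  passage : P.Passage (-1, 0) (0, 0) (0, 1)
  far_left : (-2, 0) ∈ P.holes
  mem_box : ∀ i j, (i, j) ∈ P.box → i ≤ 0 ∧ 0 ≤ j
  box_mem : ∀ i j, -5 ≤ i → i ≤ 0 → 0 ≤ j → j ≤ 5 → (i, j) ∈ P.box

namespace BentAtCorner

theorem holes_eq_insert (B : P.BentAtCorner) (hg : p ∈ P.holes)
    (hp : p ∉ ({(-1, 0), (0, 0), (0, 1), (-2, 0)} : Finset (ℤ × ℤ))) :
    P.holes = {p, (-1, 0), (0, 0), (0, 1), (-2, 0)} :=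
  holes_eq (by simpa using ⟨hg, B.passage.entry.1, B.passage.neutral.1, B.passage.exit.1,
    B.far_left⟩) (by rw [Finset.card_insert_of_notMem hp]; rfl)

theorem side_leaf_cases (B : P.BentAtCorner) (hg : p ∈ P.holes)
    (hp : p = (-3, 0) ∨ p = (-2, 1)) :
    P.Entry p ∧ P.inner p (-2, 0) ∨ P.Exit p ∧ P.inner (-2, 0) p := by
  have hbox := B.box_mem
  have hT := B.holes_eq_insert hg (by rcases hp with rfl | rfl <;> decide)
  rcases hp with rfl | rfl
  · exact leaf_cases hg (u := (-4, 0)) ⟨hbox _ _ (by decide) (by decide) (by decide) (by decide),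
      by simp [hT]⟩ (by decide) (by rw [hT]; decide)
  · exact leaf_cases hg (u := (-2, 2)) ⟨hbox _ _ (by decide) (by decide) (by decide) (by decide),
      by simp [hT]⟩ (by decide) (by rw [hT]; decide)

theorem not_exit_far_left (B : P.BentAtCorner) : ¬ P.Exit (-2, 0) := by
  intro hX
  have side : ∀ g, (g = (-3, 0) ∨ g = (-2, 1)) → ¬ P.inner g (-2, 0) := fun g hg h => by
    rcases B.side_leaf_cases h.1 hg with ⟨hE, -⟩ | ⟨-, h'⟩
    · exact not_inner_entry_exit hE hX h
    · exact inner_asymm h h'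
  rcases pred_cases B.far_left (fun h => h.not_exit hX) with h | h | h | h <;> norm_num at h
  · exact side _ (.inl rfl) h
  · exact not_inner_entry_exit B.passage.entry hX h
  · exact absurd (B.mem_box _ _ (P.holes_subset _ h.1)) (by decide)
  · exact side _ (.inr rfl) h

theorem inner_far_left (B : P.BentAtCorner) (hE : P.Entry (-2, 0)) :
    P.inner (-2, 0) (-1, 0) := by
  have side : ∀ g, (g = (-3, 0) ∨ g = (-2, 1)) → ¬ P.inner (-2, 0) g := fun g hg h => by
    rcases B.side_leaf_cases h.2.1 hg with ⟨-, h'⟩ | ⟨hX, -⟩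
    · exact inner_asymm h h'
    · exact not_inner_entry_exit hE hX h
  rcases succ_cases B.far_left hE.not_exit with h | h | h | h <;> norm_num at h
  · exact absurd h (side _ (.inl rfl))
  · exact h
  · exact absurd (B.mem_box _ _ (P.holes_subset _ h.2.1)) (by decide)
  · exact absurd h (side _ (.inr rfl))

theorem not_entry_far_left (B : P.BentAtCorner) : ¬ P.Entry (-2, 0) := by
  intro hE
  have S := B.passage
  have hw := WalkOfLength.cons (B.inner_far_left hE) (.cons S.inner₁ (.single S.inner₂))
  have hleft : ∀ i, -5 ≤ i → i ≤ 0 → (i, 0) ∈ P.box := fun i h₁ h₂ =>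
    B.box_mem _ _ h₁ h₂ (by decide) (by decide)
  have hup : ∀ j, 0 ≤ j → j ≤ 5 → (0, j) ∈ P.box := fun j h₁ h₂ =>
    B.box_mem _ _ (by decide) (by decide) h₁ h₂
  by_cases hl : (-3, 0) ∈ P.holes
  · have hT := B.holes_eq_insert hl (by decide)
    rcases B.side_leaf_cases hl (.inl rfl) with ⟨hgE, h⟩ | ⟨hgX, h⟩
    · exact false_of_walk hgE S.exit (.cons h hw) (u := (-4, 0)) (v := (0, 2))
        ⟨hleft _ (by decide) (by decide), by simp [hT]⟩
        ⟨hup _ (by decide) (by decide), by simp [hT]⟩ (by decide)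
    · exact not_inner_entry_exit hE hgX h
  have hu : (-3, 0) ∈ P.outside := ⟨hleft _ (by decide) (by decide), hl⟩
  by_cases hd : (0, 2) ∈ P.holes
  · have hT := B.holes_eq_insert hd (by decide)
    have hv : (0, 3) ∈ P.outside := ⟨hup _ (by decide) (by decide), by simp [hT]⟩
    rcases leaf_cases hd hv (q := (0, 1)) (by decide) (by rw [hT]; decide)
      with ⟨hgE, h⟩ | ⟨hgX, h⟩
    · exact not_inner_entry_exit hgE S.exit h
    · exact false_of_walk hE hgX (hw.snoc h) hu hv (by decide)
  · exact false_of_walk hE S.exit hw hu ⟨hup _ (by decide) (by decide), hd⟩ (by decide)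

theorem false (B : P.BentAtCorner) : False := by
  have hu : (-3, 0) ∈ P.outside ∨ (-2, 1) ∈ P.outside := by
    have h := B.holes_eq_insert (p := (-3, 0))
    by_cases hl : (-3, 0) ∈ P.holes
    · exact .inr ⟨B.box_mem _ _ (by decide) (by decide) (by decide) (by decide),
        by simp [h hl (by decide)]⟩
    · exact .inl ⟨B.box_mem _ _ (by decide) (by decide) (by decide) (by decide), hl⟩
  obtain h | h : P.Entry (-2, 0) ∨ P.Exit (-2, 0) := hu.elim
    (entry_or_exit B.far_left · (by decide)) (entry_or_exit B.far_left · (by decide))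
  exacts [B.not_entry_far_left h, B.not_exit_far_left h]

end BentAtCorner

namespace Passage

theorem isGridSymmetry_antidiagonal :
    IsGridSymmetry
      ((Equiv.prodComm ℤ ℤ).trans ((signedShift (-1) 0).prodCongr (signedShift (-1) 0))) :=
  isGridSymmetry_prodComm.trans (isGridSymmetry_signedShift _ _ _ _)

theorem mirror_of_bent (S : P.Passage (-1, 0) (0, 0) (0, 1)) :
    (P.reverse.comap isGridSymmetry_antidiagonal).Passage (-1, 0) (0, 0) (0, 1) :=
  S.reverse.comap _

theorem false_of_bent (S : P.Passage (-1, 0) (0, 0) (0, 1)) : False := by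
  by_cases hR : (1, 0) ∈ P.holes
  · refine S.false_of_bent_of_right (fun hb => ?_) hR
    exact S.not_cross_of_bent hR (S.neutral.neighbor_mem_holes hb (by decide))
  have hr : (1, 0) ∉ P.box := fun h => hR (S.neutral.neighbor_mem_holes h (by decide))
  by_cases hB : (0, -1) ∈ P.holes
  · exact S.mirror_of_bent.false_of_bent_of_right hr ((mem_holes_comap _).2 hB)
  have hb : (0, -1) ∉ P.box := fun h => hB (S.neutral.neighbor_mem_holes h (by decide))
  obtain ⟨l, r, b, t, hlr, hbt, hbox⟩ := P.isLargeBox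
  have h₀ := (hbox _ _).1 (P.holes_subset _ S.neutral.1)
  rw [hbox] at hr hb
  by_cases hl : (-2, 0) ∈ P.holes
  · exact BentAtCorner.false ⟨S, hl, fun i j h => by rw [hbox] at h; omega,
      fun i j _ _ _ _ => (hbox _ _).2 (by omega)⟩
  · have hd : (0, 2) ∈ P.holes := mem_holes_of_mem_box ((hbox _ _).2 (by omega))
      (S.not_outside_of_outside (u := (-2, 0)) ⟨(hbox _ _).2 (by omega), hl⟩ (by decide))
    have hbox' : ∀ i j, (i, j) ∈ (P.reverse.comap isGridSymmetry_antidiagonal).box ↔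
        l ≤ -j ∧ -j ≤ r ∧ b ≤ -i ∧ -i ≤ t := fun i j => by
      rw [← hbox]
      change (0 + ((-1 : ℤˣ) : ℤ) * j, 0 + ((-1 : ℤˣ) : ℤ) * i) ∈ P.box ↔ _
      simp
    exact BentAtCorner.false ⟨S.mirror_of_bent, (mem_holes_comap _).2 hd,
      fun i j h => by rw [hbox'] at h; omega, fun i j _ _ _ _ => (hbox' _ _).2 (by omega)⟩

theorem false_of_passage (S : P.Passage e p x) : False := by
  obtain ⟨φ, hφ, rfl, rfl⟩ := exists_isGridSymmetry_of_gridDist_eq_one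
    ((gridDist_comm _ _).trans (P.gridDist_of_arc _ _ S.inner₁.2.2))
  have hψ := (isGridSymmetry_signedShift (-1) 1 0 0).trans hφ
  obtain ⟨y, rfl⟩ :=
    (((signedShift (-1) 0).prodCongr (signedShift 1 0)).trans φ).surjective x
  have S' : (P.comap hψ).Passage (-1, 0) (0, 0) y := S.comap hψ
  rcases eq_neighbor_of_gridDist ((gridDist_comm _ _).trans
    ((P.comap hψ).gridDist_of_arc _ _ S'.inner₂.2.2)) with rfl | rfl | rfl | rfl
  · exact inner_asymm S'.inner₁ S'.inner₂
  · exact S'.false_of_straight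
  · have S'' : ((P.comap hψ).comap (isGridSymmetry_signedShift 1 (-1) 0 0)).Passage
      (-1, 0) (0, 0) (0, 1) := S'.comap _
    exact S''.false_of_bent
  · exact S'.false_of_bent

end Passage

end Pocket

namespace Pocket

variable {P : Pocket} {e x p q r : ℤ × ℤ}

/-! ### Longer paths from an entry to an exit -/

/-- A path of three arcs from an entry through two neutral vertices to a vertex that is not an
entry. -/
structure LongPassage (P : Pocket) (e p q r : ℤ × ℤ) : Prop where
  entry : P.Entry e
  neutral₁ : P.Neutral p
  neutral₂ : P.Neutral q
  not_entry : ¬ P.Entry r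
  inner₁ : P.inner e p
  inner₂ : P.inner p q
  inner₃ : P.inner q r

namespace LongPassage

theorem comap {φ : ℤ × ℤ ≃ ℤ × ℤ} (hφ : IsGridSymmetry φ)
    (S : P.LongPassage (φ e) (φ p) (φ q) (φ r)) : (P.comap hφ).LongPassage e p q r where
  entry := (entry_comap hφ).2 S.entry
  neutral₁ := neutral_comap hφ S.neutral₁
  neutral₂ := neutral_comap hφ S.neutral₂
  not_entry h := S.not_entry ((entry_comap hφ).1 h)
  inner₁ := inner_comap hφ S.inner₁
  inner₂ := inner_comap hφ S.inner₂
  inner₃ := inner_comap hφ S.inner₃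

theorem reverse (S : P.LongPassage e p q r) (hr : P.Exit r) : P.reverse.LongPassage r q p e where
  entry := hr
  neutral₁ := ⟨S.neutral₂.1, S.neutral₂.3, S.neutral₂.2⟩
  neutral₂ := ⟨S.neutral₁.1, S.neutral₁.3, S.neutral₁.2⟩
  not_entry := S.entry.not_exit
  inner₁ := inner_reverse.2 S.inner₃
  inner₂ := inner_reverse.2 S.inner₂
  inner₃ := inner_reverse.2 S.inner₁

theorem above_mem_holes (S : P.LongPassage e (0, 0) (1, 0) r) (hb : (0, -1) ∉ P.box) :
    (0, 1) ∈ P.holes ∧ (1, 1) ∈ P.holes := by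
  obtain ⟨l, r, b, t, hlr, hbt, hbox⟩ := P.isLargeBox
  have h₀ := (hbox _ _).1 (P.holes_subset _ S.neutral₁.1)
  have h₁ := (hbox _ _).1 (P.holes_subset _ S.neutral₂.1)
  rw [hbox] at hb
  exact ⟨S.neutral₁.neighbor_mem_holes ((hbox _ _).2 (by omega)) (by decide),
    S.neutral₂.neighbor_mem_holes ((hbox _ _).2 (by omega)) (by decide)⟩

theorem false_of_right (S : P.LongPassage e (0, 0) (1, 0) r) (hb : (0, -1) ∉ P.box)
    (h₂ : (2, 0) ∈ P.holes) : False := by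
  obtain ⟨hd₀, hd₁⟩ := S.above_mem_holes hb
  have hT : P.holes = {(0, 0), (1, 0), (0, 1), (1, 1), (2, 0)} :=
    holes_eq (by simpa using ⟨S.neutral₁.1, S.neutral₂.1, hd₀, hd₁, h₂⟩) rfl
  have hl : (-1, 0) ∉ P.box := fun h => by
    have := S.neutral₁.neighbor_mem_holes h (by decide)
    simp [hT] at this
  obtain ⟨l, r', b, t, _, _, hbox⟩ := P.isLargeBox
  have h₀ := (hbox _ _).1 (P.holes_subset _ S.neutral₁.1)
  rw [hbox] at hb hl
  have hout : ∀ i j, 0 ≤ i → i ≤ 5 → 0 ≤ j → j ≤ 5 → (i, j) ∉ P.holes → (i, j) ∈ P.outside :=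
    fun i j _ _ _ _ h => ⟨(hbox _ _).2 (by omega), h⟩
  have h₀₂ := hout 0 2 (by decide) (by decide) (by decide) (by decide) (by simp [hT])
  have h₁₂ := hout 1 2 (by decide) (by decide) (by decide) (by decide) (by simp [hT])
  have h₃₀ := hout 3 0 (by decide) (by decide) (by decide) (by decide) (by simp [hT])
  obtain rfl : e = (0, 1) := by
    have he := S.entry.1
    have hd := P.gridDist_of_arc _ _ S.inner₁.2.2
    have hq : e ≠ (1, 0) := by rintro rfl; exact inner_asymm S.inner₁ S.inner₂
    rw [hT] at he
    fin_cases he <;> first | rfl | exact absurd rfl hq | exact absurd hd (by decide)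
  have hw := WalkOfLength.cons S.inner₁ (.single S.inner₂)
  obtain rfl | rfl : r = (2, 0) ∨ r = (1, 1) := by
    have hr := S.inner₃.2.1
    have hd := P.gridDist_of_arc _ _ S.inner₃.2.2
    have hq : r ≠ (0, 0) := by rintro rfl; exact inner_asymm S.inner₂ S.inner₃
    rw [SetLike.mem_coe, hT] at hr
    fin_cases hr <;> first | exact absurd rfl hq | exact absurd hd (by decide) | simp
  · have hX := (entry_or_exit h₂ h₃₀ (by decide)).resolve_left S.not_entry
    exact false_of_walk S.entry hX (hw.snoc S.inner₃) h₀₂ h₃₀ (by decide)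
  · have hX := (entry_or_exit hd₁ h₁₂ (by decide)).resolve_left S.not_entry
    rcases leaf_cases h₂ h₃₀ (q := (1, 0)) (by decide) (by rw [hT]; decide)
      with ⟨hsE, h⟩ | ⟨hsX, h⟩
    · exact false_of_walk hsE hX (.cons h (.single S.inner₃)) h₃₀ h₁₂ (by decide)
    · exact false_of_walk S.entry hsX (hw.snoc h) h₀₂ h₃₀ (by decide)

theorem exit_of_left (S : P.LongPassage e (0, 0) (1, 0) r) (hb : (0, -1) ∉ P.box)
    (hl : (-1, 0) ∈ P.holes) : P.Exit r := by
  obtain ⟨hd₀, hd₁⟩ := S.above_mem_holes hb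
  have hT : P.holes = {(0, 0), (1, 0), (0, 1), (1, 1), (-1, 0)} :=
    holes_eq (by simpa using ⟨S.neutral₁.1, S.neutral₂.1, hd₀, hd₁, hl⟩) rfl
  obtain ⟨l, r', b, t, hlr, hbt, hbox⟩ := P.isLargeBox
  have h₀ := (hbox _ _).1 (P.holes_subset _ S.neutral₁.1)
  have h₁ := (hbox _ _).1 (P.holes_subset _ S.neutral₂.1)
  rw [hbox] at hb
  obtain rfl : r = (1, 1) := by
    have hr := S.inner₃.2.1
    have hd := P.gridDist_of_arc _ _ S.inner₃.2.2
    have hq : r ≠ (0, 0) := by rintro rfl; exact inner_asymm S.inner₂ S.inner₃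
    rw [SetLike.mem_coe, hT] at hr
    fin_cases hr <;> first | rfl | exact absurd rfl hq | exact absurd hd (by decide)
  exact (entry_or_exit hd₁ (u := (1, 2)) ⟨(hbox _ _).2 (by omega), by simp [hT]⟩
    (by decide)).resolve_left S.not_entry

theorem false_of_floor (S : P.LongPassage e (0, 0) (1, 0) r) (hb : (0, -1) ∉ P.box) : False := by
  obtain ⟨l, r', b, t, hlr, hbt, hbox⟩ := P.isLargeBox
  have h₀ := (hbox _ _).1 (P.holes_subset _ S.neutral₁.1)
  have h₁ := (hbox _ _).1 (P.holes_subset _ S.neutral₂.1)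
  by_cases h₂ : (2, 0) ∈ P.box
  · exact S.false_of_right hb (S.neutral₂.neighbor_mem_holes h₂ (by decide))
  have hb' : (1, -1) ∉ P.box := by rw [hbox] at hb ⊢; omega
  have hl : (-1, 0) ∈ P.holes := S.neutral₁.neighbor_mem_holes
    ((hbox _ _).2 (by rw [hbox] at h₂; omega)) (by decide)
  have hφ := isGridSymmetry_signedShift (-1) 1 1 0
  obtain ⟨r', rfl⟩ := ((signedShift (-1) 1).prodCongr (signedShift 1 0)).surjective r
  obtain ⟨e', rfl⟩ := ((signedShift (-1) 1).prodCongr (signedShift 1 0)).surjective e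
  have S' : (P.reverse.comap hφ).LongPassage r' (0, 0) (1, 0) e' :=
    (S.reverse (S.exit_of_left hb hl)).comap hφ
  exact S'.false_of_right hb' ((mem_holes_comap hφ).2 hl)

theorem below_notMem_box_of_above_mem_box (S : P.LongPassage e (0, 0) (1, 0) r)
    (ha : (0, 1) ∈ P.box) : (0, -1) ∉ P.box := by
  intro hb
  obtain ⟨l, r', b, t, _, _, hbox⟩ := P.isLargeBox
  have ha' := (hbox _ _).1 ha
  have hb' := (hbox _ _).1 hb
  have h₁ := (hbox _ _).1 (P.holes_subset _ S.neutral₂.1)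
  refine false_of_six (P := P) (s := {(0, 0), (1, 0), (0, 1), (1, 1), (0, -1), (1, -1)}) ?_ rfl
  simpa using ⟨S.neutral₁.1, S.neutral₂.1, S.neutral₁.neighbor_mem_holes ha (by decide),
    S.neutral₂.neighbor_mem_holes ((hbox 1 1).2 (by omega)) (by decide),
    S.neutral₁.neighbor_mem_holes hb (by decide),
    S.neutral₂.neighbor_mem_holes ((hbox 1 (-1)).2 (by omega)) (by decide)⟩

theorem false (S : P.LongPassage e p q r) : False := by
  obtain ⟨φ, hφ, rfl, rfl⟩ :=
    exists_isGridSymmetry_of_gridDist_eq_one (P.gridDist_of_arc _ _ S.inner₂.2.2)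
  obtain ⟨e, rfl⟩ := φ.surjective e
  obtain ⟨r, rfl⟩ := φ.surjective r
  have S' : (P.comap hφ).LongPassage e (0, 0) (1, 0) r := S.comap hφ
  by_cases hb : (0, -1) ∈ (P.comap hφ).box
  · have hψ := isGridSymmetry_signedShift 1 (-1) 0 0
    obtain ⟨e, rfl⟩ := ((signedShift 1 0).prodCongr (signedShift (-1) 0)).surjective e
    obtain ⟨r, rfl⟩ := ((signedShift 1 0).prodCongr (signedShift (-1) 0)).surjective r
    have S'' : ((P.comap hφ).comap hψ).LongPassage e (0, 0) (1, 0) r := S'.comap hψ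
    exact S''.false_of_floor (S'.below_notMem_box_of_above_mem_box · hb)
  · exact S'.false_of_floor hb

end LongPassage

theorem exists_walk_entry_exit (P : Pocket) :
    ∃ k e x, P.Entry e ∧ P.Exit x ∧ WalkOfLength P.inner k e x := by
  obtain ⟨p, hp⟩ := P.holes_nonempty
  obtain ⟨k, u, e, hu, hue, he, hw⟩ := P.exists_enter p hp
  obtain ⟨l, x, v, hv, hxv, hx, hw'⟩ := P.exists_leave p hp
  exact ⟨k + l, e, x, ⟨he, u, hu, hue⟩, ⟨hx, v, hv, hxv⟩, hw.trans hw'⟩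

theorem false (P : Pocket) : False := by
  classical
  have hex := P.exists_walk_entry_exit
  obtain ⟨e, x, he, hx, hw⟩ := Nat.find_spec hex
  have hmin : ∀ k e x, P.Entry e → P.Exit x → WalkOfLength P.inner k e x → Nat.find hex ≤ k :=
    fun k e x he hx hw => Nat.find_min' hex ⟨e, x, he, hx, hw⟩
  generalize Nat.find hex = k at hw hmin
  have hneutral : ∀ {i j p}, WalkOfLength P.inner (i + 1) e p → WalkOfLength P.inner (j + 1) p x →
      i + j + 2 = k → p ∈ P.holes → P.Neutral p := fun {i j p} h₁ h₂ hk hp =>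
    ⟨hp, fun h => by have := hmin _ _ _ h hx h₂; omega,
      fun h => by have := hmin _ _ _ he h h₁; omega⟩
  cases hw with
  | nil => exact he.not_exit hx
  | @cons k₁ _ p _ hep hw =>
    cases hw with
    | nil => exact not_inner_entry_exit he hx hep
    | @cons k₂ _ q _ hpq hw =>
      have hp := hneutral (.single hep) (.cons hpq hw) (by omega) hep.2.1
      cases hw with
      | nil => exact Passage.false_of_passage ⟨he, hp, hx, hep, hpq⟩
      | @cons k₃ _ r _ hqr hw =>
        have hq := hneutral (.cons hep (.single hpq)) (.cons hqr hw) (by omega) hpq.2.1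
        exact LongPassage.false ⟨he, hp, hq,
          fun h => by have := hmin _ _ _ h hx hw; omega, hep, hpq, hqr⟩

end Pocket

/-! ### The complement of a convex set -/

section GridCell

variable {n m : ℕ} {A : Fin n × Fin m → Fin n × Fin m → Prop} {C : Set (Fin n × Fin m)}

/-- The position of a grid vertex in the integer lattice, where shifts and reflections are
available. -/
def gridCell (v : Fin n × Fin m) : ℤ × ℤ := (v.1.val, v.2.val)

theorem gridCell_injective : Function.Injective (gridCell : Fin n × Fin m → ℤ × ℤ) := by
  rintro ⟨a, b⟩ ⟨c, d⟩ h
  simpa [gridCell, Fin.ext_iff] using h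

theorem gridGraph_adj_iff {u v : Fin n × Fin m} :
    (gridGraph n m).Adj u v ↔ gridDist (gridCell u) (gridCell v) = 1 := by
  simp only [gridGraph, SimpleGraph.boxProd_adj, SimpleGraph.pathGraph_adj, gridDist, gridCell,
    Fin.ext_iff]
  omega

theorem range_gridCell :
    Set.range (gridCell : Fin n × Fin m → ℤ × ℤ) =
      {p : ℤ × ℤ | 0 ≤ p.1 ∧ p.1 < n ∧ 0 ≤ p.2 ∧ p.2 < m} := by
  ext ⟨i, j⟩
  constructor
  · rintro ⟨v, h⟩
    have h₁ := v.1.isLt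
    have h₂ := v.2.isLt
    simp only [gridCell, Prod.mk.injEq] at h
    simp only [Set.mem_ofPred_eq]
    omega
  · rintro ⟨h₁, h₂, h₃, h₄⟩
    lift i to ℕ using h₁
    lift j to ℕ using h₃
    exact ⟨(⟨i, by simpa using h₂⟩, ⟨j, by simpa using h₄⟩), rfl⟩

theorem isLargeBox_range_gridCell (hn : 6 ≤ n) (hm : 6 ≤ m) :
    IsLargeBox (Set.range (gridCell : Fin n × Fin m → ℤ × ℤ)) := by
  refine ⟨0, n - 1, 0, m - 1, by omega, by omega, fun i j => ?_⟩
  rw [range_gridCell, Set.mem_ofPred_eq]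
  omega

theorem WalkOfLength.parity_gridCell (hO : IsOrientation (gridGraph n m) A) {k : ℕ}
    {u v : Fin n × Fin m} (h : WalkOfLength A k u v) :
    (u.1.val + u.2.val + k) % 2 = (v.1.val + v.2.val) % 2 := by
  induction h with
  | nil => rfl
  | cons hab _ ih =>
    have := gridGraph_adj_iff.1 (hO.1 _ _ hab)
    simp only [gridDist, gridCell] at this
    omega

/-- An arc relation transported to the integer lattice. -/
def cellArc (A : Fin n × Fin m → Fin n × Fin m → Prop) (p q : ℤ × ℤ) : Prop :=
  ∃ u v, A u v ∧ gridCell u = p ∧ gridCell v = q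

theorem cellArc_gridCell {u v : Fin n × Fin m} : cellArc A (gridCell u) (gridCell v) ↔ A u v :=
  ⟨fun ⟨_, _, h, hu, hv⟩ => gridCell_injective hu ▸ gridCell_injective hv ▸ h,
    fun h => ⟨u, v, h, rfl, rfl⟩⟩

theorem walkOfLength_within_image {S : Set (Fin n × Fin m)} {k : ℕ} {u v : Fin n × Fin m}
    (h : WalkOfLength (ArcsWithin A S) k u v) :
    WalkOfLength (ArcsWithin (cellArc A) (gridCell '' S)) k (gridCell u) (gridCell v) :=
  h.map gridCell fun _ _ h =>
    ⟨Set.mem_image_of_mem _ h.1, Set.mem_image_of_mem _ h.2.1, cellArc_gridCell.2 h.2.2⟩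

theorem exists_walkOfLength_of_within_image {S : Set (Fin n × Fin m)} {k : ℕ} {p q : ℤ × ℤ}
    (h : WalkOfLength (ArcsWithin (cellArc A) (gridCell '' S)) k p q) {u : Fin n × Fin m}
    (hu : gridCell u = p) : ∃ v, gridCell v = q ∧ WalkOfLength A k u v := by
  induction h generalizing u with
  | nil => exact ⟨u, hu, .nil u⟩
  | cons hab _ ih =>
    obtain ⟨u', w, huw, hu', hw⟩ := hab.2.2
    obtain rfl : u' = u := gridCell_injective (hu'.trans hu.symm)
    obtain ⟨v, hv, h⟩ := ih hw
    exact ⟨v, hv, .cons huw h⟩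

theorem StrongConnected.exists_leave (hS : StrongConnected A) (hC : C.Nonempty) :
    ∀ p ∈ gridCell '' Cᶜ, ∃ k x v, v ∈ gridCell '' C ∧ cellArc A x v ∧ x ∈ gridCell '' Cᶜ ∧
      WalkOfLength (ArcsWithin (cellArc A) (gridCell '' Cᶜ)) k p x := by
  rintro _ ⟨w, hw, rfl⟩
  obtain ⟨c, hc⟩ := hC
  obtain ⟨k, hk⟩ := dirReachable_iff_exists_walkOfLength.1 (hS w c)
  obtain ⟨i, x, v, -, hi, hx, hv, hxv, -⟩ := hk.exists_first_exit hw (not_not.2 hc)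
  exact ⟨i, gridCell x, gridCell v, ⟨v, not_not.1 hv, rfl⟩, cellArc_gridCell.2 hxv,
    ⟨x, hx, rfl⟩, walkOfLength_within_image hi⟩

theorem StrongConnected.exists_enter (hS : StrongConnected A) (hC : C.Nonempty) :
    ∀ p ∈ gridCell '' Cᶜ, ∃ k u e, u ∈ gridCell '' C ∧ cellArc A u e ∧ e ∈ gridCell '' Cᶜ ∧
      WalkOfLength (ArcsWithin (cellArc A) (gridCell '' Cᶜ)) k e p := by
  intro p hp
  have hflip : cellArc (fun x y => A y x) = fun p q => cellArc A q p := by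
    funext p q
    exact propext ⟨fun ⟨u, v, h, hu, hv⟩ => ⟨v, u, h, hv, hu⟩,
      fun ⟨u, v, h, hu, hv⟩ => ⟨v, u, h, hv, hu⟩⟩
  obtain ⟨k, x, v, hv, hxv, hx, h⟩ := hS.flip.exists_leave hC p hp
  rw [hflip] at hxv h
  exact ⟨k, v, x, hv, hxv, hx, h.flip_within⟩

theorem DConvex.exists_shortcut (hO : IsOrientation (gridGraph n m) A) (hS : StrongConnected A)
    (hC : DConvex A C) {k : ℕ} {p e x q : ℤ × ℤ} (hp : p ∈ gridCell '' C) (hpe : cellArc A p e)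
    (h : WalkOfLength (ArcsWithin (cellArc A) (gridCell '' Cᶜ)) k e x)
    (hx : x ∈ gridCell '' Cᶜ) (hxq : cellArc A x q) (hq : q ∈ gridCell '' C) :
    ∃ j ≤ k, WalkOfLength (ArcsWithin (cellArc A) (gridCell '' C)) j p q := by
  obtain ⟨u, hu, rfl⟩ := hp
  obtain ⟨v, hv, rfl⟩ := hq
  obtain ⟨z, hz, rfl⟩ := hx
  obtain ⟨u', e', hue, hu', rfl⟩ := hpe
  obtain rfl := gridCell_injective hu'
  obtain ⟨z', hz', hw⟩ := exists_walkOfLength_of_within_image h rfl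
  obtain rfl := gridCell_injective hz'
  have huz := WalkOfLength.cons hue hw
  have hzv := WalkOfLength.single (cellArc_gridCell.1 hxq)
  obtain ⟨j, hj, hshort⟩ := hC.exists_shorter_within hS hu hv hz huz hzv
  have h₁ := (huz.trans hzv).parity_gridCell hO
  have h₂ := (hshort.mono fun _ _ h => h.2.2).parity_gridCell hO
  exact ⟨j, by omega, walkOfLength_within_image hshort⟩

open Classical in
/-- The complement of a convex set as a pocket. -/
noncomputable def pocketOfDConvex (hn : 6 ≤ n) (hm : 6 ≤ m)
    (hO : IsOrientation (gridGraph n m) A) (hS : StrongConnected A) (hC : DConvex A C)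
    (hne : C ≠ Set.univ) (hcard : Cᶜ.ncard ≤ 5) : Pocket :=
  have hholes : ((Cᶜ.toFinset.image gridCell : Finset (ℤ × ℤ)) : Set (ℤ × ℤ)) =
      gridCell '' Cᶜ := by simp
  have hdiff : Set.range gridCell \ (gridCell '' Cᶜ) = gridCell '' C := by
    rw [← Set.image_univ, ← Set.image_sdiff gridCell_injective, ← Set.compl_eq_univ_sdiff,
      compl_compl]
  { box := Set.range gridCell
    holes := Cᶜ.toFinset.image gridCell
    arc := cellArc A
    isLargeBox := isLargeBox_range_gridCell hn hm
    holes_nonempty := by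
      rw [← Finset.coe_nonempty, hholes]
      exact (Set.nonempty_compl.2 hne).image _
    holes_subset := fun p hp =>
      Set.image_subset_range _ _ (hholes ▸ Finset.mem_coe.2 hp)
    card_holes_le := Finset.card_image_le.trans (by rwa [← Set.ncard_eq_toFinset_card'])
    arc_total := by
      rintro _ ⟨u, rfl⟩ _ ⟨v, rfl⟩ h
      simpa only [cellArc_gridCell] using hO.2.1 u v (gridGraph_adj_iff.2 h)
    arc_asymm := by
      rintro _ _ ⟨u, v, h, rfl, rfl⟩
      rw [cellArc_gridCell]
      exact hO.2.2 u v h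
    gridDist_of_arc := by
      rintro _ _ ⟨u, v, h, rfl, rfl⟩
      exact gridGraph_adj_iff.1 (hO.1 u v h)
    exists_enter := by
      simpa only [hdiff, ← Finset.mem_coe, hholes] using hS.exists_enter hC.1
    exists_leave := by
      simpa only [hdiff, ← Finset.mem_coe, hholes] using hS.exists_leave hC.1
    exists_shortcut := by
      simp only [hdiff, ← Finset.mem_coe, hholes]
      intro k u e x v hu hue _ h hx hxv hv
      exact hC.exists_shortcut hO hS hu hue h hx hxv hv }

theorem DConvex.six_le_ncard_compl (hn : 6 ≤ n) (hm : 6 ≤ m)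
    (hO : IsOrientation (gridGraph n m) A) (hS : StrongConnected A) (hC : DConvex A C)
    (hne : C ≠ Set.univ) : 6 ≤ Cᶜ.ncard := by
  by_contra! hcard
  exact (pocketOfDConvex hn hm hO hS hC hne (Nat.le_of_lt_succ hcard)).false

end GridCell

section SmallConvexSets

/-- In a finite set of lattice points each of which has two neighbours in the set, the
lexicographic minimum `(a, b)` is the corner of a square or of a longer cycle. -/
theorem exists_corner {T : Finset (ℤ × ℤ)} (hT : T.Nonempty)
    (h : ∀ p ∈ T, ∃ q ∈ T, ∃ r ∈ T, q ≠ r ∧ gridDist p q = 1 ∧ gridDist p r = 1) :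
    ∃ a b, (a, b) ∈ T ∧ (a + 1, b) ∈ T ∧ (a, b + 1) ∈ T ∧
      ∀ p ∈ T, a < p.1 ∨ a = p.1 ∧ b ≤ p.2 := by
  obtain ⟨⟨a, b⟩, hab, hmin⟩ := T.exists_min_image toLex hT
  have hmin : ∀ p ∈ T, a < p.1 ∨ a = p.1 ∧ b ≤ p.2 := fun p hp =>
    Prod.Lex.toLex_le_toLex.1 (hmin p hp)
  have key : ∀ p ∈ T, gridDist (a, b) p = 1 → p = (a + 1, b) ∨ p = (a, b + 1) := by
    rintro ⟨i, j⟩ hp hd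
    have := hmin _ hp
    simp only [gridDist, Prod.mk.injEq] at *
    omega
  obtain ⟨q, hq, r, hr, hqr, hdq, hdr⟩ := h _ hab
  rcases key q hq hdq with rfl | rfl <;> rcases key r hr hdr with rfl | rfl
  · exact absurd rfl hqr
  · exact ⟨a, b, hab, hq, hr, hmin⟩
  · exact ⟨a, b, hab, hr, hq, hmin⟩
  · exact absurd rfl hqr

theorem exists_neighbor_ne {T : Finset (ℤ × ℤ)}
    (h : ∀ p ∈ T, ∃ q ∈ T, ∃ r ∈ T, q ≠ r ∧ gridDist p q = 1 ∧ gridDist p r = 1)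
    {p : ℤ × ℤ} (hp : p ∈ T) (w : ℤ × ℤ) :
    ∃ i j, (i, j) ∈ T ∧ (i, j) ≠ w ∧ gridDist p (i, j) = 1 := by
  obtain ⟨q, hq, r, hr, hqr, hdq, hdr⟩ := h p hp
  by_cases hqw : q = w
  · exact ⟨r.1, r.2, hr, fun hrw => hqr (hqw.trans hrw.symm), hdr⟩
  · exact ⟨q.1, q.2, hq, hqw, hdq⟩

theorem card_eq_four_of_square {T : Finset (ℤ × ℤ)}
    (h : ∀ p ∈ T, ∃ q ∈ T, ∃ r ∈ T, q ≠ r ∧ gridDist p q = 1 ∧ gridDist p r = 1)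
    (h5 : T.card ≤ 5) {a b : ℤ}
    (hsub : {(a, b), (a + 1, b), (a, b + 1), (a + 1, b + 1)} ⊆ T) : T.card = 4 := by
  have hsquare : ∀ i j, (i, j) ∈ ({(a, b), (a + 1, b), (a, b + 1), (a + 1, b + 1)} : Finset _) ↔
      (a ≤ i ∧ i ≤ a + 1) ∧ b ≤ j ∧ j ≤ b + 1 := fun i j => by
    simp only [Finset.mem_insert, Finset.mem_singleton, Prod.mk.injEq]; omega
  have h4 : ({(a, b), (a + 1, b), (a, b + 1), (a + 1, b + 1)} : Finset (ℤ × ℤ)).card = 4 := by simp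
  generalize ({(a, b), (a + 1, b), (a, b + 1), (a + 1, b + 1)} : Finset (ℤ × ℤ)) = S at *
  by_contra hne
  obtain ⟨⟨i, j⟩, hz, hzS⟩ := Finset.exists_mem_notMem_of_card_lt_card
    (lt_of_le_of_ne (Finset.card_le_card hsub) (by rw [h4]; exact Ne.symm hne))
  have hT : insert (i, j) S = T := Finset.eq_of_subset_of_card_le (Finset.insert_subset hz hsub)
    (by rw [Finset.card_insert_of_notMem hzS, h4]; exact h5)
  have hnbr : ∀ p ∈ T, gridDist (i, j) p = 1 → p ∈ S := fun p hp hd => by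
    rw [← hT, Finset.mem_insert] at hp
    exact hp.resolve_left fun e => by simp [e, gridDist] at hd
  obtain ⟨⟨q, q'⟩, hq, ⟨r, r'⟩, hr, hqr, hdq, hdr⟩ := h _ hz
  have hqS := (hsquare _ _).1 (hnbr _ hq hdq)
  have hrS := (hsquare _ _).1 (hnbr _ hr hdr)
  simp only [hsquare, Prod.mk.injEq, gridDist, ne_eq] at hzS hqr hdq hdr
  omega

theorem card_eq_four_of_two_neighbors {T : Finset (ℤ × ℤ)} (hT : T.Nonempty)
    (h : ∀ p ∈ T, ∃ q ∈ T, ∃ r ∈ T, q ≠ r ∧ gridDist p q = 1 ∧ gridDist p r = 1)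
    (h5 : T.card ≤ 5) : T.card = 4 := by
  obtain ⟨a, b, h₀₀, h₁₀, h₀₁, hmin⟩ := exists_corner hT h
  by_cases h₁₁ : (a + 1, b + 1) ∈ T
  · exact card_eq_four_of_square h h5
      (by simpa [Finset.insert_subset_iff] using ⟨h₀₀, h₁₀, h₀₁, h₁₁⟩)
  exfalso
  have hnext : ∀ {p}, p ∈ T → ∀ w, ∃ i j, (i, j) ∈ T ∧ (i, j) ≠ w ∧ gridDist p (i, j) = 1 ∧
      (a < i ∨ a = i ∧ b ≤ j) ∧ ¬ (i = a + 1 ∧ j = b + 1) := fun hp w => by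
    obtain ⟨i, j, hij, hw, hd⟩ := exists_neighbor_ne h hp w
    exact ⟨i, j, hij, hw, hd, hmin _ hij, fun e => h₁₁ (by rwa [e.1, e.2] at hij)⟩
  have h₀₂ : (a, b + 2) ∈ T := by
    obtain ⟨i, j, hij, hw, hd, hm, hne⟩ := hnext h₀₁ (a, b)
    obtain ⟨rfl, rfl⟩ : i = a ∧ j = b + 2 := by
      simp only [gridDist, Prod.mk.injEq, ne_eq] at *; omega
    exact hij
  obtain ⟨i, j, hij, hw, hd, -, hne⟩ := hnext h₁₀ (a, b)
  obtain ⟨k, l, hkl, hw', hd', hm', -⟩ := hnext h₀₂ (a, b + 1)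
  have h6 : ({(a, b), (a + 1, b), (a, b + 1), (a, b + 2), (i, j), (k, l)} : Finset _).card = 6 := by
    simp only [gridDist, Prod.mk.injEq, ne_eq] at hw hd hne hw' hd' hm'
    repeat rw [Finset.card_insert_of_notMem]
    · rfl
    all_goals simp only [Finset.mem_insert, Finset.mem_singleton, Prod.mk.injEq]; omega
  have hle := Finset.card_le_card (show {(a, b), (a + 1, b), (a, b + 1), (a, b + 2), (i, j), (k, l)}
    ⊆ T by simpa [Finset.insert_subset_iff] using ⟨h₀₀, h₁₀, h₀₁, h₀₂, hij, hkl⟩)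
  omega

variable {n m : ℕ} {A : Fin n × Fin m → Fin n × Fin m → Prop} {C : Set (Fin n × Fin m)}

theorem DConvex.exists_two_neighbors (hO : IsOrientation (gridGraph n m) A) (hS : StrongConnected A)
    (hC : DConvex A C) (h2 : C.Nontrivial) {x : Fin n × Fin m} (hx : x ∈ C) :
    ∃ y ∈ C, ∃ z ∈ C, y ≠ z ∧ (gridGraph n m).Adj x y ∧ (gridGraph n m).Adj x z := by
  have hC' := hC.isStrongConvex hS h2
  obtain ⟨y, hy, hxy⟩ := hC'.exists_out hx
  obtain ⟨z, hz, hzx⟩ := hC'.exists_in hx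
  exact ⟨y, hy, z, hz, by rintro rfl; exact hO.2.2 _ _ hxy hzx, hO.1 _ _ hxy, (hO.1 _ _ hzx).symm⟩

theorem DConvex.ncard_eq_four (hO : IsOrientation (gridGraph n m) A) (hS : StrongConnected A)
    (hC : DConvex A C) (h2 : 2 ≤ C.ncard) (h5 : C.ncard ≤ 5) : C.ncard = 4 := by
  classical
  have hcard : (C.toFinset.image gridCell).card = C.ncard := by
    rw [Finset.card_image_of_injective _ gridCell_injective, Set.ncard_eq_toFinset_card']
  have hnt : C.Nontrivial := (Set.one_lt_ncard_iff_nontrivial).1 h2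
  rw [← hcard] at h5 ⊢
  refine card_eq_four_of_two_neighbors (by simpa using hC.1) ?_ h5
  simp only [Finset.forall_mem_image, Finset.exists_mem_image, Set.mem_toFinset]
  intro x hx
  obtain ⟨y, hy, z, hz, hyz, hxy, hxz⟩ := hC.exists_two_neighbors hO hS hnt hx
  exact ⟨y, hy, z, hz, gridCell_injective.ne hyz, gridGraph_adj_iff.1 hxy, gridGraph_adj_iff.1 hxz⟩

end SmallConvexSets

section Bounds

variable {n m k : ℕ}

theorem convexityNumber_mem [Fintype V] [Nontrivial V] (A : V → V → Prop) :
    ∃ C : Set V, DConvex A C ∧ C ≠ Set.univ ∧ C.ncard = convexityNumber A := by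
  refine Nat.sSup_mem (s := {k | ∃ C : Set V, DConvex A C ∧ C ≠ Set.univ ∧ C.ncard = k}) ?_ ?_
  · obtain ⟨v⟩ := (inferInstance : Nonempty V)
    exact ⟨1, {v}, dConvex_singleton v, Set.singleton_ne_univ v, Set.ncard_singleton v⟩
  · refine ⟨Nat.card V, ?_⟩
    rintro _ ⟨C, -, -, rfl⟩
    exact Set.ncard_le_card C

theorem bounds_of_mem_strongConvexitySpectrum (hn : 6 ≤ n) (hm : 6 ≤ m)
    (h : k ∈ strongConvexitySpectrum (gridGraph n m)) :
    1 ≤ k ∧ k + 6 ≤ n * m ∧ k ∉ ({2, 3, 5} : Set ℕ) := by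
  obtain ⟨A, hO, hS, rfl⟩ := h
  have : Nontrivial (Fin n) := Fin.nontrivial_iff_two_le.2 (by omega)
  have : Nonempty (Fin m) := ⟨⟨0, by omega⟩⟩
  obtain ⟨C, hC, hne, hcard⟩ := convexityNumber_mem A
  have hpos := (Set.ncard_pos C.toFinite).2 hC.1
  have hcompl := hC.six_le_ncard_compl hn hm hO hS hne
  have hsum := Set.ncard_add_ncard_compl C
  have hfour := hC.ncard_eq_four hO hS
  simp only [Nat.card_eq_fintype_card, Fintype.card_prod, Fintype.card_fin] at hsum
  simp only [Set.mem_insert_iff, Set.mem_singleton_iff]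
  omega

end Bounds

/-! ### Orientations of the grid in coordinates -/

section GridArc

variable {m n : ℕ} {right up : ℕ → ℕ → Prop} {i j i' j' k : ℕ} {p q x y : ℕ × ℕ}
  {C : Set (ℕ × ℕ)}

/-- The positions `(i, j)` of the grid with `m` rows and `n` columns, where `i` is the row. -/
def gridBox (m n : ℕ) : Finset (ℕ × ℕ) := Finset.range m ×ˢ Finset.range n

@[simp]
theorem mem_gridBox : (i, j) ∈ gridBox m n ↔ i < m ∧ j < n := by
  simp only [gridBox, Finset.mem_product, Finset.mem_range]

theorem card_gridBox : (gridBox m n).card = m * n := by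
  simp only [gridBox, Finset.card_product, Finset.card_range]

/-- The arcs of the grid with `m` rows and `n` columns in which the edge from `(i, j)` to
`(i, j + 1)` is directed away from `(i, j)` iff `right i j`, and the edge from `(i, j)` to
`(i + 1, j)` is directed away from `(i, j)` iff `up i j`. -/
inductive GridArc (m n : ℕ) (right up : ℕ → ℕ → Prop) : ℕ × ℕ → ℕ × ℕ → Prop
  | right {i j : ℕ} : i < m → j + 1 < n → right i j → GridArc m n right up (i, j) (i, j + 1)
  | left {i j : ℕ} : i < m → j + 1 < n → ¬ right i j → GridArc m n right up (i, j + 1) (i, j)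
  | up {i j : ℕ} : i + 1 < m → j < n → up i j → GridArc m n right up (i, j) (i + 1, j)
  | down {i j : ℕ} : i + 1 < m → j < n → ¬ up i j → GridArc m n right up (i + 1, j) (i, j)

theorem gridArc_iff : GridArc m n right up (i, j) (i', j') ↔
    i < m ∧ j < n ∧ i' < m ∧ j' < n ∧
      ((i' = i ∧ j' = j + 1 ∧ right i j) ∨ (i' = i ∧ j = j' + 1 ∧ ¬ right i j') ∨
        (j' = j ∧ i' = i + 1 ∧ up i j) ∨ (j' = j ∧ i = i' + 1 ∧ ¬ up i' j)) := by
  constructor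
  · rintro (⟨hi, hj, h⟩ | ⟨hi, hj, h⟩ | ⟨hi, hj, h⟩ | ⟨hi, hj, h⟩) <;>
      exact ⟨by omega, by omega, by omega, by omega, by simp [h]⟩
  · rintro ⟨hi, hj, hi', hj', ⟨rfl, rfl, h⟩ | ⟨rfl, rfl, h⟩ | ⟨rfl, rfl, h⟩ | ⟨rfl, rfl, h⟩⟩
    exacts [.right hi hj' h, .left hi hj h, .up hi' hj h, .down hi hj h]

/-- The distance of two positions in the undirected grid. -/
def manhattan (p q : ℕ × ℕ) : ℕ := Nat.dist p.1 q.1 + Nat.dist p.2 q.2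

theorem GridArc.manhattan_eq_one (h : GridArc m n right up p q) : manhattan p q = 1 := by
  rcases h with h | h | h | h <;> simp only [manhattan, Nat.dist] <;> omega

theorem GridArc.mem_gridBox (h : GridArc m n right up p q) :
    p ∈ gridBox m n ∧ q ∈ gridBox m n := by
  rcases h with h | h | h | h <;> simp only [_root_.mem_gridBox] <;> omega

theorem GridArc.asymm (h : GridArc m n right up p q) : ¬ GridArc m n right up q p := by
  intro h'
  rcases h with ⟨-, -, h⟩ | ⟨-, -, h⟩ | ⟨-, -, h⟩ | ⟨-, -, h⟩ <;>
    obtain ⟨-, -, -, -, ⟨_, _, h'⟩ | ⟨_, _, h'⟩ | ⟨_, _, h'⟩ | ⟨_, _, h'⟩⟩ := gridArc_iff.1 h' <;>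
    first | omega | contradiction

theorem GridArc.total (hp : p ∈ gridBox m n) (hq : q ∈ gridBox m n) (h : manhattan p q = 1) :
    GridArc m n right up p q ∨ GridArc m n right up q p := by
  obtain ⟨i, j⟩ := p
  obtain ⟨i', j'⟩ := q
  simp only [manhattan, Nat.dist] at h
  simp only [_root_.mem_gridBox] at hp hq
  obtain ⟨rfl, rfl⟩ | ⟨rfl, rfl⟩ | ⟨rfl, rfl⟩ | ⟨rfl, rfl⟩ :
      (i' = i ∧ j' = j + 1) ∨ (i' = i ∧ j = j' + 1) ∨ (j' = j ∧ i' = i + 1) ∨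
        (j' = j ∧ i = i' + 1) := by omega
  · exact (em (right i' j)).imp (.right hp.1 hq.2) (.left hp.1 hq.2)
  · exact ((em (right i' j')).imp (.right hp.1 hp.2) (.left hp.1 hp.2)).symm
  · exact (em (up i j')).imp (.up hq.1 hp.2) (.down hq.1 hp.2)
  · exact ((em (up i' j')).imp (.up hp.1 hp.2) (.down hp.1 hp.2)).symm

theorem WalkOfLength.manhattan_le (h : WalkOfLength (GridArc m n right up) k p q) :
    manhattan p q ≤ k ∧ (manhattan p q + k) % 2 = 0 := by
  induction h with
  | nil p => simp [manhattan]
  | cons h _ ih =>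
    have := h.manhattan_eq_one
    simp only [manhattan, Nat.dist] at *
    omega

theorem walkOfLength_right (hj : j ≤ j') (hi : i < m) (hj' : j' < n)
    (h : ∀ l, j ≤ l → l < j' → right i l) :
    WalkOfLength (GridArc m n right up) (j' - j) (i, j) (i, j') := by
  induction j', hj using Nat.le_induction with
  | base => rw [Nat.sub_self]; exact .nil _
  | succ l hl ih =>
    rw [Nat.sub_add_comm hl]
    exact (ih (by omega) fun l h₁ h₂ => h l h₁ (by omega)).snoc (.right hi hj' (h l hl (by omega)))

theorem walkOfLength_left (hj : j ≤ j') (hi : i < m) (hj' : j' < n)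
    (h : ∀ l, j ≤ l → l < j' → ¬ right i l) :
    WalkOfLength (GridArc m n right up) (j' - j) (i, j') (i, j) := by
  induction j', hj using Nat.le_induction with
  | base => rw [Nat.sub_self]; exact .nil _
  | succ l hl ih =>
    rw [Nat.sub_add_comm hl]
    exact .cons (.left hi hj' (h l hl (by omega)))
      (ih (by omega) fun l h₁ h₂ => h l h₁ (by omega))

theorem walkOfLength_up (hi : i ≤ i') (hj : j < n) (hi' : i' < m)
    (h : ∀ l, i ≤ l → l < i' → up l j) :
    WalkOfLength (GridArc m n right up) (i' - i) (i, j) (i', j) := by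
  induction i', hi using Nat.le_induction with
  | base => rw [Nat.sub_self]; exact .nil _
  | succ l hl ih =>
    rw [Nat.sub_add_comm hl]
    exact (ih (by omega) fun l h₁ h₂ => h l h₁ (by omega)).snoc (.up hi' hj (h l hl (by omega)))

theorem walkOfLength_down (hi : i ≤ i') (hj : j < n) (hi' : i' < m)
    (h : ∀ l, i ≤ l → l < i' → ¬ up l j) :
    WalkOfLength (GridArc m n right up) (i' - i) (i', j) (i, j) := by
  induction i', hi using Nat.le_induction with
  | base => rw [Nat.sub_self]; exact .nil _
  | succ l hl ih =>
    rw [Nat.sub_add_comm hl]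
    exact .cons (.down hi' hj (h l hl (by omega)))
      (ih (by omega) fun l h₁ h₂ => h l h₁ (by omega))

theorem WalkOfLength.cast {α : Type*} {r : α → α → Prop} {l : ℕ} {a b : α}
    (h : WalkOfLength r k a b) (hkl : k = l) : WalkOfLength r l a b := hkl ▸ h

namespace IsStrongConvex

theorem mem_gridBox (hC : IsStrongConvex (GridArc m n right up) C) (hp : p ∈ C) :
    p ∈ gridBox m n := by
  obtain ⟨q, -, hpq⟩ := hC.exists_out hp
  exact hpq.mem_gridBox.1

theorem finite (hC : IsStrongConvex (GridArc m n right up) C) : C.Finite :=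
  (gridBox m n).finite_toSet.subset fun _ hp => hC.mem_gridBox hp

theorem mem_of_manhattan {l : ℕ} (hC : IsStrongConvex (GridArc m n right up) C) (hp : p ∈ C)
    (hq : q ∈ C) (hpx : WalkOfLength (GridArc m n right up) k p x)
    (hxq : WalkOfLength (GridArc m n right up) l x q) (hkl : k + l = manhattan p q) : x ∈ C :=
  hC.dConvex.mem_of_shortest hp hq hpx hxq fun _ hj => hkl.trans_le hj.manhattan_le.1

theorem mem_of_arcs (hC : IsStrongConvex (GridArc m n right up) C) (hp : p ∈ C) (hq : q ∈ C)
    (hpx : GridArc m n right up p x) (hxq : GridArc m n right up x q) : x ∈ C := by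
  refine hC.mem_of_manhattan hp hq (.single hpx) (.single hxq) ?_
  have hpq : p ≠ q := by rintro rfl; exact hpx.asymm hxq
  have h₁ := hpx.manhattan_eq_one
  have h₂ := hxq.manhattan_eq_one
  simp only [manhattan, Nat.dist, ne_eq, Prod.ext_iff] at *
  omega

theorem mem_of_cycle (hC : IsStrongConvex (GridArc m n right up) C) (hp : p ∈ C) (hq : q ∈ C)
    (hpq : GridArc m n right up p q) (hqx : GridArc m n right up q x)
    (hxy : GridArc m n right up x y) (hyp : GridArc m n right up y p) : x ∈ C ∧ y ∈ C := by
  have hmin : ∀ j, WalkOfLength (GridArc m n right up) j q p → 3 ≤ j := by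
    intro j hj
    have h₁ := hj.manhattan_le
    have h₂ := hpq.manhattan_eq_one
    have h₃ : j ≠ 1 := by
      rintro rfl
      rcases hj with _ | ⟨h, h'⟩
      exact hpq.asymm (h'.eq_of_zero ▸ h)
    simp only [manhattan, Nat.dist] at *
    omega
  exact ⟨hC.dConvex.mem_of_shortest hq hp (.single hqx) (.cons hxy (.single hyp)) hmin,
    hC.dConvex.mem_of_shortest hq hp (.cons hqx (.single hxy)) (.single hyp) hmin⟩

end IsStrongConvex

end GridArc

section GridOrientation

variable {m n : ℕ} {right up : ℕ → ℕ → Prop}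

/-- The position of a vertex of `P_n □ P_m` in the grid with `m` rows and `n` columns. -/
def rowCol (v : Fin n × Fin m) : ℕ × ℕ := (v.2, v.1)

theorem rowCol_injective : Function.Injective (rowCol : Fin n × Fin m → ℕ × ℕ) := by
  rintro ⟨a, b⟩ ⟨c, d⟩ h
  simpa [rowCol, Fin.ext_iff, and_comm] using h

theorem range_rowCol : Set.range (rowCol : Fin n × Fin m → ℕ × ℕ) = gridBox m n := by
  ext ⟨i, j⟩
  rw [Finset.mem_coe, mem_gridBox]
  constructor
  · rintro ⟨v, hv⟩
    simp only [rowCol, Prod.mk.injEq] at hv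
    exact ⟨hv.1 ▸ v.2.isLt, hv.2 ▸ v.1.isLt⟩
  · rintro ⟨hi, hj⟩
    exact ⟨(⟨j, hj⟩, ⟨i, hi⟩), rfl⟩

theorem gridGraph_adj_iff_manhattan {u v : Fin n × Fin m} :
    (gridGraph n m).Adj u v ↔ manhattan (rowCol u) (rowCol v) = 1 := by
  simp only [gridGraph, SimpleGraph.boxProd_adj, SimpleGraph.pathGraph_adj, manhattan, rowCol,
    Nat.dist, Fin.ext_iff]
  omega

theorem rowCol_mem_gridBox (v : Fin n × Fin m) : rowCol v ∈ gridBox m n := by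
  rw [← Finset.mem_coe, ← range_rowCol]
  exact ⟨v, rfl⟩

theorem isOrientation_gridArc : IsOrientation (gridGraph n m)
    (fun u v => GridArc m n right up (rowCol u) (rowCol v)) :=
  ⟨fun _ _ h => gridGraph_adj_iff_manhattan.2 h.manhattan_eq_one,
    fun u v h => GridArc.total (rowCol_mem_gridBox u) (rowCol_mem_gridBox v)
      (gridGraph_adj_iff_manhattan.1 h), fun _ _ h => h.asymm⟩

theorem strongConnected_gridArc (hbox : (gridBox m n).Nonempty)
    (hout : ∀ p ∈ gridBox m n, ∃ q, GridArc m n right up p q)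
    (hterm : ∀ C, IsStrongConvex (GridArc m n right up) C →
      (∀ p ∈ C, ∀ q, GridArc m n right up p q → q ∈ C) → ↑(gridBox m n) ⊆ C) :
    StrongConnected (fun u v : Fin n × Fin m => GridArc m n right up (rowCol u) (rowCol v)) := by
  have hr : ∀ x y, GridArc m n right up x y → y ∈ Set.range (rowCol : Fin n × Fin m → ℕ × ℕ) :=
    fun _ _ h => range_rowCol.symm ▸ h.mem_gridBox.2
  have : Nonempty (Fin n × Fin m) := by
    rw [← Finset.coe_nonempty, ← range_rowCol] at hbox
    exact Set.range_nonempty_iff_nonempty.1 hbox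
  refine strongConnected_of_forall_isStrongConvex (fun u => ?_) fun C hC hclosed => ?_
  · obtain ⟨q, hq⟩ := hout _ (rowCol_mem_gridBox u)
    obtain ⟨v, rfl⟩ := hr _ _ hq
    exact ⟨v, fun h => (h ▸ hq).asymm (h ▸ hq), hq⟩
  · have hsub := hterm _ (hC.image rowCol_injective hr) ?_
    · refine Set.eq_univ_of_forall fun v => ?_
      exact (rowCol_injective.mem_set_image).1 (hsub (rowCol_mem_gridBox v))
    · rintro _ ⟨u, hu, rfl⟩ q huq
      obtain ⟨v, rfl⟩ := hr _ _ huq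
      exact ⟨v, hclosed u hu v huq, rfl⟩

theorem card_mem_strongConvexitySpectrum {S : Finset (ℕ × ℕ)} (hsub : S ⊂ gridBox m n)
    (hS : DConvex (GridArc m n right up) S)
    (hout : ∀ p ∈ gridBox m n, ∃ q, GridArc m n right up p q)
    (hterm : ∀ C, IsStrongConvex (GridArc m n right up) C →
      (∀ p ∈ C, ∀ q, GridArc m n right up p q → q ∈ C) → ↑(gridBox m n) ⊆ C)
    (hmax : ∀ C, IsStrongConvex (GridArc m n right up) C →
      C ⊆ S ∨ ↑(gridBox m n) ⊆ C ∨ C.ncard ≤ S.card) :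
    S.card ∈ strongConvexitySpectrum (gridGraph n m) := by
  have hr : ∀ x y, GridArc m n right up x y → y ∈ Set.range (rowCol : Fin n × Fin m → ℕ × ℕ) :=
    fun _ _ h => range_rowCol.symm ▸ h.mem_gridBox.2
  have hstrong := strongConnected_gridArc (hS.1.mono hsub.1) hout hterm
  have hrange : (S : Set (ℕ × ℕ)) ⊆ Set.range (rowCol : Fin n × Fin m → ℕ × ℕ) :=
    range_rowCol.symm ▸ hsub.1
  refine ⟨_, isOrientation_gridArc, hstrong, IsGreatest.csSup_eq ⟨⟨rowCol ⁻¹' S,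
    hS.preimage rowCol_injective hr hrange, fun h => ?_, ?_⟩, ?_⟩⟩
  · refine hsub.2 fun p hp => ?_
    obtain ⟨v, rfl⟩ := range_rowCol.symm.subset hp
    exact h.symm.subset (Set.mem_univ v)
  · rw [Set.ncard_preimage_of_injective_subset_range rowCol_injective hrange, Set.ncard_coe_finset]
  · rintro _ ⟨C, hC, hne, rfl⟩
    rw [← Set.ncard_image_of_injective C rowCol_injective]
    rcases C.subsingleton_or_nontrivial with h1 | h2
    · refine (Set.ncard_le_one_iff_subsingleton.2 (h1.image rowCol)).trans ?_
      exact Finset.card_pos.2 hS.1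
    rcases hmax _ ((hC.isStrongConvex hstrong h2).image rowCol_injective hr) with h | h | h
    · exact (Set.ncard_le_ncard h).trans_eq (Set.ncard_coe_finset S)
    · exact absurd (Set.eq_univ_of_forall fun v =>
        rowCol_injective.mem_set_image.1 (h (rowCol_mem_gridBox v))) hne
    · exact h

end GridOrientation

/-! ### Cyclic faces -/

section CyclicFace

variable {m n h a e : ℕ} {right up : ℕ → ℕ → Prop} {C : Set (ℕ × ℕ)} {p q : ℕ × ℕ}
  {i j i' j' : ℕ}

/-- The four corners of the unit square whose smallest corner is `(i, j)`. -/
def faceCorners (i j : ℕ) : Set (ℕ × ℕ) := Set.Icc (i, j) (i + 1, j + 1)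

theorem mem_faceCorners :
    (i', j') ∈ faceCorners i j ↔ (i ≤ i' ∧ j ≤ j') ∧ i' ≤ i + 1 ∧ j' ≤ j + 1 := Iff.rfl

theorem faceCorners_subset_iff : faceCorners i j ⊆ C ↔
    (i, j) ∈ C ∧ (i + 1, j) ∈ C ∧ (i, j + 1) ∈ C ∧ (i + 1, j + 1) ∈ C := by
  constructor
  · intro h
    refine ⟨h ?_, h ?_, h ?_, h ?_⟩ <;> rw [mem_faceCorners] <;> omega
  · rintro ⟨h₁, h₂, h₃, h₄⟩ ⟨x, y⟩ h
    rw [mem_faceCorners] at h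
    obtain rfl | rfl : x = i ∨ x = i + 1 := by omega
    all_goals obtain rfl | rfl : y = j ∨ y = j + 1 := by omega
    all_goals assumption

/-- The unit square of the grid whose smallest corner is `(i, j)` is bounded by a directed
4-cycle. -/
def IsCyclicFace (m n : ℕ) (right up : ℕ → ℕ → Prop) (i j : ℕ) : Prop :=
  i + 1 < m ∧ j + 1 < n ∧
    ((up i j ∧ right (i + 1) j ∧ ¬ up i (j + 1) ∧ ¬ right i j) ∨
      (right i j ∧ up i (j + 1) ∧ ¬ right (i + 1) j ∧ ¬ up i j))

theorem isCyclicFace_of_parity (hi : i + 1 < m) (hj : j + 1 < n)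
    (h₁ : right i j ↔ (i + j + e) % 2 = 1) (h₂ : right (i + 1) j ↔ (i + 1 + j + e) % 2 = 1)
    (h₃ : up i j ↔ (i + j + e) % 2 = 0) (h₄ : up i (j + 1) ↔ (i + (j + 1) + e) % 2 = 0) :
    IsCyclicFace m n right up i j := by
  refine ⟨hi, hj, ?_⟩
  rw [h₁, h₂, h₃, h₄]
  omega

theorem IsCyclicFace.exists_cycle (hF : IsCyclicFace m n right up i j) :
    (GridArc m n right up (i, j) (i + 1, j) ∧ GridArc m n right up (i + 1, j) (i + 1, j + 1) ∧
      GridArc m n right up (i + 1, j + 1) (i, j + 1) ∧ GridArc m n right up (i, j + 1) (i, j)) ∨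
    (GridArc m n right up (i, j) (i, j + 1) ∧ GridArc m n right up (i, j + 1) (i + 1, j + 1) ∧
      GridArc m n right up (i + 1, j + 1) (i + 1, j) ∧ GridArc m n right up (i + 1, j) (i, j)) := by
  obtain ⟨hi, hj, ⟨h₁, h₂, h₃, h₄⟩ | ⟨h₁, h₂, h₃, h₄⟩⟩ := hF
  · exact .inl ⟨.up hi (by omega) h₁, .right hi hj h₂, .down hi hj h₃, .left (by omega) hj h₄⟩
  · exact .inr ⟨.right (by omega) hj h₁, .up hi hj h₂, .left hi hj h₃, .down hi (by omega) h₄⟩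

theorem IsCyclicFace.exists_arc (hF : IsCyclicFace m n right up i j) (hp : p ∈ faceCorners i j) :
    ∃ q ∈ faceCorners i j, GridArc m n right up p q := by
  obtain ⟨x, y⟩ := p
  rw [mem_faceCorners] at hp
  have hx : x = i ∨ x = i + 1 := by omega
  have hy : y = j ∨ y = j + 1 := by omega
  rcases hF.exists_cycle with ⟨h₁, h₂, h₃, h₄⟩ | ⟨h₁, h₂, h₃, h₄⟩ <;>
    rcases hx with rfl | rfl <;> rcases hy with rfl | rfl <;>
    first
    | exact ⟨_, mem_faceCorners.2 (by omega), h₁⟩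
    | exact ⟨_, mem_faceCorners.2 (by omega), h₂⟩
    | exact ⟨_, mem_faceCorners.2 (by omega), h₃⟩
    | exact ⟨_, mem_faceCorners.2 (by omega), h₄⟩

theorem edge_mem_of_mem_faceCorners (hp : p ∈ faceCorners i j) (hq : q ∈ faceCorners i j)
    (hpq : manhattan p q = 1) (hpC : p ∈ C) (hqC : q ∈ C) :
    ((i, j) ∈ C ∧ (i + 1, j) ∈ C) ∨ ((i + 1, j) ∈ C ∧ (i + 1, j + 1) ∈ C) ∨
      ((i + 1, j + 1) ∈ C ∧ (i, j + 1) ∈ C) ∨ ((i, j + 1) ∈ C ∧ (i, j) ∈ C) := by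
  obtain ⟨x, y⟩ := p
  obtain ⟨x', y'⟩ := q
  rw [mem_faceCorners] at hp hq
  simp only [manhattan, Nat.dist] at hpq
  have hx : i = x ∨ i + 1 = x := by omega
  have hy : j = y ∨ j + 1 = y := by omega
  have hx' : i = x' ∨ i + 1 = x' := by omega
  have hy' : j = y' ∨ j + 1 = y' := by omega
  clear hp hq
  rcases hx with rfl | rfl <;> rcases hy with rfl | rfl <;> rcases hx' with rfl | rfl <;>
    rcases hy' with rfl | rfl <;>
    first | (simp only [hpC, hqC, and_self, true_or, or_true]; done) | omega

theorem IsStrongConvex.faceCorners_subset (hC : IsStrongConvex (GridArc m n right up) C)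
    (hF : IsCyclicFace m n right up i j) (hp : p ∈ faceCorners i j) (hq : q ∈ faceCorners i j)
    (hpq : manhattan p q = 1) (hpC : p ∈ C) (hqC : q ∈ C) : faceCorners i j ⊆ C := by
  have hcycle : ∀ {a b c d : ℕ × ℕ}, a ∈ C → b ∈ C → GridArc m n right up a b →
      GridArc m n right up b c → GridArc m n right up c d → GridArc m n right up d a →
      a ∈ C ∧ b ∈ C ∧ c ∈ C ∧ d ∈ C :=
    fun ha hb h₁ h₂ h₃ h₄ => ⟨ha, hb, hC.mem_of_cycle ha hb h₁ h₂ h₃ h₄⟩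
  rw [faceCorners_subset_iff]
  have hedge := edge_mem_of_mem_faceCorners hp hq hpq hpC hqC
  rcases hF.exists_cycle with ⟨h₁, h₂, h₃, h₄⟩ | ⟨h₁, h₂, h₃, h₄⟩
  · rcases hedge with ⟨hu, hv⟩ | ⟨hu, hv⟩ | ⟨hu, hv⟩ | ⟨hu, hv⟩
    · have := hcycle hu hv h₁ h₂ h₃ h₄; tauto
    · have := hcycle hu hv h₂ h₃ h₄ h₁; tauto
    · have := hcycle hu hv h₃ h₄ h₁ h₂; tauto
    · have := hcycle hu hv h₄ h₁ h₂ h₃; tauto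
  · rcases hedge with ⟨hu, hv⟩ | ⟨hu, hv⟩ | ⟨hu, hv⟩ | ⟨hu, hv⟩
    · have := hcycle hv hu h₄ h₁ h₂ h₃; tauto
    · have := hcycle hv hu h₃ h₄ h₁ h₂; tauto
    · have := hcycle hv hu h₂ h₃ h₄ h₁; tauto
    · have := hcycle hv hu h₁ h₂ h₃ h₄; tauto

theorem IsStrongConvex.faceCorners_subset_row (hC : IsStrongConvex (GridArc m n right up) C)
    (hj : j ≤ j') (hF : ∀ l, j ≤ l → l ≤ j' → IsCyclicFace m n right up i l) :
    faceCorners i j ⊆ C ↔ faceCorners i j' ⊆ C := by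
  induction j', hj using Nat.le_induction with
  | base => rfl
  | succ l hl ih =>
    have hp : ∀ k, k = l ∨ k = l + 1 →
        (i, l + 1) ∈ faceCorners i k ∧ (i + 1, l + 1) ∈ faceCorners i k := by
      simp only [mem_faceCorners]
      omega
    have hd : manhattan (i, l + 1) (i + 1, l + 1) = 1 := by simp [manhattan, Nat.dist]
    rw [ih fun k h₁ h₂ => hF k h₁ (by omega)]
    obtain ⟨⟨hp₁, hp₂⟩, hq₁, hq₂⟩ := And.intro (hp l (.inl rfl)) (hp (l + 1) (.inr rfl))
    exact ⟨fun h => hC.faceCorners_subset (hF _ (by omega) le_rfl) hq₁ hq₂ hd (h hp₁) (h hp₂),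
      fun h => hC.faceCorners_subset (hF _ hl (by omega)) hp₁ hp₂ hd (h hq₁) (h hq₂)⟩

theorem IsStrongConvex.faceCorners_subset_col (hC : IsStrongConvex (GridArc m n right up) C)
    (hi : i ≤ i') (hF : ∀ l, i ≤ l → l ≤ i' → IsCyclicFace m n right up l j) :
    faceCorners i j ⊆ C ↔ faceCorners i' j ⊆ C := by
  induction i', hi using Nat.le_induction with
  | base => rfl
  | succ l hl ih =>
    have hp : ∀ k, k = l ∨ k = l + 1 →
        (l + 1, j) ∈ faceCorners k j ∧ (l + 1, j + 1) ∈ faceCorners k j := by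
      simp only [mem_faceCorners]
      omega
    have hd : manhattan (l + 1, j) (l + 1, j + 1) = 1 := by simp [manhattan, Nat.dist]
    rw [ih fun k h₁ h₂ => hF k h₁ (by omega)]
    obtain ⟨⟨hp₁, hp₂⟩, hq₁, hq₂⟩ := And.intro (hp l (.inl rfl)) (hp (l + 1) (.inr rfl))
    exact ⟨fun h => hC.faceCorners_subset (hF _ (by omega) le_rfl) hq₁ hq₂ hd (h hp₁) (h hp₂),
      fun h => hC.faceCorners_subset (hF _ hl (by omega)) hp₁ hp₂ hd (h hq₁) (h hq₂)⟩

/-- All faces lying in the union of the rows `≥ h` and the columns `≥ a` are bounded by directed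
4-cycles, and every vertex of this union lies on such a face. -/
structure IsCyclicHook (m n : ℕ) (right up : ℕ → ℕ → Prop) (h a : ℕ) : Prop where
  height : h + 2 ≤ m
  width : a + 2 ≤ n ∨ a = n
  two_le : 2 ≤ n
  cyclic : ∀ {i j}, i + 1 < m → j + 1 < n → h ≤ i ∨ a ≤ j → IsCyclicFace m n right up i j

namespace IsCyclicHook

theorem exists_arc (hH : IsCyclicHook m n right up h a) (hp : (i, j) ∈ gridBox m n)
    (hij : h ≤ i ∨ a ≤ j) : ∃ q, GridArc m n right up (i, j) q := by
  obtain ⟨height, width, two_le, cyclic⟩ := hH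
  rw [mem_gridBox] at hp
  have hF := cyclic (i := min i (m - 2)) (j := min j (n - 2)) (by omega) (by omega) (by omega)
  obtain ⟨q, -, hq⟩ := hF.exists_arc (p := (i, j)) (mem_faceCorners.2 (by omega))
  exact ⟨q, hq⟩

theorem faceCorners_subset_iff_last (hH : IsCyclicHook m n right up h a)
    (hC : IsStrongConvex (GridArc m n right up) C) (hi : i + 1 < m) (hj : j + 1 < n)
    (hij : h ≤ i ∨ a ≤ j) : faceCorners i j ⊆ C ↔ faceCorners (m - 2) (n - 2) ⊆ C := by
  obtain ⟨height, _, two_le, cyclic⟩ := hH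
  rcases hij with hij | hij
  · rw [hC.faceCorners_subset_col (i := i) (i' := m - 2) (by omega)
        fun l _ _ => cyclic (by omega) (by omega) (by omega),
      hC.faceCorners_subset_row (j := j) (j' := n - 2) (by omega)
        fun l _ _ => cyclic (by omega) (by omega) (by omega)]
  · rw [hC.faceCorners_subset_row (j := j) (j' := n - 2) (by omega)
        fun l _ _ => cyclic (by omega) (by omega) (by omega),
      hC.faceCorners_subset_col (i := i) (i' := m - 2) (by omega)
        fun l _ _ => cyclic (by omega) (by omega) (by omega)]

/-- If neither the arc leaving `(i, j)` nor the one entering it stayed in the hook, both would use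
the only edge from `(i, j)` out of the hook. -/
theorem exists_edge (hC : IsStrongConvex (GridArc m n right up) C) (hp : (i, j) ∈ C)
    (hij : h ≤ i ∨ a ≤ j) : ∃ i' j', (h ≤ i' ∨ a ≤ j') ∧ (i', j') ∈ C ∧
      manhattan (i, j) (i', j') = 1 := by
  obtain ⟨⟨i₁, j₁⟩, hC₁, h₁⟩ := hC.exists_out hp
  obtain ⟨⟨i₂, j₂⟩, hC₂, h₂⟩ := hC.exists_in hp
  have hd₁ := h₁.manhattan_eq_one
  have hd₂ := h₂.manhattan_eq_one
  by_cases hij₁ : h ≤ i₁ ∨ a ≤ j₁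
  · exact ⟨i₁, j₁, hij₁, hC₁, hd₁⟩
  by_cases hij₂ : h ≤ i₂ ∨ a ≤ j₂
  · refine ⟨i₂, j₂, hij₂, hC₂, ?_⟩
    simp only [manhattan, Nat.dist] at hd₂ ⊢
    omega
  simp only [manhattan, Nat.dist] at hd₁ hd₂
  obtain ⟨rfl, rfl⟩ : i₁ = i₂ ∧ j₁ = j₂ := by omega
  exact absurd h₂ h₁.asymm

theorem subset (hH : IsCyclicHook m n right up h a)
    (hC : IsStrongConvex (GridArc m n right up) C) (hp : (i, j) ∈ C) (hij : h ≤ i ∨ a ≤ j)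
    (hq : (i', j') ∈ gridBox m n) (hij' : h ≤ i' ∨ a ≤ j') : (i', j') ∈ C := by
  obtain ⟨height, width, two_le, cyclic⟩ := id hH
  obtain ⟨x, y, hxy, hxyC, hd⟩ := exists_edge hC hp hij
  have hbox := hC.mem_gridBox hp
  have hbox' := hC.mem_gridBox hxyC
  rw [mem_gridBox] at hbox hbox' hq
  have hd' := hd
  simp only [manhattan, Nat.dist] at hd'
  have hlast : faceCorners (m - 2) (n - 2) ⊆ C := by
    rw [← hH.faceCorners_subset_iff_last hC (i := min (min i x) (m - 2))
      (j := min (min j y) (n - 2)) (by omega) (by omega) (by omega)]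
    refine hC.faceCorners_subset (cyclic (by omega) (by omega) (by omega)) ?_ ?_ hd hp hxyC <;>
      rw [mem_faceCorners] <;> omega
  refine (hH.faceCorners_subset_iff_last hC (i := min i' (m - 2)) (j := min j' (n - 2))
    (by omega) (by omega) (by omega)).2 hlast (mem_faceCorners.2 ?_)
  omega

end IsCyclicHook

theorem one_mem_strongConvexitySpectrum (hm : 2 ≤ m) (hn : 2 ≤ n) :
    1 ∈ strongConvexitySpectrum (gridGraph n m) := by
  have hH : IsCyclicHook m n (fun i j => (i + j) % 2 = 1) (fun i j => (i + j) % 2 = 0) 0 0 :=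
    { height := by omega
      width := by omega
      two_le := hn
      cyclic := fun hi hj _ => isCyclicFace_of_parity (e := 0) hi hj .rfl .rfl .rfl .rfl }
  have hall : ∀ C, IsStrongConvex (GridArc m n (fun i j => (i + j) % 2 = 1)
      fun i j => (i + j) % 2 = 0) C → ↑(gridBox m n) ⊆ C := by
    rintro C hC ⟨i, j⟩ hq
    obtain ⟨⟨x, y⟩, hp⟩ := hC.nontrivial.nonempty
    exact hH.subset hC hp (by omega) hq (by omega)
  rw [← Finset.card_singleton ((0, 0) : ℕ × ℕ)]
  refine card_mem_strongConvexitySpectrum ?_ ?_ (fun p hp => hH.exists_arc hp (by omega))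
    (fun C hC _ => hall C hC) (fun C hC => .inr (.inl (hall C hC)))
  · rw [Finset.ssubset_iff_exists_cons_subset]
    refine ⟨(0, 1), by simp, ?_⟩
    intro p
    simp only [Finset.cons_eq_insert, Finset.mem_insert, Finset.mem_singleton]
    rintro (rfl | rfl) <;> rw [mem_gridBox] <;> omega
  · rw [Finset.coe_singleton]
    exact dConvex_singleton _

end CyclicFace

/-! ### The region below a staircase -/

section Staircase

variable {m n h a k lo : ℕ} {c : ℕ → ℕ} {C : Set (ℕ × ℕ)} {i j i' j' : ℕ} {p q : ℕ × ℕ}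

/-- The positions of the grid whose row is below the height `c j` of their column `j`. -/
def belowProfile (m n : ℕ) (c : ℕ → ℕ) : Finset (ℕ × ℕ) := {p ∈ gridBox m n | p.1 < c p.2}

theorem mem_belowProfile : (i, j) ∈ belowProfile m n c ↔ (i < m ∧ j < n) ∧ i < c j := by
  rw [belowProfile, Finset.mem_filter, mem_gridBox]

theorem card_belowProfile (hc : ∀ j, c j ≤ m) :
    (belowProfile m n c).card = ∑ j ∈ Finset.range n, c j := by
  rw [belowProfile, Finset.card_filter, gridBox, Finset.sum_product_right]
  refine Finset.sum_congr rfl fun j _ => ?_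
  rw [← Finset.card_filter, ← Finset.card_range (c j)]
  congr 1
  ext i
  simp only [Finset.mem_filter, Finset.mem_range]
  have := hc j
  omega

/-- A nonincreasing profile whose first two columns have height `h`, whose first `a` columns have
height at least `lo`, and which vanishes from column `a` on. -/
structure IsStaircase (h a lo : ℕ) (c : ℕ → ℕ) : Prop where
  zero : c 0 = h
  one : c 1 = h
  antitone : Antitone c
  le_of_lt : ∀ {j}, j < a → lo ≤ c j
  eq_zero : ∀ {j}, a ≤ j → c j = 0

theorem sum_min_sub_mul (d t l : ℕ) :
    ∑ j ∈ Finset.range l, min d (t - j * d) = min t (l * d) := by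
  induction l with
  | zero => simp
  | succ l ih =>
    rw [Finset.sum_range_succ, ih, Nat.succ_mul]
    omega

theorem exists_isStaircase (ha : 2 ≤ a) (han : a ≤ n) (hlo : lo ≤ h)
    (hk : 2 * h + lo * (a - 2) ≤ k) (hk' : k ≤ h * a) :
    ∃ c, IsStaircase h a lo c ∧ ∑ j ∈ Finset.range n, c j = k := by
  obtain ⟨d, rfl⟩ := Nat.exists_eq_add_of_le hlo
  obtain ⟨b, rfl⟩ := Nat.exists_eq_add_of_le' ha
  obtain ⟨t, rfl⟩ : ∃ t, k = lo * (b + 2) + t :=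
    Nat.exists_eq_add_of_le (by rw [Nat.add_sub_cancel] at hk; nlinarith)
  have ht : 2 * d ≤ t := by rw [Nat.add_sub_cancel] at hk; nlinarith
  have ht' : t ≤ (b + 2) * d := by nlinarith
  refine ⟨fun j => if j < b + 2 then lo + min d (t - j * d) else 0, ⟨?_, ?_, ?_, ?_, ?_⟩, ?_⟩
  · simp only [Nat.zero_lt_succ, if_true]
    omega
  · rw [if_pos (by omega)]
    omega
  · intro j j' hj
    have := Nat.mul_le_mul_right d hj
    dsimp only
    split_ifs <;> omega
  · intro j hj
    rw [if_pos hj]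
    omega
  · intro j hj
    rw [if_neg (by omega)]
  · rw [← Finset.sum_subset (Finset.range_mono han)]
    · rw [Finset.sum_congr rfl fun j hj => if_pos (Finset.mem_range.1 hj),
        Finset.sum_add_distrib, sum_min_sub_mul, min_eq_left ht', Finset.sum_const,
        Finset.card_range, smul_eq_mul, Nat.mul_comm]
    · intro j _ hj
      rw [Finset.mem_range] at hj
      exact if_neg hj

namespace IsStaircase

theorem le_height (hc : IsStaircase h a lo c) (j : ℕ) : c j ≤ h :=
  hc.zero ▸ hc.antitone j.zero_le

theorem lt_width (hc : IsStaircase h a lo c) (hij : i < c j) : j < a := by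
  by_contra hj
  rw [hc.eq_zero (by omega)] at hij
  omega

end IsStaircase
/-- The horizontal edges of the staircase orientation: a checkerboard on the rows `≥ h` and the
columns `≥ a`; elsewhere row `0` and the horizontal edges not below the staircase point right,
the others left. -/
def stairRight (h a : ℕ) (c : ℕ → ℕ) (i j : ℕ) : Prop :=
  if h ≤ i ∨ a ≤ j then (i + j) % 2 = 1 else i = 0 ∨ c (j + 1) ≤ i

/-- The vertical edges of the staircase orientation: a checkerboard on the rows `≥ h` and the
columns `≥ a`; elsewhere column `0` points down and the other columns up. -/
def stairUp (h a : ℕ) (i j : ℕ) : Prop :=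
  if h ≤ i ∨ a ≤ j then (i + j) % 2 = 0 else j ≠ 0

theorem stairRight_of_lt (hi : i < h) (hj : j < a) :
    stairRight h a c i j ↔ i = 0 ∨ c (j + 1) ≤ i := by
  rw [stairRight, if_neg (by omega)]

theorem stairUp_of_lt (hi : i < h) (hj : j < a) : stairUp h a i j ↔ j ≠ 0 := by
  rw [stairUp, if_neg (by omega)]

/-- The arcs of the staircase orientation of the grid with `m` rows and `n` columns. -/
abbrev StairArc (m n h a : ℕ) (c : ℕ → ℕ) : ℕ × ℕ → ℕ × ℕ → Prop :=
  GridArc m n (stairRight h a c) (stairUp h a)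

/-- A staircase of columns of height at least two which leaves room in the grid for a cyclic
hook above it and to its right, where the part to its right may be empty. -/
structure IsGridStaircase (m n h a : ℕ) (c : ℕ → ℕ) : Prop extends IsStaircase h a 2 c where
  two_le_height : 2 ≤ h
  height_add_two_le : h + 2 ≤ m
  two_le_width : 2 ≤ a
  width : a + 2 ≤ n ∨ a = n

namespace IsGridStaircase

theorem isCyclicHook (hc : IsGridStaircase m n h a c) :
    IsCyclicHook m n (stairRight h a c) (stairUp h a) h a where
  height := hc.height_add_two_le
  width := hc.width
  two_le := by have := hc.two_le_width; have := hc.width; omega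
  cyclic hi hj hij := by
    refine isCyclicFace_of_parity (e := 0) hi hj ?_ ?_ ?_ ?_ <;>
      first
      | rw [stairRight, if_pos (by omega), add_zero]
      | rw [stairUp, if_pos (by omega), add_zero]

theorem exists_arc (hc : IsGridStaircase m n h a c) (hp : p ∈ gridBox m n) :
    ∃ q, StairArc m n h a c p q := by
  obtain ⟨i, j⟩ := p
  by_cases hij : h ≤ i ∨ a ≤ j
  · exact hc.isCyclicHook.exists_arc hp hij
  push Not at hij
  have := hc.height_add_two_le
  have := hc.two_le_width
  have := hc.width
  rw [mem_gridBox] at hp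
  rcases Nat.eq_zero_or_pos j with rfl | hj
  · rcases Nat.eq_zero_or_pos i with rfl | hi
    · exact ⟨_, .right hp.1 (by omega) ((stairRight_of_lt hij.1 hij.2).2 (.inl rfl))⟩
    · obtain ⟨i, rfl⟩ := Nat.exists_eq_add_of_le' hi
      exact ⟨_, .down hp.1 hp.2 fun h => (stairUp_of_lt (by omega) hij.2).1 h rfl⟩
  · exact ⟨_, .up (by omega) hp.2 ((stairUp_of_lt hij.1 hij.2).2 hj.ne')⟩

theorem eq_of_arc_of_le_of_lt (hc : IsGridStaircase m n h a c)
    (hA : StairArc m n h a c (i, j) (i', j')) (hij : c j ≤ i) (hij' : i' < c j') :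
    (i = h ∧ j = 0) ∧ i' = h - 1 ∧ j' = 0 := by
  have hj' := hc.lt_width hij'
  have hh := hc.le_height j'
  have h0 := hc.zero
  obtain ⟨-, -, -, -, ⟨rfl, rfl, -⟩ | ⟨rfl, rfl, hdir⟩ | ⟨rfl, rfl, -⟩ | ⟨rfl, rfl, hdir⟩⟩ :=
    gridArc_iff.1 hA
  · have := hc.antitone j.le_succ
    simp only [Nat.succ_eq_add_one] at this
    omega
  · rw [stairRight_of_lt (by omega) (by omega)] at hdir
    omega
  · omega
  · rw [stairUp_of_lt (by omega) (by omega), not_not] at hdir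
    subst hdir
    omega

theorem walkOfLength_entry (hc : IsGridStaircase m n h a c) (hi : 1 ≤ i) (hj : 1 ≤ j)
    (hij : i < c j) :
    WalkOfLength (StairArc m n h a c) (manhattan (i, j) (h - 1, 0)) (i, j) (h - 1, 0) := by
  have hja := hc.lt_width hij
  have hh := hc.le_height j
  have h1 := hc.one
  have := hc.two_le_height
  have := hc.height_add_two_le
  have := hc.width
  have hleft : WalkOfLength (StairArc m n h a c) (j - 1) (i, j) (i, 1) := by
    refine walkOfLength_left hj (by omega) (by omega) fun l _ hl => ?_
    rw [stairRight_of_lt (by omega) (by omega)]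
    have := hc.antitone (show l + 1 ≤ j by omega)
    omega
  have hup : WalkOfLength (StairArc m n h a c) (h - 1 - i) (i, 1) (h - 1, 1) :=
    walkOfLength_up (by omega) (by omega) (by omega) fun l _ _ =>
      (stairUp_of_lt (by omega) (by omega)).2 one_ne_zero
  have hlast : StairArc m n h a c (h - 1, 1) (h - 1, 0) := by
    refine .left (by omega) (by omega) ?_
    rw [stairRight_of_lt (by omega) (by omega), Nat.zero_add]
    omega
  refine ((hleft.trans hup).snoc hlast).cast ?_
  simp only [manhattan, Nat.dist]
  omega

theorem exists_detour (hc : IsGridStaircase m n h a c) (hA : StairArc m n h a c (i, j) q)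
    (hij : i < c j) (hq : c q.2 ≤ q.1) :
    ∃ d, WalkOfLength (StairArc m n h a c) d (i, j) (h - 1, 0) ∧
      ∀ l, WalkOfLength (StairArc m n h a c) l q (h, 0) → d < l + 2 := by
  obtain ⟨i', j'⟩ := q
  have hja := hc.lt_width hij
  have hh := hc.le_height j
  have := hc.height_add_two_le
  refine ⟨manhattan (i, j) (h - 1, 0), ?_, fun l hl => ?_⟩
  · have hj : 1 ≤ j := by
      by_contra hj
      obtain rfl : j = 0 := by omega
      have h0 := hc.zero
      have h1 := hc.one
      obtain ⟨-, -, -, -, ⟨rfl, rfl, -⟩ | ⟨-, hj, -⟩ | ⟨rfl, rfl, hdir⟩ | ⟨rfl, rfl, -⟩⟩ :=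
        gridArc_iff.1 hA
      · simp only [Nat.zero_add] at hq
        omega
      · omega
      · exact (stairUp_of_lt (by omega) hja).1 hdir rfl
      · simp only at hq
        omega
    rcases Nat.eq_zero_or_pos i with rfl | hi
    · have := hc.le_of_lt hja
      have := hc.width
      have hup : StairArc m n h a c (0, j) (1, j) :=
        .up (by omega) (by omega) ((stairUp_of_lt (by omega) hja).2 (by omega))
      refine (WalkOfLength.cons hup (hc.walkOfLength_entry le_rfl hj (by omega))).cast ?_
      simp only [manhattan, Nat.dist]
      omega
    · exact hc.walkOfLength_entry hi hj hij
  · have h₁ := hl.manhattan_le.1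
    have h₂ := hA.manhattan_eq_one
    have := hc.two_le_height
    simp only [manhattan, Nat.dist] at *
    omega

theorem dConvex (hc : IsGridStaircase m n h a c) :
    DConvex (StairArc m n h a c) (belowProfile m n c) := by
  have hmem : ∀ {p}, p ∈ gridBox m n → (p ∉ (belowProfile m n c : Set (ℕ × ℕ)) ↔ c p.2 ≤ p.1) := by
    rintro ⟨i, j⟩ hp
    rw [Finset.mem_coe, mem_belowProfile, ← mem_gridBox, and_iff_right hp, not_lt]
  have h0 := hc.zero
  have := hc.two_le_height
  have := hc.height_add_two_le
  have := hc.two_le_width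
  have := hc.width
  refine dConvex_of_unique_entry (t := (h, 0)) (z := (h - 1, 0)) ⟨(0, 0), ?_⟩ ?_ ?_
  · rw [Finset.mem_coe, mem_belowProfile]
    omega
  · rintro ⟨i, j⟩ ⟨i', j'⟩ hA hp hq
    rw [hmem hA.mem_gridBox.1] at hp
    simpa only [Prod.mk.injEq] using hc.eq_of_arc_of_le_of_lt hA hp (mem_belowProfile.1 hq).2
  · rintro ⟨i, j⟩ q hA hp hq
    exact hc.exists_detour hA (mem_belowProfile.1 hp).2 ((hmem hA.mem_gridBox.2).1 hq)

/-- Off the hook and the staircase every arc points right or up, away from the corner. -/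
theorem exists_mem_hook (hc : IsGridStaircase m n h a c)
    (hC : IsStrongConvex (StairArc m n h a c) C) (hp : (i, j) ∈ C) (hij : c j ≤ i) :
    ∃ x y, (x, y) ∈ C ∧ (h ≤ x ∨ a ≤ y) := by
  obtain ⟨⟨x, y⟩, ⟨hxyC, hxy⟩, hmax⟩ := Set.exists_max_image {p ∈ C | c p.2 ≤ p.1}
    (fun p => p.1 + p.2) (hC.finite.sep _) ⟨(i, j), hp, hij⟩
  refine ⟨x, y, hxyC, ?_⟩
  by_contra! hout
  obtain ⟨⟨x', y'⟩, hC', hA⟩ := hC.exists_out hxyC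
  have h0 := hc.zero
  have hmax' := hmax (x', y')
  simp only [Set.mem_ofPred_eq, hC', true_and] at hxy hmax'
  obtain ⟨-, -, -, -, ⟨rfl, rfl, -⟩ | ⟨rfl, rfl, hdir⟩ | ⟨rfl, rfl, -⟩ | ⟨rfl, rfl, hdir⟩⟩ :=
    gridArc_iff.1 hA
  · have := hc.antitone y.le_succ
    simp only [Nat.succ_eq_add_one] at this
    omega
  · rw [stairRight_of_lt (by omega) (by omega)] at hdir
    omega
  · omega
  · rw [stairUp_of_lt (by omega) (by omega), not_not] at hdir
    subst hdir
    omega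

theorem hook_subset (hc : IsGridStaircase m n h a c)
    (hC : IsStrongConvex (StairArc m n h a c) C) (hp : (i, j) ∈ C) (hij : c j ≤ i)
    (hq : (i', j') ∈ gridBox m n) (hij' : h ≤ i' ∨ a ≤ j') : (i', j') ∈ C := by
  obtain ⟨x, y, hxy, hhook⟩ := hc.exists_mem_hook hC hp hij
  exact hc.isCyclicHook.subset hC hxy hhook hq hij'

theorem walkOfLength_row_zero (hc : IsGridStaircase m n h a c) (hj : j ≤ a) (hjn : j < n) :
    WalkOfLength (StairArc m n h a c) j (0, 0) (0, j) := by
  have := hc.two_le_height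
  have := hc.height_add_two_le
  exact walkOfLength_right j.zero_le (by omega) hjn fun l _ _ =>
    (stairRight_of_lt (by omega) (by omega)).2 (.inl rfl)

theorem walkOfLength_col_zero (hc : IsGridStaircase m n h a c) (hii : i ≤ i') (hi : i' ≤ h) :
    WalkOfLength (StairArc m n h a c) (i' - i) (i', 0) (i, 0) := by
  have := hc.height_add_two_le
  have := hc.two_le_width
  have := hc.width
  refine walkOfLength_down hii (by omega) (by omega) fun l _ _ => ?_
  rw [stairUp_of_lt (by omega) (by omega), not_not]

theorem walkOfLength_col (hc : IsGridStaircase m n h a c) (hii : i ≤ i') (hi : i' ≤ h)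
    (hj : 1 ≤ j) (hja : j < a) : WalkOfLength (StairArc m n h a c) (i' - i) (i, j) (i', j) := by
  have := hc.height_add_two_le
  have := hc.width
  exact walkOfLength_up hii (by omega) (by omega) fun l _ _ =>
    (stairUp_of_lt (by omega) hja).2 (by omega)

theorem gridBox_subset (hc : IsGridStaircase m n h a c)
    (hC : IsStrongConvex (StairArc m n h a c) C)
    (hhook : ∀ i j, (i, j) ∈ gridBox m n → h ≤ i ∨ a ≤ j → (i, j) ∈ C)
    (hcol : ∀ i, i < h → (i, 0) ∈ C) : ↑(gridBox m n) ⊆ C := by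
  rintro ⟨i, j⟩ hp
  by_cases hij : h ≤ i ∨ a ≤ j
  · exact hhook i j hp hij
  push Not at hij
  rcases Nat.eq_zero_or_pos j with rfl | hj
  · exact hcol i hij.1
  have := hc.height_add_two_le
  rw [Finset.mem_coe, mem_gridBox] at hp
  refine hC.mem_of_manhattan (hcol 0 (by omega))
    (hhook h j (mem_gridBox.2 (by omega)) (.inl le_rfl))
    ((hc.walkOfLength_row_zero (by omega) hp.2).trans
      (hc.walkOfLength_col (i := 0) (i' := i) (by omega) (by omega) hj hij.2))
    (hc.walkOfLength_col hij.1.le le_rfl hj hij.2) ?_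
  simp only [manhattan, Nat.dist]
  omega

theorem col_zero_subset_of_width_ne (hc : IsGridStaircase m n h a c)
    (hC : IsStrongConvex (StairArc m n h a c) C)
    (hhook : ∀ i j, (i, j) ∈ gridBox m n → h ≤ i ∨ a ≤ j → (i, j) ∈ C) (han : a ≠ n)
    (hi : i < h) : (i, 0) ∈ C := by
  have := hc.height_add_two_le
  have := hc.width
  refine hC.mem_of_manhattan (hhook h 0 (mem_gridBox.2 (by omega)) (.inl le_rfl))
    (hhook 0 a (mem_gridBox.2 (by omega)) (.inr le_rfl))
    (hc.walkOfLength_col_zero hi.le le_rfl)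
    ((hc.walkOfLength_col_zero i.zero_le hi.le).trans
      (hc.walkOfLength_row_zero le_rfl (by omega))) ?_
  simp only [manhattan, Nat.dist]
  omega

/-- Once entered at `(h - 1, 0)`, column `0` can only be left from `(0, 0)`. -/
theorem col_zero_subset_of_mem (hc : IsGridStaircase m n h a c)
    (hC : IsStrongConvex (StairArc m n h a c) C) (hmem : (h - 1, 0) ∈ C) (hi : i ≤ h - 1) :
    (i, 0) ∈ C := by
  have h1 := hc.one
  have := hc.two_le_height
  have := hc.two_le_width
  induction hi using Nat.decreasingInduction with
  | self => exact hmem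
  | of_succ i hi ih =>
    obtain ⟨⟨x, y⟩, hxyC, hA⟩ := hC.exists_out ih
    obtain ⟨-, -, -, -, ⟨rfl, rfl, hdir⟩ | ⟨-, hj, -⟩ | ⟨rfl, rfl, hdir⟩ | ⟨rfl, hx, -⟩⟩ :=
      gridArc_iff.1 hA
    · rw [stairRight_of_lt (by omega) (by omega), Nat.zero_add] at hdir
      omega
    · omega
    · exact absurd rfl ((stairUp_of_lt (by omega) (by omega)).1 hdir)
    · obtain rfl : i = x := by omega
      exact hxyC

theorem col_zero_subset_of_mem_belowProfile (hc : IsGridStaircase m n h a c)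
    (hC : IsStrongConvex (StairArc m n h a c) C) (hmem : (h, 0) ∈ C) (hp : (i', j') ∈ C)
    (hij' : i' < c j') (hi : i < h) : (i, 0) ∈ C := by
  have h0 := hc.zero
  obtain ⟨⟨x, y⟩, -, hxy, ⟨x', y'⟩, hC', hxy', hA⟩ :=
    hC.exists_arc_leaving (X := {p | c p.2 ≤ p.1}) hmem (by simp [h0]) hp (by simpa using hij')
  simp only [Set.mem_ofPred_eq, not_le] at hxy hxy'
  obtain ⟨-, rfl, rfl⟩ := hc.eq_of_arc_of_le_of_lt hA hxy hxy'
  exact hc.col_zero_subset_of_mem hC hC' (by omega)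

/-- Off the staircase all arcs between rows below `h` point away from the corner, so a vertex of
`C` there that is closest to the corner would have no arc of `C` entering it. -/
theorem height_le_of_forall_le (hc : IsGridStaircase m n h n c)
    (hC : IsStrongConvex (StairArc m n h n c) C) (hout : ∀ p ∈ C, c p.2 ≤ p.1)
    (hp : (i, j) ∈ C) : h ≤ i := by
  by_contra! hi
  obtain ⟨⟨x, y⟩, ⟨hxyC, hx⟩, hmin⟩ := Set.exists_min_image {p ∈ C | p.1 < h}
    (fun p => p.1 + p.2) (hC.finite.sep _) ⟨(i, j), hp, hi⟩
  obtain ⟨⟨x', y'⟩, hC', hA⟩ := hC.exists_in hxyC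
  have h0 := hc.zero
  have hxy := hout _ hxyC
  have hxy' := hout _ hC'
  have hmin' := hmin (x', y')
  simp only [Set.mem_ofPred_eq, hC', true_and] at hx hxy hxy' hmin'
  obtain ⟨-, -, -, hyn, ⟨rfl, rfl, -⟩ | ⟨rfl, rfl, hdir⟩ | ⟨rfl, rfl, -⟩ | ⟨rfl, rfl, hdir⟩⟩ :=
    gridArc_iff.1 hA
  · omega
  · rw [stairRight_of_lt hx (by omega)] at hdir
    have := hc.antitone y.le_succ
    simp only [Nat.succ_eq_add_one] at this
    omega
  · omega
  · rw [stairUp_of_lt hx (by omega), not_not] at hdir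
    subst hdir
    omega

/-- Outside column `0` one can go straight up to leave the staircase; in column `0`, go down to
`(0, 0)` and right to column `1` first. -/
theorem exists_mem_of_forall_arc (hc : IsGridStaircase m n h a c)
    (hC : ∀ p ∈ C, ∀ q, StairArc m n h a c p q → q ∈ C) (hp : p ∈ C) :
    ∃ i j, (i, j) ∈ C ∧ c j ≤ i := by
  obtain ⟨i, j⟩ := p
  have hh := hc.le_height
  have := hc.two_le_height
  have := hc.two_le_width
  by_contra! hin
  have hcol : ∀ {i j}, 1 ≤ j → (i, j) ∉ C := by
    intro i j hj hij
    have hlt := hin _ _ hij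
    have htop := mem_of_walkOfLength_of_forall_arc hC hij
      (hc.walkOfLength_col hlt.le (hh j) hj (hc.lt_width hlt))
    exact (hin _ _ htop).false
  obtain rfl : j = 0 := by
    by_contra hj
    exact hcol (Nat.one_le_iff_ne_zero.2 hj) hp
  have hlt := hin _ _ hp
  have hzero := mem_of_walkOfLength_of_forall_arc hC hp
    (hc.walkOfLength_col_zero i.zero_le (hlt.le.trans (hh 0)))
  exact hcol le_rfl (mem_of_walkOfLength_of_forall_arc hC hzero
    (hc.walkOfLength_row_zero (j := 1) (by omega) (by have := hc.width; omega)))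

theorem gridBox_subset_of_forall_arc (hc : IsGridStaircase m n h a c)
    (hC : IsStrongConvex (StairArc m n h a c) C)
    (hclosed : ∀ p ∈ C, ∀ q, StairArc m n h a c p q → q ∈ C) : ↑(gridBox m n) ⊆ C := by
  obtain ⟨p, hp⟩ := hC.nontrivial.nonempty
  obtain ⟨i, j, hij, hout⟩ := hc.exists_mem_of_forall_arc hclosed hp
  have hhook := fun i' j' => hc.hook_subset hC (i' := i') (j' := j') hij hout
  have hcorner : (h, 0) ∈ C := hhook h 0 (mem_gridBox.2 (by
    have := hc.height_add_two_le; have := hc.two_le_width; have := hc.width; omega)) (.inl le_rfl)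
  exact hc.gridBox_subset hC hhook fun i hi => mem_of_walkOfLength_of_forall_arc hclosed hcorner
    (hc.walkOfLength_col_zero hi.le le_rfl)

theorem subset_or_ncard_le (hc : IsGridStaircase m n h a c)
    (hC : IsStrongConvex (StairArc m n h a c) C) :
    C ⊆ belowProfile m n c ∨ ↑(gridBox m n) ⊆ C ∨ (a = n ∧ C.ncard ≤ (m - h) * n) := by
  by_cases hin : ∀ p ∈ C, p.1 < c p.2
  · left
    rintro ⟨i, j⟩ hp
    exact mem_belowProfile.2 ⟨mem_gridBox.1 (hC.mem_gridBox hp), hin _ hp⟩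
  right
  push Not at hin
  obtain ⟨⟨i, j⟩, hp, hij⟩ := hin
  have hhook := fun i' j' => hc.hook_subset hC (i' := i') (j' := j') hp hij
  by_cases hmeet : ∃ q ∈ C, q.1 < c q.2
  · obtain ⟨⟨x, y⟩, hq, hxy⟩ := hmeet
    refine .inl (hc.gridBox_subset hC hhook fun i hi =>
      hc.col_zero_subset_of_mem_belowProfile hC (hhook h 0 (mem_gridBox.2 ?_) (.inl le_rfl))
        hq hxy hi)
    have := hc.height_add_two_le; have := hc.two_le_width; have := hc.width; omega
  by_cases han : a = n
  · subst han
    push Not at hmeet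
    refine .inr ⟨rfl, ?_⟩
    rw [← Nat.card_Ico, ← Finset.card_range a, ← Finset.card_product, ← Set.ncard_coe_finset]
    refine Set.ncard_le_ncard ?_ (Finset.finite_toSet _)
    rintro ⟨x, y⟩ hq
    have hbox := mem_gridBox.1 (hC.mem_gridBox hq)
    simp only [Finset.coe_product, Finset.coe_Ico, Finset.coe_range, Set.mem_prod, Set.mem_Ico,
      Set.mem_Iio]
    exact ⟨⟨hc.height_le_of_forall_le hC hmeet hq, hbox.1⟩, hbox.2⟩
  · exact .inl (hc.gridBox_subset hC hhook fun i hi =>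
      hc.col_zero_subset_of_width_ne hC hhook han hi)

theorem card_mem_strongConvexitySpectrum (hc : IsGridStaircase m n h a c)
    (han : a = n → (m - h) * n ≤ (belowProfile m n c).card) :
    (belowProfile m n c).card ∈ strongConvexitySpectrum (gridGraph n m) := by
  have h0 := hc.zero
  have := hc.height_add_two_le
  have := hc.two_le_width
  have := hc.width
  refine _root_.card_mem_strongConvexitySpectrum ?_ hc.dConvex (fun _ => hc.exists_arc)
    (fun C => hc.gridBox_subset_of_forall_arc) fun C hC => ?_
  · refine (Finset.filter_subset _ _).ssubset_of_mem_notMem (a := (h, 0)) ?_ ?_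
    · rw [Finset.mem_coe, mem_gridBox]
      omega
    · rw [Finset.mem_coe, mem_belowProfile]
      omega
  · rcases hc.subset_or_ncard_le hC with hsub | hbox | ⟨ha, hcard⟩
    · exact .inl hsub
    · exact .inr (.inl hbox)
    · exact .inr (.inr (hcard.trans (han ha)))

end IsGridStaircase

theorem mem_strongConvexitySpectrum_of_staircase (hh : 2 ≤ h) (hm : h + 2 ≤ m) (ha : 2 ≤ a)
    (han : a + 2 ≤ n ∨ (a = n ∧ (m - h) * n ≤ k)) (hk : 2 * h + 2 * (a - 2) ≤ k)
    (hk' : k ≤ h * a) : k ∈ strongConvexitySpectrum (gridGraph n m) := by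
  obtain ⟨c, hc, rfl⟩ := exists_isStaircase (n := n) ha (by omega) hh hk hk'
  have hgrid : IsGridStaircase m n h a c := ⟨hc, hh, hm, ha, by omega⟩
  have hcard := card_belowProfile (m := m) (n := n) fun j => (hc.le_height j).trans (by omega)
  rw [← hcard] at han ⊢
  exact hgrid.card_mem_strongConvexitySpectrum (by omega)

end Staircase

/-! ### The value seven -/

section Seven

variable {m n : ℕ} {C : Set (ℕ × ℕ)} {i j i' j' : ℕ} {p q : ℕ × ℕ}

/-- The seven vertices of two directed 4-cycles through `(1, 1)`. -/
def sevenSet : Finset (ℕ × ℕ) := {(2, 1), (2, 2), (1, 2), (1, 1), (0, 1), (0, 0), (1, 0)}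

/-- The arcs meeting the three lowest rows and columns: the arc entering `sevenSet`, its two
4-cycles, and the arcs leading away from them. -/
def sevenArcs : Finset ((ℕ × ℕ) × (ℕ × ℕ)) :=
  {((3, 1), (2, 1)),
    ((2, 1), (2, 2)), ((2, 2), (1, 2)), ((1, 2), (1, 1)), ((1, 1), (2, 1)),
    ((1, 1), (0, 1)), ((0, 1), (0, 0)), ((0, 0), (1, 0)), ((1, 0), (1, 1)),
    ((2, 1), (2, 0)), ((1, 0), (2, 0)), ((2, 0), (3, 0)),
    ((0, 1), (0, 2)), ((1, 2), (0, 2)), ((0, 2), (0, 3)),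
    ((1, 2), (1, 3)), ((2, 2), (2, 3)), ((2, 2), (3, 2))}

/-- The horizontal edges of an orientation that extends `sevenArcs` by a checkerboard. -/
def sevenRight (i j : ℕ) : Prop :=
  if 3 ≤ i ∨ 3 ≤ j then (i + j + 1) % 2 = 1 else ((i, j), (i, j + 1)) ∈ sevenArcs

/-- The vertical edges of an orientation that extends `sevenArcs` by a checkerboard. -/
def sevenUp (i j : ℕ) : Prop :=
  if 3 ≤ i ∨ 3 ≤ j then (i + j + 1) % 2 = 0 else ((i, j), (i + 1, j)) ∈ sevenArcs

/-- The arcs of the orientation given by `sevenRight` and `sevenUp`. -/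
abbrev SevenArc (m n : ℕ) : ℕ × ℕ → ℕ × ℕ → Prop := GridArc m n sevenRight sevenUp

theorem isCyclicHook_seven (hm : 5 ≤ m) (hn : 5 ≤ n) :
    IsCyclicHook m n sevenRight sevenUp 3 3 where
  height := hm
  width := .inl hn
  two_le := by omega
  cyclic hi hj hij := by
    refine isCyclicFace_of_parity (e := 1) hi hj ?_ ?_ ?_ ?_ <;>
      first
      | rw [sevenRight, if_pos (by omega)]
      | rw [sevenUp, if_pos (by omega)]

theorem SevenArc.mem_sevenArcs (hA : SevenArc m n (i, j) (i', j'))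
    (hblock : (i < 3 ∧ j < 3) ∨ (i' < 3 ∧ j' < 3)) : ((i, j), (i', j')) ∈ sevenArcs := by
  have hleft : ∀ p ∈ gridBox 3 3, (p, (p.1, p.2 + 1)) ∈ sevenArcs ∨
      ((p.1, p.2 + 1), p) ∈ sevenArcs := by decide
  have hdown : ∀ p ∈ gridBox 3 3, (p, (p.1 + 1, p.2)) ∈ sevenArcs ∨
      ((p.1 + 1, p.2), p) ∈ sevenArcs := by decide
  obtain ⟨-, -, -, -, ⟨rfl, rfl, hdir⟩ | ⟨rfl, rfl, hdir⟩ | ⟨rfl, rfl, hdir⟩ |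
    ⟨rfl, rfl, hdir⟩⟩ := gridArc_iff.1 hA
  · rwa [sevenRight, if_neg (by omega)] at hdir
  · rw [sevenRight, if_neg (by omega)] at hdir
    exact (hleft (_, _) (mem_gridBox.2 (by omega))).resolve_left hdir
  · rwa [sevenUp, if_neg (by omega)] at hdir
  · rw [sevenUp, if_neg (by omega)] at hdir
    exact (hdown (_, _) (mem_gridBox.2 (by omega))).resolve_left hdir

theorem sevenArc_of_mem (hm : 4 ≤ m) (hn : 4 ≤ n) (h : (p, q) ∈ sevenArcs) :
    SevenArc m n p q := by
  have hgeom : ∀ a ∈ sevenArcs, (a.1.1 < 4 ∧ a.1.2 < 4 ∧ a.2.1 < 4 ∧ a.2.2 < 4) ∧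
      ((a.2.1 < 3 ∧ a.2.2 < 3) ∨ (a.1.1 < 3 ∧ a.1.2 < 3)) ∧ manhattan a.1 a.2 = 1 ∧
      (a.2, a.1) ∉ sevenArcs := by decide
  obtain ⟨h₁, hblock, hdist, hswap⟩ := hgeom _ h
  simp only at h₁
  refine (GridArc.total (mem_gridBox.2 ?_) (mem_gridBox.2 ?_) hdist).resolve_right fun hA =>
    hswap (SevenArc.mem_sevenArcs hA hblock) <;> omega

theorem exists_sevenArc (hm : 5 ≤ m) (hn : 5 ≤ n) (hp : p ∈ gridBox m n) :
    ∃ q, SevenArc m n p q := by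
  have hblock : ∀ i < 3, ∀ j < 3, ∃ a ∈ sevenArcs, a.1 = (i, j) := by decide
  obtain ⟨i, j⟩ := p
  by_cases hij : 3 ≤ i ∨ 3 ≤ j
  · exact (isCyclicHook_seven hm hn).exists_arc hp hij
  · obtain ⟨⟨_, q⟩, ha, rfl⟩ := hblock i (by omega) j (by omega)
    exact ⟨q, sevenArc_of_mem (by omega) (by omega) ha⟩

theorem SevenArc.exists_detour (hm : 4 ≤ m) (hn : 4 ≤ n) (hA : SevenArc m n p q)
    (hp : p ∈ sevenSet) (hq : q ∉ sevenSet) : ∃ d, WalkOfLength (SevenArc m n) d p (2, 1) ∧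
      ∀ l, WalkOfLength (SevenArc m n) l q (3, 1) → d < l + 2 := by
  have hblock : ∀ p ∈ sevenSet, p.1 < 3 ∧ p.2 < 3 := by decide
  have hexit : ∀ a ∈ sevenArcs, a.1 ∈ sevenSet → a.2 ∉ sevenSet → a.1 = (2, 1) ∨
      (a.1 = (1, 0) ∧ 1 ≤ manhattan a.2 (3, 1)) ∨ (a.1 = (1, 2) ∧ 1 ≤ manhattan a.2 (3, 1)) ∨
      (a.1 = (0, 1) ∧ 3 ≤ manhattan a.2 (3, 1)) ∨
      (a.1 = (2, 2) ∧ (2 ≤ manhattan a.2 (3, 1) ∨ a.2 = (3, 2))) := by decide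
  have harc {p q : ℕ × ℕ} (h : (p, q) ∈ sevenArcs) := sevenArc_of_mem hm hn h
  have h₁₁ := WalkOfLength.single (harc (p := (1, 1)) (q := (2, 1)) (by decide))
  have h₁₀ := WalkOfLength.cons (harc (p := (1, 0)) (by decide)) h₁₁
  have h₁₂ := WalkOfLength.cons (harc (p := (1, 2)) (by decide)) h₁₁
  have h₂₂ := WalkOfLength.cons (harc (p := (2, 2)) (by decide)) h₁₂
  have h₀₁ := WalkOfLength.cons (harc (p := (0, 1)) (by decide))
    (WalkOfLength.cons (harc (p := (0, 0)) (by decide)) h₁₀)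
  have hexit' := hexit (p, q) (hA.mem_sevenArcs (.inl (hblock _ hp))) hp hq
  simp only at hexit'
  rcases hexit' with rfl | ⟨rfl, h⟩ | ⟨rfl, h⟩ | ⟨rfl, h⟩ | ⟨rfl, h | rfl⟩
  · exact ⟨0, .nil _, fun l _ => by omega⟩
  · exact ⟨_, h₁₀, fun l hl => by have := hl.manhattan_le.1; omega⟩
  · exact ⟨_, h₁₂, fun l hl => by have := hl.manhattan_le.1; omega⟩
  · exact ⟨_, h₀₁, fun l hl => by have := hl.manhattan_le.1; omega⟩
  · exact ⟨_, h₂₂, fun l hl => by have := hl.manhattan_le.1; omega⟩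
  · -- The arc between `(3, 1)` and `(3, 2)` points right, so an odd walk back has length `≥ 3`.
    refine ⟨_, h₂₂, fun l hl => ?_⟩
    have hodd := hl.manhattan_le.2
    simp only [manhattan, Nat.dist] at hodd
    have hne : l ≠ 1 := by
      rintro rfl
      rcases hl with _ | ⟨h, h'⟩
      have hright : SevenArc m n (3, 1) (3, 2) := .right hm (by omega) (by simp [sevenRight])
      exact hright.asymm (h'.eq_of_zero ▸ h)
    omega

theorem dConvex_sevenSet (hm : 4 ≤ m) (hn : 4 ≤ n) : DConvex (SevenArc m n) sevenSet := by
  have hblock : ∀ p ∈ sevenSet, p.1 < 3 ∧ p.2 < 3 := by decide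
  have hentry : ∀ a ∈ sevenArcs, a.1 ∉ sevenSet → a.2 ∈ sevenSet →
      a.1 = (3, 1) ∧ a.2 = (2, 1) := by decide
  exact dConvex_of_unique_entry ⟨(1, 1), Finset.mem_coe.2 (by decide)⟩
    (fun p q hA hp hq => hentry _ (SevenArc.mem_sevenArcs hA (.inr (hblock _ hq))) hp hq)
    fun p q hA => SevenArc.exists_detour hm hn hA

theorem gridBox_subset_of_notMem_sevenSet (hm : 5 ≤ m) (hn : 5 ≤ n)
    (hC : IsStrongConvex (SevenArc m n) C) (hp : p ∈ C) (hpS : p ∉ sevenSet) :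
    ↑(gridBox m n) ⊆ C := by
  have harc {p q : ℕ × ℕ} (h : (p, q) ∈ sevenArcs) : SevenArc m n p q :=
    sevenArc_of_mem (by omega) (by omega) h
  have hmeet : ∃ i j, (i, j) ∈ C ∧ (3 ≤ i ∨ 3 ≤ j) := by
    have hout : ∀ a ∈ sevenArcs, a.1 ∉ sevenSet → 3 ≤ a.1.1 ∨ 3 ≤ a.2.1 ∨ 3 ≤ a.2.2 := by decide
    obtain ⟨⟨i, j⟩, hq, hA⟩ := hC.exists_out hp
    by_cases hpB : 3 ≤ p.1 ∨ 3 ≤ p.2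
    · exact ⟨p.1, p.2, hp, hpB⟩
    · exact ⟨i, j, hq, by have := hout _ (hA.mem_sevenArcs (.inl (by omega))) hpS; tauto⟩
  obtain ⟨x, y, hxy, hxy'⟩ := hmeet
  have hhook : ∀ {i j}, i < m → j < n → 3 ≤ i ∨ 3 ≤ j → (i, j) ∈ C := fun hi hj =>
    (isCyclicHook_seven hm hn).subset hC hxy hxy' (mem_gridBox.2 ⟨hi, hj⟩)
  have hbetween {p q r : ℕ × ℕ} (hp : p ∈ C) (hr : r ∈ C) (hpq : (p, q) ∈ sevenArcs)
      (hqr : (q, r) ∈ sevenArcs) : q ∈ C := hC.mem_of_arcs hp hr (harc hpq) (harc hqr)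
  have h₂₁ : (2, 1) ∈ C := hC.mem_of_manhattan (p := (3, 1)) (q := (2, 3))
    (hhook (by omega) (by omega) (by omega)) (hhook (by omega) (by omega) (by omega))
    (.single (harc (by decide)))
    (.cons (harc (q := (2, 2)) (by decide)) (.single (harc (by decide)))) rfl
  have h₂₂ : (2, 2) ∈ C :=
    hbetween (r := (2, 3)) h₂₁ (hhook (by omega) (by omega) (by omega)) (by decide) (by decide)
  have h₂₀ : (2, 0) ∈ C :=
    hbetween (r := (3, 0)) h₂₁ (hhook (by omega) (by omega) (by omega)) (by decide) (by decide)
  have h₁₂ : (1, 2) ∈ C :=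
    hbetween (r := (1, 3)) h₂₂ (hhook (by omega) (by omega) (by omega)) (by decide) (by decide)
  have h₀₂ : (0, 2) ∈ C :=
    hbetween (r := (0, 3)) h₁₂ (hhook (by omega) (by omega) (by omega)) (by decide) (by decide)
  have h₁₁ : (1, 1) ∈ C := hbetween h₁₂ h₂₁ (by decide) (by decide)
  have h₀₁ : (0, 1) ∈ C := hbetween h₁₁ h₀₂ (by decide) (by decide)
  have h₀₀ : (0, 0) ∈ C := hC.mem_of_manhattan h₀₁ h₂₀ (.single (harc (by decide)))
    (.cons (harc (q := (1, 0)) (by decide)) (.single (harc (by decide)))) rfl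
  have h₁₀ : (1, 0) ∈ C := hbetween h₀₀ h₂₀ (by decide) (by decide)
  rintro ⟨i, j⟩ hij
  rw [Finset.mem_coe, mem_gridBox] at hij
  by_cases hB : 3 ≤ i ∨ 3 ≤ j
  · exact hhook hij.1 hij.2 hB
  obtain rfl | rfl | rfl : i = 0 ∨ i = 1 ∨ i = 2 := by omega
  all_goals obtain rfl | rfl | rfl : j = 0 ∨ j = 1 ∨ j = 2 := by omega
  all_goals assumption

theorem exists_notMem_sevenSet (hm : 4 ≤ m) (hn : 4 ≤ n) (hC : C.Nonempty)
    (hclosed : ∀ p ∈ C, ∀ q, SevenArc m n p q → q ∈ C) : ∃ p ∈ C, p ∉ sevenSet := by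
  obtain ⟨p, hp⟩ := hC
  by_contra! hin
  have hnext {p q : ℕ × ℕ} (h : (p, q) ∈ sevenArcs) (hq : q ∉ C) : p ∉ C := fun hp =>
    hq (hclosed p hp q (sevenArc_of_mem hm hn h))
  have h₂₀ : (2, 0) ∉ C := fun h => absurd (hin _ h) (by decide)
  have h₂₁ := hnext (p := (2, 1)) (by decide) h₂₀
  have h₁₁ := hnext (p := (1, 1)) (by decide) h₂₁
  have h₁₂ := hnext (p := (1, 2)) (by decide) h₁₁
  have h₂₂ := hnext (p := (2, 2)) (by decide) h₁₂
  have h₁₀ := hnext (p := (1, 0)) (by decide) h₂₀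
  have h₀₀ := hnext (p := (0, 0)) (by decide) h₁₀
  have h₀₁ := hnext (p := (0, 1)) (by decide) h₀₀
  have hpS := hin p hp
  simp only [sevenSet, Finset.mem_insert, Finset.mem_singleton] at hpS
  rcases hpS with rfl | rfl | rfl | rfl | rfl | rfl | rfl <;> contradiction

theorem seven_mem_strongConvexitySpectrum (hm : 5 ≤ m) (hn : 5 ≤ n) :
    7 ∈ strongConvexitySpectrum (gridGraph n m) := by
  refine card_mem_strongConvexitySpectrum (S := sevenSet) ?_
    (dConvex_sevenSet (by omega) (by omega)) (fun p => exists_sevenArc hm hn)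
    (fun C hC hclosed => ?_) fun C hC => ?_
  · have hblock : ∀ p ∈ sevenSet, p.1 < 3 ∧ p.2 < 3 := by decide
    refine Finset.ssubset_iff_exists_subset_erase.2 ⟨(3, 3), mem_gridBox.2 (by omega), ?_⟩
    rintro ⟨i, j⟩ hp
    have := hblock _ hp
    rw [Finset.mem_erase, mem_gridBox, ne_eq, Prod.mk.injEq]
    omega
  · obtain ⟨p, hp, hpS⟩ := exists_notMem_sevenSet (by omega) (by omega) hC.nontrivial.nonempty
      hclosed
    exact gridBox_subset_of_notMem_sevenSet hm hn hC hp hpS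
  · by_cases hsub : C ⊆ sevenSet
    · exact .inl hsub
    · obtain ⟨p, hp, hpS⟩ := Set.not_subset.1 hsub
      exact .inr (.inl (gridBox_subset_of_notMem_sevenSet hm hn hC hp hpS))

end Seven

/-! ### The region below a tall staircase -/

section TallStaircase

variable {h n k : ℕ} {c : ℕ → ℕ} {C : Set (ℕ × ℕ)} {i j i' j' : ℕ} {p q : ℕ × ℕ}

/-- The horizontal edges of the tall staircase orientation: a checkerboard on the two lowest rows,
left on row `h`, and in between right exactly when not below the staircase. -/
def tallRight (h : ℕ) (c : ℕ → ℕ) (i j : ℕ) : Prop :=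
  if i < 2 then (i + j) % 2 = 1 else i < h ∧ c (j + 1) ≤ i

/-- The vertical edges of the tall staircase orientation: a checkerboard between the two lowest
rows; above them column `0` points down and the other columns up. -/
def tallUp (i j : ℕ) : Prop := if i = 0 then j % 2 = 0 else j ≠ 0

/-- The arcs of the tall staircase orientation of the grid with `h + 1` rows. -/
abbrev TallArc (h n : ℕ) (c : ℕ → ℕ) : ℕ × ℕ → ℕ × ℕ → Prop :=
  GridArc (h + 1) n (tallRight h c) tallUp

theorem tallRight_of_two_le (hi : 2 ≤ i) : tallRight h c i j ↔ i < h ∧ c (j + 1) ≤ i := by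
  rw [tallRight, if_neg (by omega)]

theorem tallUp_of_pos (hi : 1 ≤ i) : tallUp i j ↔ j ≠ 0 := by
  rw [tallUp, if_neg (by omega)]

theorem isCyclicFace_tall (hh : 1 ≤ h) (hj : j + 1 < n) :
    IsCyclicFace (h + 1) n (tallRight h c) tallUp 0 j := by
  refine isCyclicFace_of_parity (e := 0) (by omega) hj ?_ ?_ ?_ ?_
  · rw [tallRight, if_pos (by omega), add_zero]
  · rw [tallRight, if_pos (by omega), add_zero]
  · rw [tallUp, if_pos rfl, add_zero, zero_add]
  · rw [tallUp, if_pos rfl, add_zero, zero_add]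

theorem exists_tallArc (hh : 2 ≤ h) (hn : 2 ≤ n) (hp : p ∈ gridBox (h + 1) n) :
    ∃ q, TallArc h n c p q := by
  obtain ⟨i, j⟩ := p
  rw [mem_gridBox] at hp
  by_cases hi : i ≤ 1
  · have hF := isCyclicFace_tall (h := h) (c := c) (j := min j (n - 2)) (n := n)
      (by omega) (by omega)
    obtain ⟨q, -, hq⟩ := hF.exists_arc (p := (i, j)) (mem_faceCorners.2 (by omega))
    exact ⟨q, hq⟩
  rcases j with _ | j
  · obtain ⟨i, rfl⟩ := Nat.exists_eq_add_of_lt (not_le.1 hi)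
    exact ⟨_, .down hp.1 hp.2 fun hup => (tallUp_of_pos (by omega)).1 hup rfl⟩
  · rcases (Nat.lt_succ_iff.1 hp.1).lt_or_eq with hlt | rfl
    · exact ⟨_, .up (by omega) hp.2 ((tallUp_of_pos (by omega)).2 j.succ_ne_zero)⟩
    · refine ⟨_, .left hp.1 hp.2 ?_⟩
      rw [tallRight_of_two_le hh]
      omega

namespace IsStaircase

theorem eq_of_tallArc (hc : IsStaircase h n 3 c) (hA : TallArc h n c (i, j) (i', j'))
    (hij : c j ≤ i) (hij' : i' < c j') : (i = h ∧ j = 0) ∧ i' = h - 1 ∧ j' = 0 := by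
  have hh := hc.le_height j'
  have h0 := hc.zero
  obtain ⟨-, hj, -, -, ⟨rfl, rfl, -⟩ | ⟨rfl, rfl, hdir⟩ | ⟨rfl, rfl, -⟩ |
    ⟨rfl, rfl, hdir⟩⟩ := gridArc_iff.1 hA
  · have := hc.antitone (Nat.le_add_right j 1)
    omega
  · have := hc.le_of_lt hj
    rw [tallRight_of_two_le (by omega)] at hdir
    omega
  · omega
  · have := hc.le_of_lt hj
    rw [tallUp_of_pos (by omega), not_not] at hdir
    subst hdir
    omega

theorem walkOfLength_tall_left (hc : IsStaircase h n 3 c) (hj : j ≤ j') (hj' : j' < n)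
    (hi : 2 ≤ i) (hij : i < c j' ∨ i = h) :
    WalkOfLength (TallArc h n c) (j' - j) (i, j') (i, j) := by
  have := hc.le_height j'
  refine walkOfLength_left hj (by omega) hj' fun l _ hl => ?_
  rw [tallRight_of_two_le hi]
  have := hc.antitone (show l + 1 ≤ j' by omega)
  omega

theorem walkOfLength_tall_up (hi : 1 ≤ i) (hii : i ≤ i') (hi' : i' ≤ h) (hj : 1 ≤ j)
    (hjn : j < n) : WalkOfLength (TallArc h n c) (i' - i) (i, j) (i', j) :=
  walkOfLength_up hii hjn (by omega) fun l _ _ => (tallUp_of_pos (by omega)).2 (by omega)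

theorem walkOfLength_tall_entry (hc : IsStaircase h n 3 c) (hi : 2 ≤ i) (hj : 1 ≤ j)
    (hij : i < c j) :
    WalkOfLength (TallArc h n c) (manhattan (i, j) (h - 1, 0)) (i, j) (h - 1, 0) := by
  have hjn := hc.lt_width hij
  have hh := hc.le_height j
  have h1 := hc.one
  refine (((hc.walkOfLength_tall_left hj hjn hi (.inl hij)).trans
    (walkOfLength_tall_up (i' := h - 1) (by omega) (by omega) (by omega) le_rfl
      (by omega))).trans (hc.walkOfLength_tall_left (Nat.zero_le 1) (by omega) (by omega)
      (.inl (by omega)))).cast ?_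
  simp only [manhattan, Nat.dist]
  omega

theorem exists_detour_tall (hc : IsStaircase h n 3 c) (hA : TallArc h n c (i, j) q)
    (hij : i < c j) (hq : c q.2 ≤ q.1) :
    ∃ d, WalkOfLength (TallArc h n c) d (i, j) (h - 1, 0) ∧
      ∀ l, WalkOfLength (TallArc h n c) l q (h, 0) → d < l + 2 := by
  obtain ⟨i', j'⟩ := q
  have hh := hc.le_height j
  refine ⟨_, hc.walkOfLength_tall_entry ?_ ?_ hij, fun l hl => ?_⟩
  · obtain ⟨-, hj, hi', hj', ⟨rfl, rfl, -⟩ | ⟨rfl, rfl, -⟩ | ⟨rfl, rfl, -⟩ | ⟨rfl, rfl, -⟩⟩ :=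
      gridArc_iff.1 hA <;> have := hc.le_of_lt hj' <;> simp only at hq <;> omega
  · have h0 := hc.zero
    have h1 := hc.one
    by_contra hj₀
    obtain rfl : j = 0 := by omega
    obtain ⟨-, -, -, hj', ⟨rfl, rfl, -⟩ | ⟨-, hj, -⟩ | ⟨rfl, rfl, hdir⟩ | ⟨rfl, rfl, -⟩⟩ :=
      gridArc_iff.1 hA
    · simp only [Nat.zero_add] at hq
      omega
    · omega
    · have := hc.le_of_lt hj'
      simp only at hq
      exact (tallUp_of_pos (by omega)).1 hdir rfl
    · simp only at hq
      omega
  · have h₁ := hl.manhattan_le.1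
    have h₂ := hA.manhattan_eq_one
    simp only [manhattan, Nat.dist] at *
    omega

theorem dConvex_tall (hc : IsStaircase h n 3 c) (hn : 0 < n) :
    DConvex (TallArc h n c) (belowProfile (h + 1) n c) := by
  have hmem : ∀ {p}, p ∈ gridBox (h + 1) n →
      (p ∉ (belowProfile (h + 1) n c : Set (ℕ × ℕ)) ↔ c p.2 ≤ p.1) := by
    rintro ⟨i, j⟩ hp
    rw [Finset.mem_coe, mem_belowProfile, ← mem_gridBox, and_iff_right hp, not_lt]
  refine dConvex_of_unique_entry (t := (h, 0)) (z := (h - 1, 0)) ⟨(0, 0), ?_⟩ ?_ ?_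
  · have := hc.le_of_lt hn
    rw [Finset.mem_coe, mem_belowProfile]
    omega
  · rintro ⟨i, j⟩ ⟨i', j'⟩ hA hp hq
    rw [hmem hA.mem_gridBox.1] at hp
    simpa only [Prod.mk.injEq] using hc.eq_of_tallArc hA hp (mem_belowProfile.1 hq).2
  · rintro ⟨i, j⟩ q hA hp hq
    exact hc.exists_detour_tall hA (mem_belowProfile.1 hp).2 ((hmem hA.mem_gridBox.2).1 hq)

/-- Off the staircase and below row `h` all arcs point right or up. -/
theorem exists_mem_row_height (hc : IsStaircase h n 3 c)
    (hC : IsStrongConvex (TallArc h n c) C) (hp : (i, j) ∈ C) (hij : c j ≤ i) :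
    ∃ y, (h, y) ∈ C := by
  obtain ⟨⟨x, y⟩, ⟨hxyC, hxy⟩, hmax⟩ := Set.exists_max_image {p ∈ C | c p.2 ≤ p.1}
    (fun p => p.1 + p.2) (hC.finite.sep _) ⟨(i, j), hp, hij⟩
  obtain rfl | hx : x = h ∨ x < h := by
    have := mem_gridBox.1 (hC.mem_gridBox hxyC)
    omega
  · exact ⟨y, hxyC⟩
  obtain ⟨⟨x', y'⟩, hC', hA⟩ := hC.exists_out hxyC
  have h0 := hc.zero
  have hmax' := hmax (x', y')
  simp only [Set.mem_ofPred_eq, hC', true_and] at hxy hmax'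
  obtain ⟨-, hy, -, -, ⟨rfl, rfl, -⟩ | ⟨rfl, rfl, hdir⟩ | ⟨rfl, rfl, -⟩ |
    ⟨rfl, rfl, hdir⟩⟩ := gridArc_iff.1 hA
  · have := hc.antitone (Nat.le_add_right y 1)
    omega
  · have := hc.le_of_lt hy
    rw [tallRight_of_two_le (by omega)] at hdir
    omega
  · omega
  · have := hc.le_of_lt hy
    rw [tallUp_of_pos (by omega), not_not] at hdir
    subst hdir
    omega

theorem corner_mem_of_mem_row_height (hh : 2 ≤ h) (hC : IsStrongConvex (TallArc h n c) C)
    (hp : (h, j) ∈ C) : (h, 0) ∈ C := by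
  induction j with
  | zero => exact hp
  | succ j ih =>
    refine ih ?_
    obtain ⟨⟨x, y⟩, hC', hA⟩ := hC.exists_out hp
    obtain ⟨-, -, hx, -, ⟨rfl, rfl, hdir⟩ | ⟨rfl, hy, -⟩ | ⟨rfl, rfl, -⟩ | ⟨rfl, rfl, hdir⟩⟩ :=
      gridArc_iff.1 hA
    · rw [tallRight_of_two_le hh] at hdir
      omega
    · rwa [Nat.add_right_cancel hy]
    · omega
    · exact absurd ((tallUp_of_pos (by omega)).2 j.succ_ne_zero) hdir

theorem col_zero_subset_tall (hc : IsStaircase h n 3 c)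
    (hC : IsStrongConvex (TallArc h n c) C) (hcorner : (h, 0) ∈ C) (hi : i ≤ h) (hi₁ : 1 ≤ i) :
    (i, 0) ∈ C := by
  have h1 := hc.one
  induction hi using Nat.decreasingInduction with
  | self => exact hcorner
  | of_succ i _ ih =>
    obtain ⟨⟨x, y⟩, hxyC, hA⟩ := hC.exists_out (ih (by omega))
    obtain ⟨-, -, -, -, ⟨rfl, rfl, hdir⟩ | ⟨-, hj, -⟩ | ⟨rfl, rfl, hdir⟩ | ⟨rfl, hx, -⟩⟩ :=
      gridArc_iff.1 hA
    · rw [tallRight_of_two_le (by omega), Nat.zero_add] at hdir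
      omega
    · omega
    · exact absurd rfl ((tallUp_of_pos (by omega)).1 hdir)
    · rwa [Nat.add_right_cancel hx]

theorem row_subset_of_le_one (hh : 1 ≤ h) (hC : IsStrongConvex (TallArc h n c) C)
    (hmem : (1, 0) ∈ C) (hi : i ≤ 1) (hj : j < n) : (i, j) ∈ C := by
  obtain ⟨⟨x, y⟩, hxyC, hA⟩ := hC.exists_out hmem
  obtain ⟨-, -, -, hn, ⟨rfl, rfl, -⟩ | ⟨-, hy, -⟩ | ⟨rfl, rfl, hdir⟩ | ⟨rfl, hx, hdir⟩⟩ :=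
    gridArc_iff.1 hA
  · have hF : faceCorners 0 0 ⊆ C := hC.faceCorners_subset (isCyclicFace_tall hh hn)
      (mem_faceCorners.2 (by omega)) (mem_faceCorners.2 (by omega)) hA.manhattan_eq_one hmem hxyC
    refine (hC.faceCorners_subset_row (j' := min j (n - 2)) (Nat.zero_le _)
      fun l _ _ => isCyclicFace_tall hh (by omega)).1 hF (mem_faceCorners.2 ?_)
    omega
  · omega
  · exact absurd rfl ((tallUp_of_pos le_rfl).1 hdir)
  · obtain rfl : x = 0 := by omega
    simp [tallUp] at hdir

/-- Every vertex above row `0` lies on a shortest walk from row `1` straight up, and then left to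
column `0`: at once below the staircase, and along row `h` otherwise. -/
theorem gridBox_subset_tall (hc : IsStaircase h n 3 c) (hn : 0 < n)
    (hC : IsStrongConvex (TallArc h n c) C) (hp : (i, j) ∈ C) (hij : c j ≤ i) :
    ↑(gridBox (h + 1) n) ⊆ C := by
  have h0 := hc.zero
  have h3 := hc.le_of_lt hn
  obtain ⟨y, hy⟩ := hc.exists_mem_row_height hC hp hij
  have hcol {i : ℕ} : i ≤ h → 1 ≤ i → (i, 0) ∈ C :=
    hc.col_zero_subset_tall hC (corner_mem_of_mem_row_height (by omega) hC hy)
  have hrow {i j : ℕ} : i ≤ 1 → j < n → (i, j) ∈ C :=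
    row_subset_of_le_one (by omega) hC (hcol (by omega) le_rfl)
  rintro ⟨i, j⟩ hq
  rw [Finset.mem_coe, mem_gridBox] at hq
  by_cases hi : i ≤ 1
  · exact hrow hi hq.2
  rcases Nat.eq_zero_or_pos j with rfl | hj
  · exact hcol (by omega) (by omega)
  have hup := walkOfLength_tall_up (h := h) (c := c) le_rfl (show 1 ≤ i by omega) (by omega) hj hq.2
  by_cases hlt : i < c j
  · refine hC.mem_of_manhattan (hrow le_rfl hq.2) (hcol (by omega) (by omega)) hup
      (hc.walkOfLength_tall_left j.zero_le hq.2 (by omega) (.inl hlt)) ?_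
    simp only [manhattan, Nat.dist]
    omega
  · refine hC.mem_of_manhattan (hrow le_rfl hq.2) (hcol le_rfl (by omega)) hup
      ((walkOfLength_tall_up (by omega) (by omega) le_rfl hj hq.2).trans
        (hc.walkOfLength_tall_left j.zero_le hq.2 (by omega) (.inr rfl))) ?_
    simp only [manhattan, Nat.dist]
    omega

theorem exists_mem_of_forall_tallArc (hc : IsStaircase h n 3 c) (hn : 2 ≤ n)
    (hC : ∀ p ∈ C, ∀ q, TallArc h n c p q → q ∈ C) (hp : p ∈ C) :
    ∃ i j, (i, j) ∈ C ∧ c j ≤ i := by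
  have hh := hc.le_height
  have h0 := hc.zero
  have h3 := hc.le_of_lt (show 0 < n by omega)
  by_contra! hin
  have hinner {i j : ℕ} (hi : 1 ≤ i) (hj : 1 ≤ j) : (i, j) ∉ C := fun hij =>
    (hin _ _ (mem_of_walkOfLength_of_forall_arc hC hij (walkOfLength_tall_up hi
      (hin _ _ hij).le (hh j) hj (hc.lt_width (hin _ _ hij))))).false
  have h₁₀ : (1, 0) ∉ C := fun hmem => hinner le_rfl le_rfl
    (hC _ hmem _ (.right (by omega) (by omega) (by simp [tallRight])))
  have hcol {i : ℕ} : (i, 0) ∉ C := by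
    intro hmem
    rcases Nat.eq_zero_or_pos i with rfl | hi
    · exact h₁₀ (hC _ hmem _ (.up (by omega) (by omega) (by simp [tallUp])))
    · refine h₁₀ (mem_of_walkOfLength_of_forall_arc hC hmem
        (walkOfLength_down hi (by omega) ?_ fun l _ _ => ?_))
      · have := hin _ _ hmem
        omega
      · rw [tallUp_of_pos (by omega), not_not]
  have heven {j : ℕ} (hj : j % 2 = 0) (hjn : j < n) : (0, j) ∉ C := by
    intro hmem
    have hup := hC _ hmem (1, j) (.up (by omega) hjn (by simp [tallUp, hj]))
    rcases Nat.eq_zero_or_pos j with rfl | hj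
    · exact hcol hup
    · exact hinner le_rfl hj hup
  obtain ⟨i, j⟩ := p
  have hjn := hc.lt_width (hin _ _ hp)
  rcases j with _ | j
  · exact hcol hp
  rcases Nat.eq_zero_or_pos i with rfl | hi
  · by_cases hj : (j + 1) % 2 = 0
    · exact heven hj hjn hp
    · refine heven (j := j) (by omega) (by omega)
        (hC _ hp _ (.left (by omega) hjn ?_))
      rw [tallRight, if_pos (by omega)]
      omega
  · exact hinner hi (by omega) hp

theorem card_mem_strongConvexitySpectrum_tall (hc : IsStaircase h n 3 c) (hn : 2 ≤ n) :
    (belowProfile (h + 1) n c).card ∈ strongConvexitySpectrum (gridGraph n (h + 1)) := by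
  have h0 := hc.zero
  have h3 := hc.le_of_lt (show 0 < n by omega)
  refine card_mem_strongConvexitySpectrum ?_ (hc.dConvex_tall (by omega))
    (fun _ => exists_tallArc (by omega) hn) (fun C hC hclosed => ?_) fun C hC => ?_
  · refine (Finset.filter_subset _ _).ssubset_of_mem_notMem (a := (h, 0)) ?_ ?_
    · rw [Finset.mem_coe, mem_gridBox]
      omega
    · rw [Finset.mem_coe, mem_belowProfile]
      omega
  · obtain ⟨p, hp⟩ := hC.nontrivial.nonempty
    obtain ⟨i, j, hmem, hij⟩ := hc.exists_mem_of_forall_tallArc hn hclosed hp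
    exact hc.gridBox_subset_tall (by omega) hC hmem hij
  · by_cases hin : ∀ p ∈ C, p.1 < c p.2
    · exact .inl fun ⟨i, j⟩ hp => mem_belowProfile.2 ⟨mem_gridBox.1 (hC.mem_gridBox hp), hin _ hp⟩
    · push Not at hin
      obtain ⟨⟨i, j⟩, hp, hij⟩ := hin
      exact .inr (.inl (hc.gridBox_subset_tall (by omega) hC hp hij))

end IsStaircase

theorem mem_strongConvexitySpectrum_of_tall_staircase (hh : 3 ≤ h) (hn : 2 ≤ n)
    (hk : 2 * h + 3 * (n - 2) ≤ k) (hk' : k ≤ h * n) :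
    k ∈ strongConvexitySpectrum (gridGraph n (h + 1)) := by
  obtain ⟨c, hc, rfl⟩ := exists_isStaircase hn le_rfl hh hk hk'
  rw [← card_belowProfile fun j => (hc.le_height j).trans h.le_succ]
  exact hc.card_mem_strongConvexitySpectrum_tall hn

end TallStaircase

/-! ### The complement of a pocket -/

section PocketComplement

variable {r n w k : ℕ} {C : Set (ℕ × ℕ)} {i j i' j' : ℕ} {p q : ℕ × ℕ}

/-- The pocket consists of the first `w` positions of row `r + 3` and the first three positions of
row `r + 2`. -/
def pocket (r w : ℕ) : Finset (ℕ × ℕ) := {r + 3} ×ˢ Finset.range w ∪ {r + 2} ×ˢ Finset.range 3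

/-- The horizontal edges of the pocket orientation: a checkerboard up to row `r`; above it all edges
point left, except for the first edge of row `r + 1` and the first two edges of row `r + 2`. -/
def pocketRight (r i j : ℕ) : Prop :=
  if i ≤ r then (i + j) % 2 = 1 else (i = r + 1 ∧ j = 0) ∨ (i = r + 2 ∧ j ≤ 1)

/-- The vertical edges of the pocket orientation: a checkerboard up to row `r`; above it all edges
point up, except for six edges around the pocket. -/
def pocketUp (r w i j : ℕ) : Prop :=
  if i < r then (i + j) % 2 = 0 else if i = r then j ≠ 1 else
    if i = r + 1 then j ≠ 1 ∧ j ≠ 3 else j ≠ 0 ∧ j ≠ w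

/-- The arcs of the pocket orientation of the grid with `r + 4` rows. -/
abbrev PocketArc (r n w : ℕ) : ℕ × ℕ → ℕ × ℕ → Prop :=
  GridArc (r + 4) n (pocketRight r) (pocketUp r w)

theorem mem_pocket : (i, j) ∈ pocket r w ↔ (i = r + 3 ∧ j < w) ∨ (i = r + 2 ∧ j < 3) := by
  simp only [pocket, Finset.mem_union, Finset.mem_product, Finset.mem_singleton, Finset.mem_range]

theorem card_pocket : (pocket r w).card = w + 3 := by
  rw [pocket, Finset.card_union_of_disjoint, Finset.card_product, Finset.card_product]
  · simp only [Finset.card_singleton, Finset.card_range, one_mul]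
  · exact Finset.disjoint_product.2 (.inl (by simp))

theorem pocket_subset_gridBox (hw : w ≤ n) (hn : 3 ≤ n) : pocket r w ⊆ gridBox (r + 4) n := by
  rintro ⟨i, j⟩ h
  rw [mem_pocket] at h
  rw [mem_gridBox]
  omega

theorem pocketRight_add_one : pocketRight r (r + 1) j ↔ j = 0 := by simp [pocketRight]

theorem pocketRight_add_two : pocketRight r (r + 2) j ↔ j ≤ 1 := by simp [pocketRight]

theorem not_pocketRight_add_three : ¬ pocketRight r (r + 3) j := by simp [pocketRight]

theorem pocketUp_self : pocketUp r w r j ↔ j ≠ 1 := by simp [pocketUp]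

theorem pocketUp_add_one : pocketUp r w (r + 1) j ↔ j ≠ 1 ∧ j ≠ 3 := by simp [pocketUp]

theorem pocketUp_add_two : pocketUp r w (r + 2) j ↔ j ≠ 0 ∧ j ≠ w := by simp [pocketUp]

theorem isCyclicFace_pocket (hi : i < r) (hj : j + 1 < n) :
    IsCyclicFace (r + 4) n (pocketRight r) (pocketUp r w) i j := by
  refine isCyclicFace_of_parity (e := 0) (by omega) hj ?_ ?_ ?_ ?_
  · rw [pocketRight, if_pos hi.le, add_zero]
  · rw [pocketRight, if_pos (Nat.succ_le_of_lt hi), add_zero]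
  · rw [pocketUp, if_pos hi, add_zero]
  · rw [pocketUp, if_pos hi, add_zero]

theorem exists_pocketArc (hr : 1 ≤ r) (hw : 3 ≤ w) (hn : 2 ≤ n) (hp : p ∈ gridBox (r + 4) n) :
    ∃ q, PocketArc r n w p q := by
  obtain ⟨i, j⟩ := p
  rw [mem_gridBox] at hp
  obtain hi | rfl | rfl | rfl : i ≤ r ∨ i = r + 1 ∨ i = r + 2 ∨ i = r + 3 := by omega
  · obtain ⟨q, -, hq⟩ := (isCyclicFace_pocket (r := r) (n := n) (w := w) (i := min i (r - 1))
      (j := min j (n - 2)) (by omega) (by omega)).exists_arc (p := (i, j))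
      (mem_faceCorners.2 (by omega))
    exact ⟨q, hq⟩
  · obtain rfl | rfl | ⟨j, rfl⟩ : j = 0 ∨ j = 1 ∨ ∃ l, j = l + 2 := by
      rcases j with _ | _ | j <;> simp
    · exact ⟨_, .right (by omega) (by omega) (pocketRight_add_one.2 rfl)⟩
    · exact ⟨_, .down (by omega) hp.2 fun h => pocketUp_self.1 h rfl⟩
    · exact ⟨_, .left (by omega) hp.2 (pocketRight_add_one.not.2 j.succ_ne_zero)⟩
  · obtain rfl | rfl | ⟨j, rfl⟩ : j = 0 ∨ j = 1 ∨ ∃ l, j = l + 2 := by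
      rcases j with _ | _ | j <;> simp
    · exact ⟨_, .right (by omega) (by omega) (pocketRight_add_two.2 zero_le_one)⟩
    · exact ⟨_, .up (by omega) hp.2 (pocketUp_add_two.2 (by omega))⟩
    · rcases j with _ | j
      · exact ⟨_, .up (by omega) hp.2 (pocketUp_add_two.2 (by omega))⟩
      · exact ⟨_, .left (by omega) hp.2 (pocketRight_add_two.not.2 (by omega))⟩
  · rcases j with _ | j
    · exact ⟨_, .down (by omega) hp.2 fun h => (pocketUp_add_two.1 h).1 rfl⟩
    · exact ⟨_, .left (by omega) hp.2 not_pocketRight_add_three⟩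

theorem eq_of_pocketArc_of_mem (hw : 3 ≤ w) (hA : PocketArc r n w p q) (hp : p ∈ pocket r w)
    (hq : q ∉ pocket r w) : p = (r + 2, 1) ∧ q = (r + 1, 1) := by
  obtain ⟨i, j⟩ := p
  obtain ⟨i', j'⟩ := q
  rw [mem_pocket] at hp hq
  obtain ⟨-, -, hi', -, ⟨rfl, rfl, h⟩ | ⟨rfl, rfl, h⟩ | ⟨rfl, rfl, h⟩ | ⟨rfl, rfl, h⟩⟩ :=
    gridArc_iff.1 hA <;>
    simp only [pocketRight, pocketUp] at h <;> split_ifs at h <;>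
    simp only [Prod.mk.injEq] <;> omega

theorem eq_of_pocketArc_into (hw : 3 ≤ w) (hA : PocketArc r n w (i, j) (i', j'))
    (hp : (i, j) ∉ pocket r w) (hq : (i', j') ∈ pocket r w) :
    (i = r + 1 ∧ (j = 0 ∨ j = 2)) ∨
      (i = r + 2 ∧ 3 ≤ j ∧ ((i' = r + 2 ∧ j = 3 ∧ j' = 2) ∨ (i' = r + 3 ∧ j' = j))) ∨
      (i = r + 3 ∧ j = w ∧ i' = r + 3 ∧ j = j' + 1) := by
  rw [mem_pocket] at hp hq
  obtain ⟨hi, -, -, -, ⟨rfl, rfl, h⟩ | ⟨rfl, rfl, h⟩ | ⟨rfl, rfl, h⟩ | ⟨rfl, rfl, h⟩⟩ :=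
    gridArc_iff.1 hA <;>
    simp only [pocketRight, pocketUp] at h <;> split_ifs at h <;> omega

/-- The only arc to `(r + 2, 1)` comes from `(r + 2, 0)`. -/
theorem eq_or_manhattan_lt_of_walkOfLength_pocket (hw : w ≠ 1)
    (h : WalkOfLength (PocketArc r n w) k p (r + 2, 1)) :
    p = (r + 2, 1) ∨ manhattan p (r + 2, 0) < k := by
  generalize hx : (r + 2, 1) = x at h
  induction h with
  | nil => exact .inl rfl
  | @cons k p q _ hA _ ih =>
    right
    rcases ih hx with rfl | ih
    · obtain ⟨i, j⟩ := p
      subst hx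
      obtain ⟨-, -, -, -, ⟨rfl, hj, -⟩ | ⟨rfl, rfl, h⟩ | ⟨rfl, hi, h⟩ | ⟨rfl, rfl, h⟩⟩ :=
        gridArc_iff.1 hA
      · simp only [manhattan, Nat.dist]
        omega
      · exact absurd (pocketRight_add_two.2 le_rfl) h
      · obtain rfl : i = r + 1 := by omega
        exact absurd rfl (pocketUp_add_one.1 h).1
      · exact absurd (pocketUp_add_two.2 (by omega)) h
    · have := hA.manhattan_eq_one
      simp only [manhattan, Nat.dist] at *
      omega

theorem walkOfLength_pocket_entry (hj : 3 ≤ j) (hjn : j < n) :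
    WalkOfLength (PocketArc r n w) j (r + 2, j) (r + 1, 1) := by
  have hleft : WalkOfLength (PocketArc r n w) (j - 3) (r + 2, j) (r + 2, 3) :=
    walkOfLength_left hj (by omega) hjn fun l hl _ => pocketRight_add_two.not.2 (by omega)
  have hdown : PocketArc r n w (r + 2, 3) (r + 1, 3) :=
    .down (by omega) (by omega) fun h => (pocketUp_add_one.1 h).2 rfl
  have hleft' : WalkOfLength (PocketArc r n w) (3 - 1) (r + 1, 3) (r + 1, 1) :=
    walkOfLength_left (by omega) (by omega) (by omega)
      fun l hl _ => pocketRight_add_one.not.2 (by omega)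
  exact ((hleft.snoc hdown).trans hleft').cast (by omega)

theorem exists_detour_pocket (hw : 3 ≤ w) (hn : 3 ≤ n) (hA : PocketArc r n w p q)
    (hp : p ∉ pocket r w) (hq : q ∈ pocket r w) :
    ∃ d, WalkOfLength (PocketArc r n w) d p (r + 1, 1) ∧
      ∀ l, WalkOfLength (PocketArc r n w) l q (r + 2, 1) → d < l + 2 := by
  obtain ⟨i, j⟩ := p
  obtain ⟨i', j'⟩ := q
  have hbox := mem_gridBox.1 hA.mem_gridBox.1
  rcases eq_of_pocketArc_into hw hA hp hq with ⟨rfl, rfl | rfl⟩ | ⟨rfl, hj, hq'⟩ |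
    ⟨rfl, rfl, rfl, hj⟩
  · exact ⟨1, .single (.right (by omega) (by omega) (pocketRight_add_one.2 rfl)),
      fun l _ => by omega⟩
  · exact ⟨1, .single (.left (by omega) (by omega) (pocketRight_add_one.not.2 one_ne_zero)),
      fun l _ => by omega⟩
  · refine ⟨j, walkOfLength_pocket_entry hj hbox.2, fun l hl => ?_⟩
    have := eq_or_manhattan_lt_of_walkOfLength_pocket (by omega) hl
    simp only [manhattan, Nat.dist, Prod.mk.injEq] at this
    omega
  · refine ⟨j + 1, .cons (.down (by omega) hbox.2 fun h => (pocketUp_add_two.1 h).2 rfl)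
      (walkOfLength_pocket_entry hw hbox.2), fun l hl => ?_⟩
    have := eq_or_manhattan_lt_of_walkOfLength_pocket (by omega) hl
    simp only [manhattan, Nat.dist, Prod.mk.injEq] at this
    omega

theorem dConvex_compl_pocket (hw : 3 ≤ w) (hn : 3 ≤ n) :
    DConvex (PocketArc r n w) ↑(gridBox (r + 4) n \ pocket r w) := by
  have hmem {p : ℕ × ℕ} (hp : p ∈ gridBox (r + 4) n) :
      p ∈ (↑(gridBox (r + 4) n \ pocket r w) : Set (ℕ × ℕ)) ↔ p ∉ pocket r w := by
    rw [Finset.mem_coe, Finset.mem_sdiff, and_iff_right hp]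
  refine dConvex_of_unique_entry (t := (r + 2, 1)) (z := (r + 1, 1)) ⟨(0, 0), ?_⟩ ?_ ?_
  · rw [hmem (mem_gridBox.2 (by omega)), mem_pocket]
    omega
  · intro p q hA hp hq
    rw [hmem hA.mem_gridBox.1, not_not] at hp
    exact eq_of_pocketArc_of_mem hw hA hp ((hmem hA.mem_gridBox.2).1 hq)
  · intro p q hA hp hq
    rw [hmem hA.mem_gridBox.2, not_not] at hq
    exact exists_detour_pocket hw hn hA ((hmem hA.mem_gridBox.1).1 hp) hq

theorem mem_lower_rows_pocket (hr : 1 ≤ r) (hn : 2 ≤ n) (hC : IsStrongConvex (PocketArc r n w) C)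
    (hp : (i, j) ∈ C) (hq : q ∈ C) (hpq : manhattan (i, j) q = 1) (hi : i ≤ r) (hq' : q.1 ≤ r)
    (hi' : i' ≤ r) (hj' : j' < n) : (i', j') ∈ C := by
  have hface {x y : ℕ} (hx : x < r) (hy : y + 1 < n) : faceCorners 0 0 ⊆ C ↔ faceCorners x y ⊆ C :=
    (hC.faceCorners_subset_col x.zero_le
      fun l _ _ => isCyclicFace_pocket (by omega) (by omega)).trans
    (hC.faceCorners_subset_row y.zero_le fun l _ _ => isCyclicFace_pocket hx (by omega))
  obtain ⟨x, y⟩ := q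
  have hpbox := mem_gridBox.1 (hC.mem_gridBox hp)
  have hqbox := mem_gridBox.1 (hC.mem_gridBox hq)
  have hd := hpq
  simp only [manhattan, Nat.dist] at hd hq'
  have hbase : faceCorners (min (min i x) (r - 1)) (min (min j y) (n - 2)) ⊆ C := by
    refine hC.faceCorners_subset (isCyclicFace_pocket (by omega) (by omega)) ?_ ?_ hpq hp hq <;>
      rw [mem_faceCorners] <;> omega
  have hlast : faceCorners (min i' (r - 1)) (min j' (n - 2)) ⊆ C :=
    (hface (by omega) (by omega)).1 ((hface (by omega) (by omega)).2 hbase)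
  exact hlast (mem_faceCorners.2 (by omega))

theorem lower_rows_subset_of_entry (hr : 1 ≤ r) (hC : IsStrongConvex (PocketArc r n w) C)
    (hentry : (r + 1, 1) ∈ C) (hi : i ≤ r) (hj : j < n) : (i, j) ∈ C := by
  have hn := (mem_gridBox.1 (hC.mem_gridBox hentry)).2
  have hbelow : (r, 1) ∈ C := by
    obtain ⟨⟨x, y⟩, hxy, hA⟩ := hC.exists_out hentry
    obtain ⟨-, -, -, -, ⟨rfl, rfl, h⟩ | ⟨rfl, hy, h⟩ | ⟨rfl, rfl, h⟩ | ⟨rfl, hx, -⟩⟩ :=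
      gridArc_iff.1 hA
    · exact absurd (pocketRight_add_one.1 h) one_ne_zero
    · exact absurd (pocketRight_add_one.2 (by omega)) h
    · exact absurd rfl (pocketUp_add_one.1 h).1
    · rwa [Nat.add_right_cancel hx]
  obtain ⟨⟨x, y⟩, hxy, hA⟩ := hC.exists_out hbelow
  have hx : x ≤ r := by
    obtain ⟨-, -, -, -, ⟨rfl, -⟩ | ⟨rfl, -⟩ | ⟨rfl, rfl, h⟩ | ⟨-, rfl, -⟩⟩ := gridArc_iff.1 hA
    · exact le_rfl
    · exact le_rfl
    · exact absurd rfl (pocketUp_self.1 h)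
    · exact x.le_succ
  exact mem_lower_rows_pocket hr hn hC hbelow hxy hA.manhattan_eq_one le_rfl hx hi hj

theorem row_add_one_subset_pocket (hC : IsStrongConvex (PocketArc r n w) C)
    (hrow : ∀ {j}, j < n → (r, j) ∈ C) (hentry : (r + 1, 1) ∈ C) (hj : j < n) :
    (r + 1, j) ∈ C := by
  induction j with
  | zero =>
    have hn := (mem_gridBox.1 (hC.mem_gridBox hentry)).2
    exact hC.mem_of_arcs (hrow hj) hentry (.up (by omega) hj (pocketUp_self.2 zero_ne_one))
      (.right (by omega) hn (pocketRight_add_one.2 rfl))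
  | succ j ih =>
    rcases Nat.eq_zero_or_pos j with rfl | hj₀
    · exact hentry
    · exact hC.mem_of_arcs (hrow hj) (ih (by omega))
        (.up (by omega) hj (pocketUp_self.2 (by omega)))
        (.left (by omega) hj (pocketRight_add_one.not.2 (by omega)))

theorem corner_mem_pocket (hw : 3 ≤ w) (hC : IsStrongConvex (PocketArc r n w) C)
    (hleft : (r + 2, 0) ∈ C) (hright : (r + 2, 1) ∈ C) : (r + 3, 1) ∈ C ∧ (r + 3, 0) ∈ C := by
  have hn := (mem_gridBox.1 (hC.mem_gridBox hright)).2
  exact hC.mem_of_cycle hleft hright (.right (by omega) hn (pocketRight_add_two.2 zero_le_one))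
    (.up (by omega) hn (pocketUp_add_two.2 (by omega)))
    (.left (by omega) hn not_pocketRight_add_three)
    (.down (by omega) (by omega) fun h => (pocketUp_add_two.1 h).1 rfl)

theorem row_add_two_subset_pocket (hw : 3 ≤ w) (hn : 5 ≤ n)
    (hC : IsStrongConvex (PocketArc r n w) C) (hrow : ∀ {j}, j < n → (r + 1, j) ∈ C)
    (hmem : (r + 2, 1) ∈ C) (hj : j < n) : (r + 2, j) ∈ C := by
  have hup {j : ℕ} (hjn : j < n) (hj : j ≠ 1 ∧ j ≠ 3) : PocketArc r n w (r + 1, j) (r + 2, j) :=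
    .up (by omega) hjn (pocketUp_add_one.2 hj)
  have hleft {j : ℕ} (hjn : j + 1 < n) (hj : 2 ≤ j) :
      PocketArc r n w (r + 2, j + 1) (r + 2, j) :=
    .left (by omega) hjn (pocketRight_add_two.not.2 (by omega))
  have h₀ : (r + 2, 0) ∈ C := hC.mem_of_arcs (hrow (by omega)) hmem (hup (by omega) (by omega))
    (.right (by omega) (by omega) (pocketRight_add_two.2 zero_le_one))
  have h₂ : (r + 2, 2) ∈ C := by
    refine hC.mem_of_manhattan (hrow (by omega)) (corner_mem_pocket hw hC h₀ hmem).1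
      (.single (hup (by omega) (by omega)))
      (.cons (.up (by omega) (by omega) (pocketUp_add_two.2 (by omega)))
        (.single (.left (by omega) (by omega) not_pocketRight_add_three))) ?_
    simp only [manhattan, Nat.dist]
    omega
  have h₄ : (r + 2, 4) ∈ C := by
    refine hC.mem_of_manhattan (hrow (by omega)) h₂ (.single (hup (by omega) (by omega)))
      (.cons (hleft (by omega) (by omega)) (.single (hleft (by omega) le_rfl))) ?_
    simp only [manhattan, Nat.dist]
    omega
  have h₃ : (r + 2, 3) ∈ C :=
    hC.mem_of_arcs h₄ h₂ (hleft (by omega) (by omega)) (hleft (by omega) le_rfl)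
  induction j with
  | zero => exact h₀
  | succ j ih =>
    obtain rfl | rfl | rfl | hj₃ : j = 0 ∨ j = 1 ∨ j = 2 ∨ 3 ≤ j := by omega
    · exact hmem
    · exact h₂
    · exact h₃
    · exact hC.mem_of_arcs (hrow hj) (ih (by omega)) (hup hj (by omega)) (hleft hj (by omega))

theorem row_add_three_subset_pocket (hw : 3 ≤ w) (hwn : w + 1 < n)
    (hC : IsStrongConvex (PocketArc r n w) C) (hrow : ∀ {j}, j < n → (r + 2, j) ∈ C)
    (hj : j < n) : (r + 3, j) ∈ C := by
  have hup {j : ℕ} (hjn : j < n) (hj : j ≠ 0 ∧ j ≠ w) : PocketArc r n w (r + 2, j) (r + 3, j) :=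
    .up (by omega) hjn (pocketUp_add_two.2 hj)
  have hleft {j : ℕ} (hjn : j + 1 < n) : PocketArc r n w (r + 3, j + 1) (r + 3, j) :=
    .left (by omega) hjn not_pocketRight_add_three
  induction j with
  | zero => exact (corner_mem_pocket hw hC (hrow hj) (hrow (by omega))).2
  | succ j ih =>
    by_cases hjw : j + 1 = w
    · refine hC.mem_of_manhattan (hrow (show j + 2 < n by omega)) (ih (by omega))
        (.cons (hup (by omega) (by omega)) (.single (hleft (by omega)))) (.single (hleft hj)) ?_
      simp only [manhattan, Nat.dist]
      omega
    · exact hC.mem_of_arcs (hrow hj) (ih (by omega)) (hup hj (by omega)) (hleft hj)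

theorem gridBox_subset_of_entry (hr : 1 ≤ r) (hw : 3 ≤ w) (hwn : w + 1 < n)
    (hC : IsStrongConvex (PocketArc r n w) C) (h₁ : (r + 1, 1) ∈ C) (h₂ : (r + 2, 1) ∈ C) :
    ↑(gridBox (r + 4) n) ⊆ C := by
  have hlower {i j : ℕ} (hi : i ≤ r) (hj : j < n) : (i, j) ∈ C :=
    lower_rows_subset_of_entry hr hC h₁ hi hj
  have hrow₁ {j : ℕ} (hj : j < n) : (r + 1, j) ∈ C :=
    row_add_one_subset_pocket hC (hlower le_rfl) h₁ hj
  have hrow₂ {j : ℕ} (hj : j < n) : (r + 2, j) ∈ C :=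
    row_add_two_subset_pocket hw (by omega) hC hrow₁ h₂ hj
  rintro ⟨i, j⟩ hp
  rw [Finset.mem_coe, mem_gridBox] at hp
  obtain hi | rfl | rfl | rfl : i ≤ r ∨ i = r + 1 ∨ i = r + 2 ∨ i = r + 3 := by omega
  · exact hlower hi hp.2
  · exact hrow₁ hp.2
  · exact hrow₂ hp.2
  · exact row_add_three_subset_pocket hw hwn hC hrow₂ hp.2

theorem exists_walkOfLength_pocket (hw : 3 ≤ w) (hn : 2 ≤ n) (hi : r + 2 ≤ i) (hi' : i < r + 4)
    (hj : j < n) : ∃ k, WalkOfLength (PocketArc r n w) k (i, j) (r + 2, 1) := by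
  have h₀ : WalkOfLength (PocketArc r n w) 1 (r + 2, 0) (r + 2, 1) :=
    .single (.right (by omega) (by omega) (pocketRight_add_two.2 zero_le_one))
  have hrow₃ {j : ℕ} (hj : j < n) :
      WalkOfLength (PocketArc r n w) (j - 0 + (1 + 1)) (r + 3, j) (r + 2, 1) :=
    (walkOfLength_left j.zero_le (by omega) hj fun _ _ _ => not_pocketRight_add_three).trans
      (.cons (.down (by omega) (by omega) fun h => (pocketUp_add_two.1 h).1 rfl) h₀)
  obtain rfl | rfl : i = r + 2 ∨ i = r + 3 := by omega
  · obtain rfl | rfl | hj₂ : j = 0 ∨ j = 1 ∨ 2 ≤ j := by omega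
    · exact ⟨_, h₀⟩
    · exact ⟨_, .nil _⟩
    · exact ⟨_, (walkOfLength_left hj₂ (by omega) hj
        fun l hl _ => pocketRight_add_two.not.2 (by omega)).trans
        (.cons (.up (by omega) (by omega) (pocketUp_add_two.2 (by omega))) (hrow₃ (by omega)))⟩
  · exact ⟨_, hrow₃ hj⟩

theorem mem_of_forall_pocketArc (hr : 1 ≤ r) (hw : 3 ≤ w) (hn : 2 ≤ n)
    (hC : IsStrongConvex (PocketArc r n w) C)
    (hclosed : ∀ p ∈ C, ∀ q, PocketArc r n w p q → q ∈ C) : (r + 2, 1) ∈ C := by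
  have hupper {i j : ℕ} (hi : r + 2 ≤ i) (hij : (i, j) ∈ C) : (r + 2, 1) ∈ C := by
    have hbox := mem_gridBox.1 (hC.mem_gridBox hij)
    obtain ⟨k, hk⟩ := exists_walkOfLength_pocket (r := r) hw hn hi hbox.1 hbox.2
    exact mem_of_walkOfLength_of_forall_arc hclosed hij hk
  have hcol (h : (r + 1, 0) ∈ C) : (r + 2, 1) ∈ C := hupper le_rfl
    (hclosed _ h _ (.up (by omega) (by omega) (pocketUp_add_one.2 (by omega))))
  have hlower {i j : ℕ} (hi : i ≤ r) (hij : (i, j) ∈ C) : (r + 2, 1) ∈ C := by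
    have hbox := mem_gridBox.1 (hC.mem_gridBox hij)
    obtain ⟨⟨x, y⟩, hq, hA⟩ := (isCyclicFace_pocket (r := r) (w := w) (i := min i (r - 1))
      (j := min j (n - 2)) (n := n) (by omega) (by omega)).exists_arc (p := (i, j))
      (mem_faceCorners.2 (by omega))
    rw [mem_faceCorners] at hq
    have hmem : (r, 0) ∈ C := mem_lower_rows_pocket hr hn hC hij (hclosed _ hij _ hA)
      hA.manhattan_eq_one hi (show x ≤ r by omega) le_rfl (by omega)
    exact hcol (hclosed _ hmem _ (.up (by omega) (by omega) (pocketUp_self.2 zero_ne_one)))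
  obtain ⟨⟨i, j⟩, hij⟩ := hC.nontrivial.nonempty
  have hbox := mem_gridBox.1 (hC.mem_gridBox hij)
  obtain hi | rfl | hi : i ≤ r ∨ i = r + 1 ∨ r + 2 ≤ i := by omega
  · exact hlower hi hij
  · rcases Nat.eq_zero_or_pos j with rfl | hj
    · exact hcol hij
    · exact hlower le_rfl (hclosed _ (mem_of_walkOfLength_of_forall_arc hclosed hij
        (walkOfLength_left hj hbox.1 hbox.2 fun l hl _ => pocketRight_add_one.not.2 (by omega)))
        _ (.down (by omega) hn fun h => pocketUp_self.1 h rfl))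
  · exact hupper hi hij

theorem subset_pocket_or_gridBox_subset (hr : 1 ≤ r) (hw : 3 ≤ w) (hwn : w + 1 < n)
    (hC : IsStrongConvex (PocketArc r n w) C) (hp : p ∈ C) (hpocket : p ∈ pocket r w) :
    C ⊆ pocket r w ∨ ↑(gridBox (r + 4) n) ⊆ C := by
  refine or_iff_not_imp_left.2 fun h => ?_
  obtain ⟨q, hq, hqpocket⟩ := Set.not_subset.1 h
  obtain ⟨x, hx, hxpocket, y, hy, hypocket, hA⟩ :=
    hC.exists_arc_leaving hp (X := pocket r w) hpocket hq hqpocket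
  obtain ⟨rfl, rfl⟩ := eq_of_pocketArc_of_mem hw hA hxpocket hypocket
  exact gridBox_subset_of_entry hr hw hwn hC hy hx

theorem mem_strongConvexitySpectrum_of_pocket (hr : 1 ≤ r) (hw : 3 ≤ w) (hwn : w + 1 < n) :
    (r + 4) * n - (w + 3) ∈ strongConvexitySpectrum (gridGraph n (r + 4)) := by
  have hsub : pocket r w ⊆ gridBox (r + 4) n := pocket_subset_gridBox (by omega) (by omega)
  have hcard : (gridBox (r + 4) n \ pocket r w).card = (r + 4) * n - (w + 3) := by
    rw [Finset.card_sdiff_of_subset hsub, card_gridBox, card_pocket]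
  rw [← hcard]
  refine card_mem_strongConvexitySpectrum ?_ (dConvex_compl_pocket hw (by omega))
    (fun p hp => exists_pocketArc hr hw (by omega) hp) (fun C hC hclosed => ?_) fun C hC => ?_
  · exact Finset.sdiff_ssubset hsub ⟨(r + 3, 0), mem_pocket.2 (by omega)⟩
  · have hmem := mem_of_forall_pocketArc hr hw (by omega) hC hclosed
    exact gridBox_subset_of_entry hr hw hwn hC (hclosed _ hmem _
      (.down (by omega) (by omega) fun h => (pocketUp_add_one.1 h).1 rfl)) hmem
  · by_cases hS : C ⊆ ↑(gridBox (r + 4) n \ pocket r w)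
    · exact .inl hS
    right
    obtain ⟨p, hp, hpocket⟩ : ∃ p ∈ C, p ∈ pocket r w := by
      by_contra! hout
      exact hS fun p hp => Finset.mem_sdiff.2 ⟨hC.mem_gridBox hp, hout p hp⟩
    refine (subset_pocket_or_gridBox_subset hr hw hwn hC hp hpocket).symm.imp_right fun h => ?_
    have hle := Set.ncard_le_ncard h
    rw [Set.ncard_coe_finset, card_pocket] at hle
    have := Nat.mul_le_mul_right n (show 4 ≤ r + 4 by omega)
    omega

end PocketComplement

/-! ### All values are attained -/

section Spectrum

variable {n m q s k : ℕ}

theorem mem_strongConvexitySpectrum_of_le_three_mul (hm : 5 ≤ m) (hn : 5 ≤ n) (hk₁ : 1 ≤ k)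
    (hk : k ≤ 3 * (n - 2)) (h₂ : k ≠ 2) (h₃ : k ≠ 3) (h₅ : k ≠ 5) :
    k ∈ strongConvexitySpectrum (gridGraph n m) := by
  obtain rfl | rfl | rfl | hk' : k = 1 ∨ k = 4 ∨ k = 7 ∨ 6 ≤ k ∧ k ≠ 7 := by omega
  · exact one_mem_strongConvexitySpectrum (by omega) (by omega)
  · exact mem_strongConvexitySpectrum_of_staircase (h := 2) (a := 2) le_rfl (by omega) le_rfl
      (by omega) le_rfl le_rfl
  · exact seven_mem_strongConvexitySpectrum hm hn
  · exact mem_strongConvexitySpectrum_of_staircase (h := 3) (a := (k + 2) / 3) (by omega) hm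
      (by omega) (by omega) (by omega) (by omega)

theorem mem_strongConvexitySpectrum_of_le_mul (hs : 4 ≤ s) (hk : 3 * s < k) (hk' : k ≤ q * s) :
    k ∈ strongConvexitySpectrum (gridGraph (s + 2) (q + 2)) := by
  obtain ⟨h, hkh, hhk⟩ : ∃ h, k ≤ s * h ∧ s * h < k + s := by
    have hdiv := Nat.div_add_mod (k + s - 1) s
    have hmod := Nat.mod_lt (k + s - 1) (show 0 < s by omega)
    exact ⟨(k + s - 1) / s, by omega, by omega⟩
  rw [Nat.mul_comm] at hk hk'
  have hh : 4 ≤ h := Nat.lt_of_mul_lt_mul_left (hk.trans_le hkh)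
  have hhq : h < q + 1 := Nat.lt_of_mul_lt_mul_left (a := s) (by rw [Nat.mul_add]; omega)
  have hperimeter : 2 * h + 2 * (s - 2) ≤ k := by
    obtain ⟨b, rfl⟩ := Nat.exists_eq_add_of_le hh
    have := Nat.mul_le_mul_right b hs
    rw [Nat.mul_add] at hhk
    omega
  exact mem_strongConvexitySpectrum_of_staircase (h := h) (by omega) (by omega) (by omega)
    (.inl le_rfl) hperimeter (by rwa [Nat.mul_comm])

theorem mem_strongConvexitySpectrum_of_mul_lt (hm : 5 ≤ m) (hk : n * m < k + n)
    (hk' : k + 6 ≤ n * m) : k ∈ strongConvexitySpectrum (gridGraph n m) := by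
  obtain ⟨r, rfl⟩ := Nat.exists_eq_add_of_le' (show 4 ≤ m by omega)
  obtain ⟨w, hw⟩ := Nat.exists_eq_add_of_le' hk'
  have := mem_strongConvexitySpectrum_of_pocket (r := r) (n := n) (w := w + 3) (by omega)
    (by omega) (by omega)
  rwa [show (r + 4) * n - (w + 3 + 3) = k by rw [Nat.mul_comm]; omega] at this

theorem mem_strongConvexitySpectrum_of_le (hn : 6 ≤ n) (hm : 6 ≤ m) (hk₁ : 1 ≤ k)
    (hk : k + 6 ≤ n * m) (h₂ : k ≠ 2) (h₃ : k ≠ 3) (h₅ : k ≠ 5) :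
    k ∈ strongConvexitySpectrum (gridGraph n m) := by
  by_cases hsmall : k ≤ 3 * (n - 2)
  · exact mem_strongConvexitySpectrum_of_le_three_mul (by omega) (by omega) hk₁ hsmall h₂ h₃ h₅
  obtain ⟨q, rfl⟩ := Nat.exists_eq_add_of_le' (show 2 ≤ m by omega)
  obtain ⟨s, rfl⟩ := Nat.exists_eq_add_of_le' (show 2 ≤ n by omega)
  have hs : 4 * s ≤ q * s := Nat.mul_le_mul_right s (by omega)
  have hq : q * 4 ≤ q * s := Nat.mul_le_mul_left q (by omega)
  by_cases hinterior : k ≤ q * s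
  · exact mem_strongConvexitySpectrum_of_le_mul (by omega) (by omega) hinterior
  by_cases hrows : k ≤ q * (s + 2)
  · exact mem_strongConvexitySpectrum_of_staircase (h := q) (by omega) le_rfl (by omega)
      (.inr ⟨rfl, by rw [Nat.add_sub_cancel_left]; omega⟩) (by omega) hrows
  by_cases hallButOne : k ≤ (q + 1) * (s + 2)
  · refine mem_strongConvexitySpectrum_of_tall_staircase (by omega) (by omega) ?_ hallButOne
    rw [Nat.mul_add] at hrows
    omega
  · refine mem_strongConvexitySpectrum_of_mul_lt (by omega) ?_ hk
    linarith

end Spectrum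

theorem strongConvexitySpectrum_grid_general_general (n m : ℕ) (hn : 6 ≤ n) (hm : 6 ≤ m) :
    strongConvexitySpectrum (gridGraph n m) =
      {k : ℕ | 1 ≤ k ∧ k ≤ n * m - 6} \ {2, 3, 5} := by
  ext k
  constructor
  · intro h
    obtain ⟨h₁, h₂, h₃⟩ := bounds_of_mem_strongConvexitySpectrum hn hm h
    exact ⟨⟨h₁, Nat.le_sub_of_add_le h₂⟩, h₃⟩
  · rintro ⟨⟨h₁, hk⟩, hne⟩
    simp only [Set.mem_insert_iff, Set.mem_singleton_iff, not_or] at hne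
    have : 6 * 6 ≤ n * m := Nat.mul_le_mul hn hm
    exact mem_strongConvexitySpectrum_of_le hn hm h₁ (by omega) hne.1 hne.2.1 hne.2.2

/-- The strong convexity spectrum of the grid `P_n □ P_m` for `6 ≤ m ≤ n`. -/
theorem strongConvexitySpectrum_grid_general (n m : ℕ) (hm : 6 ≤ m) (hmn : m ≤ n) :
    strongConvexitySpectrum (gridGraph n m) =
      {k : ℕ | 1 ≤ k ∧ k ≤ n * m - 6} \ {2, 3, 5} :=
  strongConvexitySpectrum_grid_general_general n m (hm.trans hmn) hm
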